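/- arXiv:2103.05415 — 4 statements merged into one kernel-verified Lean document; each statement's English description precedes it below -/
import Mathlib

section
/- Let L be a Noetherian integral domain, c ∈ ℕ, and J an ideal of the polynomial ring L[y_1,…,y_c] such that the quotient Q := L[y_1,…,y_c]/J is free as an L-module. For n ∈ ℕ let I_n be the ideal of R_n := L[x_{i,j} : i ∈ [c], j ∈ [n]] generated by the images of J under the L-algebra homomorphisms L[y_1,…,y_c] → R_n, y_i ↦ x_{i,j}, for all j ∈ [n] (so that R_n/I_n is the n-fold tensor power of Q over L, with Sym([n]) permuting the tensor factors). Then the number of Sym([n])-orbits on the set of minimal prime ideals of R_n over I_n is a quasipolynomial in n for all n ≫ 0. -/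
/-!
Let `k` be an algebraic closure of the fraction field of `L`, let `G` be the group of
`L`-automorphisms of `k`, and let `X` be the finite set of minimal primes over the extension of `J`
to `k`. A product of irreducible varieties over `k` is irreducible, so the minimal primes over the
extension of `I_n` are in bijection with `Fin n → X`. As `k` is flat over `L`, they contract to
minimal primes over `I_n`, and all of these arise since none of them contains a nonzero constant,
the quotient by `I_n` being flat over `L`. Two minimal primes over the extension have the same
contraction exactly when they are conjugate under `G`. The orbits to be counted are thus those of
the finite image `H` of `G` in the permutations of `X` on multisets of size `n` in `X`. By
Burnside's lemma their number is the average over `h ∈ H` of the number of multisets fixed by `h`,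
whose generating function is a product of factors `1 / (1 - t ^ ℓ)`, one for each cycle of length
`ℓ` of `h`.
-/

/-- A function `f : ℤ → ℚ` is a quasipolynomial if there are an integer `N ≥ 1` and
polynomials `p i ∈ ℚ[t]` such that `f n = p (n mod N) (n)` for all `n`. -/
def IsQuasiPolynomial (f : ℤ → ℚ) : Prop :=
  ∃ N : ℕ, 0 < N ∧ ∃ p : ZMod N → Polynomial ℚ,
    ∀ n : ℤ, f n = (p (n : ZMod N)).eval (n : ℚ)

/-- A quantity `a : ℕ → ℕ` is a quasipolynomial in `n` for all `n ≫ 0`. -/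
def QuasiPolynomialCount (a : ℕ → ℕ) : Prop :=
  ∃ f : ℤ → ℚ, IsQuasiPolynomial f ∧ ∃ n₀ : ℕ, ∀ n : ℕ, n₀ ≤ n → (a n : ℚ) = f n

open MvPolynomial

section Quasipolynomial

theorem fwdDiff_iter_eq_zero_of_le {M G : Type*} [AddCommMonoid M] [Preorder M]
    [CanonicallyOrderedAdd M] [AddCommGroup G] {f : M → G} {h m : M} {d : ℕ}
    (hd : ∀ n, m ≤ n → (fwdDiff h)^[d] f n = 0) {i : ℕ} (hi : d ≤ i) {n : M} (hn : m ≤ n) :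
    (fwdDiff h)^[i] f n = 0 := by
  induction i, hi using Nat.le_induction generalizing n with
  | base => exact hd n hn
  | succ i _ ih =>
    rw [Function.iterate_succ_apply', fwdDiff, ih hn, ih (hn.trans le_self_add), sub_zero]

theorem exists_polynomial_eval_eq_choose (i : ℕ) :
    ∃ p : Polynomial ℚ, ∀ k : ℕ, p.eval (k : ℚ) = k.choose i :=
  ⟨Polynomial.C (i.factorial : ℚ)⁻¹ * descPochhammer ℚ i, fun k => by
    rw [Polynomial.eval_C_mul, descPochhammer_eval_eq_descFactorial,
      Nat.descFactorial_eq_factorial_mul_choose, Nat.cast_mul, inv_mul_cancel_left₀]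
    exact_mod_cast i.factorial_ne_zero⟩

theorem exists_polynomial_of_fwdDiff_iter_eq_zero {f : ℕ → ℚ} {N d b : ℕ} (hN : 0 < N)
    (hf : ∀ n, b ≤ n → (fwdDiff N)^[d] f n = 0) :
    ∃ p : Polynomial ℚ, ∀ k : ℕ, f (b + k * N) = p.eval ((b + k * N : ℕ) : ℚ) := by
  choose c hc using exists_polynomial_eval_eq_choose
  have newton (k : ℕ) : f (b + k * N) = ∑ i ∈ Finset.range d, k.choose i • (fwdDiff N)^[i] f b := by
    rw [← smul_eq_mul k N, shift_eq_sum_fwdDiff_iter N f k b]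
    refine Finset.sum_congr_of_eq_on_inter (fun i _ hi => ?_) (fun i _ hi => ?_) fun _ _ _ => rfl
    · rw [fwdDiff_iter_eq_zero_of_le hf (by simpa using hi) le_rfl, smul_zero]
    · rw [Nat.choose_eq_zero_of_lt (by simpa using hi), zero_smul]
  refine ⟨∑ i ∈ Finset.range d, (c i).comp
    (Polynomial.C (N : ℚ)⁻¹ * (Polynomial.X - Polynomial.C (b : ℚ))) *
      Polynomial.C ((fwdDiff N)^[i] f b), fun k => ?_⟩
  have hk : (N : ℚ)⁻¹ * (((b + k * N : ℕ) : ℚ) - b) = k := by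
    push_cast
    field_simp
    ring
  simp only [newton, Polynomial.eval_finsetSum, Polynomial.eval_mul, Polynomial.eval_comp,
    Polynomial.eval_C, Polynomial.eval_sub, Polynomial.eval_X, hk, hc, nsmul_eq_mul]

theorem QuasiPolynomialCount.of_fwdDiff_iter_eq_zero {a : ℕ → ℕ} {N d m : ℕ} (hN : 0 < N)
    (ha : ∀ n, m ≤ n → (fwdDiff N)^[d] (fun n => (a n : ℚ)) n = 0) : QuasiPolynomialCount a := by
  have : NeZero N := ⟨hN.ne'⟩
  have residue (r : ZMod N) : ∃ p : Polynomial ℚ, ∀ k : ℕ,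
      (a (m * N + r.val + k * N) : ℚ) = p.eval ((m * N + r.val + k * N : ℕ) : ℚ) :=
    exists_polynomial_of_fwdDiff_iter_eq_zero hN fun n hn =>
      ha n ((Nat.le_mul_of_pos_right m hN).trans (le_self_add.trans hn))
  choose p hp using residue
  refine ⟨fun n => (p n).eval (n : ℚ), ⟨N, hN, p, fun _ => rfl⟩, m * N, fun n hn => ?_⟩
  have hn' : m * N + (n : ZMod N).val + (n / N - m) * N = n := by
    rw [ZMod.val_natCast, add_right_comm, ← add_mul,
      Nat.add_sub_cancel' ((Nat.le_div_iff_mul_le hN).2 hn), Nat.div_add_mod']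
  simpa only [hn', Int.cast_natCast] using hp n (n / N - m)

end Quasipolynomial

section RationalGeneratingFunction

open scoped PowerSeries

theorem coeff_one_sub_X_pow_pow_mul {R : Type*} [CommRing R] (N d n : ℕ) (φ : R⟦X⟧) :
    PowerSeries.coeff (n + d * N) ((1 - PowerSeries.X ^ N) ^ d * φ) =
      (fwdDiff N)^[d] (fun n => PowerSeries.coeff n φ) n := by
  induction d generalizing n with
  | zero => simp
  | succ d ih =>
    rw [Function.iterate_succ_apply', fwdDiff, ← ih, ← ih, pow_succ', mul_assoc, sub_mul, one_mul,
      map_sub, add_one_mul, ← add_assoc, PowerSeries.coeff_X_pow_mul, add_right_comm]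

theorem exists_one_sub_X_pow_pow_mul_eq_coe_of_dvd {R : Type*} [CommRing R] {N M d e : ℕ}
    (hN : N ∣ M) (hd : d ≤ e) {φ : R⟦X⟧}
    (hφ : ∃ q : Polynomial R, (1 - PowerSeries.X ^ N) ^ d * φ = (q : R⟦X⟧)) :
    ∃ q : Polynomial R, (1 - PowerSeries.X ^ M) ^ e * φ = (q : R⟦X⟧) := by
  obtain ⟨q, hq⟩ := hφ
  have hdvd : (1 - Polynomial.X ^ N : Polynomial R) ^ d ∣ (1 - Polynomial.X ^ M) ^ e := by
    obtain ⟨k, rfl⟩ := hN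
    rw [pow_mul]
    exact (pow_dvd_pow_of_dvd (one_sub_dvd_one_sub_pow _ k) d).trans (pow_dvd_pow _ hd)
  obtain ⟨r, hr⟩ := hdvd
  refine ⟨r * q, ?_⟩
  have := congrArg (fun p : Polynomial R => (p : R⟦X⟧)) hr
  push_cast at this ⊢
  rw [this, ← hq]
  ring

/-- The power series of the form `q / (1 - X ^ N) ^ d` with `q` a polynomial and `0 < N`: over `ℚ`
these are the generating functions of the eventually quasipolynomial sequences. -/
def quasipolynomialSeries (R : Type*) [CommRing R] : Subalgebra R R⟦X⟧ where
  carrier := {φ | ∃ N > 0, ∃ d, ∃ q : Polynomial R, (1 - PowerSeries.X ^ N) ^ d * φ = (q : R⟦X⟧)}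
  mul_mem' := by
    rintro φ ψ ⟨N, hN, d, hφ⟩ ⟨N', hN', d', hψ⟩
    obtain ⟨p, hp⟩ := exists_one_sub_X_pow_pow_mul_eq_coe_of_dvd (dvd_mul_right N N') le_rfl hφ
    obtain ⟨q, hq⟩ := exists_one_sub_X_pow_pow_mul_eq_coe_of_dvd (dvd_mul_left N' N) le_rfl hψ
    exact ⟨N * N', by positivity, d + d', p * q, by rw [Polynomial.coe_mul, ← hp, ← hq]; ring⟩
  add_mem' := by
    rintro φ ψ ⟨N, hN, d, hφ⟩ ⟨N', hN', d', hψ⟩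
    obtain ⟨p, hp⟩ := exists_one_sub_X_pow_pow_mul_eq_coe_of_dvd (dvd_mul_right N N')
      (Nat.le_add_right d d') hφ
    obtain ⟨q, hq⟩ := exists_one_sub_X_pow_pow_mul_eq_coe_of_dvd (dvd_mul_left N' N)
      (Nat.le_add_left d' d) hψ
    exact ⟨N * N', by positivity, d + d', p + q, by rw [Polynomial.coe_add, ← hp, ← hq, mul_add]⟩
  algebraMap_mem' r := ⟨1, one_pos, 0, Polynomial.C r, by simp⟩

theorem QuasiPolynomialCount.of_mem_quasipolynomialSeries {a : ℕ → ℕ}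
    (ha : PowerSeries.mk (fun n => (a n : ℚ)) ∈ quasipolynomialSeries ℚ) :
    QuasiPolynomialCount a := by
  obtain ⟨N, hN, d, q, hq⟩ := ha
  refine .of_fwdDiff_iter_eq_zero (d := d) (m := q.natDegree + 1) hN fun n hn => ?_
  have := coeff_one_sub_X_pow_pow_mul N d n (PowerSeries.mk fun n => (a n : ℚ))
  simp only [PowerSeries.coeff_mk] at this
  rw [← this, hq, Polynomial.coeff_coe,
    Polynomial.coeff_eq_zero_of_natDegree_lt (by lia)]

theorem mk_ite_dvd_mem_quasipolynomialSeries (R : Type*) [CommRing R] {a : ℕ} (ha : 0 < a) :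
    PowerSeries.mk (fun n => if a ∣ n then (1 : R) else 0) ∈ quasipolynomialSeries R := by
  refine ⟨a, ha, 1, 1, ?_⟩
  ext n
  rw [pow_one, sub_mul, one_mul, map_sub, PowerSeries.coeff_X_pow_mul', Polynomial.coe_one,
    PowerSeries.coeff_one, PowerSeries.coeff_mk, PowerSeries.coeff_mk]
  rcases n.eq_zero_or_pos with rfl | hn
  · simp [ha.ne']
  · by_cases han : a ≤ n
    · simp [-Nat.dvd_sub_self_right, Nat.dvd_sub_iff_left han dvd_rfl, han, hn.ne']
    · simp [han, hn.ne', Nat.not_dvd_of_pos_of_lt hn (not_le.1 han)]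

theorem card_sum_mul_eq_card_finsuppAntidiag {ι : Type*} [Fintype ι] [DecidableEq ι] {a : ι → ℕ}
    (ha : ∀ i, 0 < a i) (n : ℕ) :
    Nat.card {l : ι → ℕ // ∑ i, a i * l i = n} =
      ((Finset.univ.finsuppAntidiag n).filter fun m => ∀ i, a i ∣ m i).card := by
  rw [← Nat.card_eq_finsetCard]
  refine Nat.card_congr
    { toFun l := ⟨Finsupp.equivFunOnFinite.symm (a * l.1), ?_⟩
      invFun m := ⟨fun i => m.1 i / a i, ?_⟩
      left_inv l := ?_
      right_inv m := ?_ }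
  · simpa using l.2
  · obtain ⟨hm, hdvd⟩ := Finset.mem_filter.1 m.2
    simpa [Nat.mul_div_cancel' (hdvd _)] using hm
  · ext i
    simp [Nat.mul_div_cancel_left _ (ha i)]
  · ext i
    simp [Nat.mul_div_cancel' ((Finset.mem_filter.1 m.2).2 i)]

theorem mk_card_sum_mul_mem_quasipolynomialSeries {ι : Type*} [Fintype ι] {a : ι → ℕ}
    (ha : ∀ i, 0 < a i) :
    PowerSeries.mk (fun n => (Nat.card {l : ι → ℕ // ∑ i, a i * l i = n} : ℚ)) ∈
      quasipolynomialSeries ℚ := by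
  classical
  convert prod_mem fun i (_ : i ∈ Finset.univ) => mk_ite_dvd_mem_quasipolynomialSeries ℚ (ha i)
  ext n
  simp [PowerSeries.coeff_prod, Finset.prod_ite_zero, card_sum_mul_eq_card_finsuppAntidiag ha]

end RationalGeneratingFunction

section OrbitsOnTuples

open MulAction

theorem card_quot_eq_of_surjective {α β : Type*} {f : α → β} (hf : f.Surjective)
    {r : α → α → Prop} {s : β → β → Prop} [Std.Refl r] (h : ∀ a b, r a b ↔ s (f a) (f b)) :
    Nat.card (Quot r) = Nat.card (Quot s) :=
  Nat.card_congr
    { toFun := Quot.map f fun a b => (h a b).1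
      invFun := Quot.map (Function.surjInv hf) fun p q hpq => by
        simpa only [h, Function.surjInv_eq hf] using hpq
      left_inv := by
        rintro ⟨a⟩
        refine Quot.sound ((h _ a).2 ?_)
        rw [Function.surjInv_eq hf]
        exact (h a a).1 (Std.Refl.refl a)
      right_inv := by
        rintro ⟨p⟩
        exact congrArg (Quot.mk s) (Function.surjInv_eq hf p) }

/-- The multisets of size `n` on `X`, encoded by their multiplicities, with `G` permuting `X`. The
action of `G` on functions by precomposition is a right action, hence the domain action `Gᵈᵐᵃ`. -/
def multiplicityFunctions (G X : Type*) [Group G] [MulAction G X] [Fintype X] (n : ℕ) :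
    SubMulAction Gᵈᵐᵃ (X → ℕ) where
  carrier := {P | ∑ x, P x = n}
  smul_mem' g P hP := (Equiv.sum_comp (MulAction.toPerm (DomMulAct.mk.symm g)) P).trans hP

variable {G X : Type*} [Group G] [MulAction G X]

theorem mem_multiplicityFunctions [Fintype X] {n : ℕ} {P : X → ℕ} :
    P ∈ multiplicityFunctions G X n ↔ ∑ x, P x = n :=
  Iff.rfl

instance [Fintype X] (n : ℕ) : Finite (multiplicityFunctions G X n) := by
  classical
  exact (Finset.univ.piAntidiag n).finite_toSet.subset fun P hP => by
    simpa using mem_multiplicityFunctions.1 hP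

theorem eq_of_orbitRel_zpowers {β : Type*} {g : G} {P : X → β} (hP : ∀ x, P (g • x) = P x) {x y : X}
    (hxy : orbitRel (Subgroup.zpowers g) X x y) : P x = P y := by
  obtain ⟨⟨_, k, rfl⟩, rfl⟩ := hxy
  have : DomMulAct.mk g • P = P := funext hP
  exact congrFun (mem_fixedBy_zpow (g := DomMulAct.mk g) this k) y

theorem sum_comp_orbit_mk [Fintype X] [Fintype (orbitRel.Quotient G X)]
    (l : orbitRel.Quotient G X → ℕ) :
    ∑ x : X, l (Quotient.mk'' x) = ∑ o, Nat.card o.orbit * l o := by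
  classical
  rw [← Finset.sum_fiberwise Finset.univ (Quotient.mk'' : X → orbitRel.Quotient G X)]
  refine Finset.sum_congr rfl fun o _ => ?_
  rw [Finset.sum_congr rfl fun x hx => congrArg l (Finset.mem_filter.1 hx).2, Finset.sum_const,
    smul_eq_mul, Nat.card_eq_card_toFinset]
  congr 2
  ext x
  simp [orbitRel.Quotient.mem_orbit]

theorem card_fixedBy_multiplicityFunctions [Fintype X] (g : G)
    [Fintype (orbitRel.Quotient (Subgroup.zpowers g) X)] (n : ℕ) :
    Nat.card (fixedBy (multiplicityFunctions G X n) (DomMulAct.mk g)) =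
      Nat.card {l : orbitRel.Quotient (Subgroup.zpowers g) X → ℕ //
        ∑ o, Nat.card o.orbit * l o = n} := by
  have invariant (P : fixedBy (multiplicityFunctions G X n) (DomMulAct.mk g)) (x : X) :
      P.1.1 (g • x) = P.1.1 x :=
    congrFun (congrArg Subtype.val P.2) x
  refine Nat.card_congr
    { toFun P := ⟨Quotient.lift P.1.1 fun _ _ => eq_of_orbitRel_zpowers (invariant P), ?_⟩
      invFun l := ⟨⟨fun x => l.1 (Quotient.mk'' x), ?_⟩, ?_⟩
      left_inv P := rfl
      right_inv l := Subtype.ext (funext ?_) }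
  · rw [← sum_comp_orbit_mk]
    exact P.1.2
  · rw [mem_multiplicityFunctions, sum_comp_orbit_mk, l.2]
  · refine Subtype.ext (funext fun x => congrArg l.1 (Quotient.sound ?_))
    exact ⟨⟨g, Subgroup.mem_zpowers g⟩, rfl⟩
  · rintro ⟨x⟩
    rfl

theorem mk_card_orbits_multiplicityFunctions_mem_quasipolynomialSeries [Finite G] [Fintype X] :
    PowerSeries.mk (fun n => (Nat.card (orbitRel.Quotient Gᵈᵐᵃ (multiplicityFunctions G X n)) : ℚ))
      ∈ quasipolynomialSeries ℚ := by
  classical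
  have := Fintype.ofFinite G
  have : Fintype Gᵈᵐᵃ := .ofEquiv G DomMulAct.mk
  have burnside (n : ℕ) :
      (Nat.card (orbitRel.Quotient Gᵈᵐᵃ (multiplicityFunctions G X n)) : ℚ) =
        (Nat.card G : ℚ)⁻¹ * ∑ g : G,
          (Nat.card {l : orbitRel.Quotient (Subgroup.zpowers g) X → ℕ //
            ∑ o, Nat.card o.orbit * l o = n} : ℚ) := by
    have := Fintype.ofFinite (multiplicityFunctions G X n)
    have h := sum_card_fixedBy_eq_card_orbits_mul_card_group Gᵈᵐᵃ (multiplicityFunctions G X n)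
    rw [← DomMulAct.mk.sum_comp, Fintype.card_congr DomMulAct.mk.symm] at h
    simp only [← Nat.card_eq_fintype_card, card_fixedBy_multiplicityFunctions] at h
    rw [eq_inv_mul_iff_mul_eq₀ (by simp), mul_comm]
    exact_mod_cast h.symm
  have : PowerSeries.mk (fun n =>
      (Nat.card (orbitRel.Quotient Gᵈᵐᵃ (multiplicityFunctions G X n)) : ℚ)) =
        (Nat.card G : ℚ)⁻¹ • ∑ g : G, PowerSeries.mk fun n =>
          (Nat.card {l : orbitRel.Quotient (Subgroup.zpowers g) X → ℕ //
            ∑ o, Nat.card o.orbit * l o = n} : ℚ) := by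
    ext n
    simp [burnside]
  rw [this]
  exact Subalgebra.smul_mem _ (sum_mem fun g _ => mk_card_sum_mul_mem_quasipolynomialSeries
    fun o => Nat.card_pos_iff.2 ⟨(orbitRel.Quotient.nonempty_orbit o).to_subtype, inferInstance⟩) _

/-- The multiplicity function of the multiset underlying a tuple. -/
noncomputable def tupleMultiplicity (G : Type*) {X : Type*} [Group G] [MulAction G X] [Fintype X]
    {n : ℕ} (x : Fin n → X) : multiplicityFunctions G X n :=
  ⟨fun a => Nat.card {j // x j = a}, by
    rw [mem_multiplicityFunctions, ← Nat.card_sigma, Nat.card_congr (Equiv.sigmaFiberEquiv x),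
      Nat.card_fin]⟩

theorem tupleMultiplicity_surjective [Fintype X] (n : ℕ) :
    Function.Surjective (tupleMultiplicity G : (Fin n → X) → multiplicityFunctions G X n) := by
  intro P
  obtain ⟨e⟩ : Nonempty (Fin n ≃ Σ a, Fin (P.1 a)) := by
    rw [← Fintype.card_eq, Fintype.card_sigma]
    simpa using P.2.symm
  refine ⟨fun j => (e j).1, Subtype.ext (funext fun a => ?_)⟩
  have : {j // (e j).1 = a} ≃ Fin (P.1 a) :=
    (e.subtypeEquiv fun _ => Iff.rfl).trans (Equiv.sigmaSubtype a)
  exact (Nat.card_congr this).trans (Nat.card_fin _)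

theorem card_fiber_eq_iff_exists_perm {ι X : Type*} [Finite ι] {x y : ι → X} :
    (∀ a, Nat.card {j // x j = a} = Nat.card {j // y j = a}) ↔
      ∃ π : Equiv.Perm ι, ∀ j, y (π j) = x j := by
  refine ⟨fun h => ?_, fun ⟨π, hπ⟩ a => Nat.card_congr (π.subtypeEquiv fun j => by rw [hπ])⟩
  have e (a : X) : {j // x j = a} ≃ {j // y j = a} := (Finite.card_eq.1 (h a)).some
  exact ⟨Equiv.ofFiberEquiv e, Equiv.ofFiberEquiv_map e⟩

theorem orbitRel_tupleMultiplicity [Fintype X] {n : ℕ} {x y : Fin n → X} :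
    orbitRel Gᵈᵐᵃ (multiplicityFunctions G X n) (tupleMultiplicity G x) (tupleMultiplicity G y) ↔
      ∃ (π : Equiv.Perm (Fin n)) (g : G), ∀ j, y (π j) = g • x j := by
  rw [exists_comm, orbitRel_apply, mem_orbit_iff, DomMulAct.mk.surjective.exists]
  refine exists_congr fun g => ?_
  rw [← card_fiber_eq_iff_exists_perm, (MulAction.surjective g).forall,
    Subtype.ext_iff, funext_iff]
  simp [tupleMultiplicity, DomMulAct.smul_apply, eq_comm (a := Nat.card {j // y j = _})]

theorem quasiPolynomialCount_card_quot_perm_smul (G X : Type*) [Group G] [MulAction G X]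
    [Finite X] :
    QuasiPolynomialCount fun n => Nat.card (Quot fun x y : Fin n → X =>
      ∃ (π : Equiv.Perm (Fin n)) (g : G), ∀ j, y (π j) = g • x j) := by
  have := Fintype.ofFinite X
  let H := (toPermHom G X).range
  have hH := mk_card_orbits_multiplicityFunctions_mem_quasipolynomialSeries (G := H) (X := X)
  convert QuasiPolynomialCount.of_mem_quasipolynomialSeries hH using 2 with n
  have : Std.Refl fun x y : Fin n → X =>
      ∃ (π : Equiv.Perm (Fin n)) (g : G), ∀ j, y (π j) = g • x j := ⟨fun x => ⟨1, 1, by simp⟩⟩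
  refine card_quot_eq_of_surjective (tupleMultiplicity_surjective (G := H) n) fun x y => ?_
  refine Iff.trans (exists_congr fun π => ?_) orbitRel_tupleMultiplicity.symm
  simp [H, Subgroup.smul_def]

end OrbitsOnTuples

section ColumnIdeal

section General

variable {R S σ τ : Type*} [CommRing R] [CommRing S]

/-- The ideal of `R[x_{i,j} : i ∈ σ, j ∈ τ]` generated by a copy of `J j` in the variables of the
`j`-th column, for every `j`; its quotient is the tensor product of the quotients by the `J j`. -/
noncomputable def columnIdeal (J : τ → Ideal (MvPolynomial σ R)) : Ideal (MvPolynomial (σ × τ) R) :=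
  ⨆ j, (J j).map (rename fun i => (i, j))

theorem columnIdeal_le_iff {J : τ → Ideal (MvPolynomial σ R)} {I : Ideal (MvPolynomial (σ × τ) R)} :
    columnIdeal J ≤ I ↔ ∀ j, J j ≤ I.comap (rename fun i => (i, j)) := by
  simp only [columnIdeal, iSup_le_iff, Ideal.map_le_iff_le_comap]

theorem le_comap_columnIdeal (J : τ → Ideal (MvPolynomial σ R)) (j : τ) :
    J j ≤ (columnIdeal J).comap (rename fun i => (i, j)) :=
  columnIdeal_le_iff.1 le_rfl j

theorem columnIdeal_mono {J J' : τ → Ideal (MvPolynomial σ R)} (h : J ≤ J') :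
    columnIdeal J ≤ columnIdeal J' :=
  iSup_mono fun j => Ideal.map_mono (h j)

theorem map_map_columnIdeal (φ : R →+* S) (J : τ → Ideal (MvPolynomial σ R)) :
    (columnIdeal J).map (map φ) = columnIdeal fun j => (J j).map (map φ) := by
  simp only [columnIdeal, Ideal.map_iSup, ← Ideal.map_coe (rename _), Ideal.map_map]
  congr! 3
  ext <;> simp

theorem map_rename_columnIdeal {τ' : Type*} (e : τ ≃ τ') (J : τ → Ideal (MvPolynomial σ R)) :
    (columnIdeal J).map (rename (Prod.map id e)) = columnIdeal (J ∘ e.symm) := by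
  rw [columnIdeal, columnIdeal, ← e.iSup_comp, Ideal.map_iSup]
  congr! 2 with j
  simp only [← Ideal.map_coe (rename _), Ideal.map_map, Function.comp_apply, e.symm_apply_apply]
  congr 1
  ext <;> simp

end General

section AlgebraicallyClosed

variable {K σ τ : Type*} [Field K]

theorem mem_zeroLocus_columnIdeal_iff {x : τ → Ideal (MvPolynomial σ K)} {p : τ → σ → K} :
    (fun z => p z.2 z.1) ∈ zeroLocus K (columnIdeal x) ↔ ∀ j, p j ∈ zeroLocus K (x j) := by
  rw [← Set.singleton_subset_iff, le_zeroLocus_iff_le_vanishingIdeal,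
    columnIdeal_le_iff]
  refine forall_congr' fun j => ?_
  simp [SetLike.le_def, aeval_rename, Function.comp_def]

/-- The restriction of a polynomial to the points whose columns, except for the `a`-th one, are
those of `p`. -/
noncomputable def specializeColumnsExcept [DecidableEq τ] (p : τ → σ → K) (a : τ) :
    MvPolynomial (σ × τ) K →ₐ[K] MvPolynomial σ K :=
  aeval fun z => Function.update (fun j i => C (p j i)) a X z.2 z.1

theorem aeval_specializeColumnsExcept [DecidableEq τ] (p : τ → σ → K) (a : τ) (r : σ → K)
    (f : MvPolynomial (σ × τ) K) :
    aeval r (specializeColumnsExcept p a f) = aeval (fun z => Function.update p a r z.2 z.1) f := by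
  rw [← AlgHom.comp_apply]
  congr 1
  ext ⟨i, j⟩
  obtain rfl | hj := eq_or_ne j a <;> simp [specializeColumnsExcept, *]

theorem specializeColumnsExcept_notMem [DecidableEq τ] {P : Ideal (MvPolynomial σ K)}
    {p : τ → σ → K} {a : τ} (hp : p a ∈ zeroLocus K P) {f : MvPolynomial (σ × τ) K}
    (hf : aeval (fun z => p z.2 z.1) f ≠ 0) : specializeColumnsExcept p a f ∉ P := fun h =>
  hf (by simpa [aeval_specializeColumnsExcept] using hp _ h)

variable [IsAlgClosed K] [Finite σ]

theorem exists_mem_zeroLocus_aeval_ne_zero {P : Ideal (MvPolynomial σ K)} [P.IsPrime]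
    {f : MvPolynomial σ K} (hf : f ∉ P) : ∃ p ∈ zeroLocus K P, aeval p f ≠ 0 := by
  rw [← IsPrime.vanishingIdeal_zeroLocus (K := K) P, mem_vanishingIdeal_iff] at hf
  push Not at hf
  exact hf

theorem zeroLocus_nonempty (P : Ideal (MvPolynomial σ K)) [hP : P.IsPrime] :
    (zeroLocus K P).Nonempty := by
  obtain ⟨p, hp, -⟩ := exists_mem_zeroLocus_aeval_ne_zero hP.one_notMem
  exact ⟨p, hp⟩

theorem exists_columns_aeval_ne_zero [Finite τ] (x : τ → Ideal (MvPolynomial σ K))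
    [∀ j, (x j).IsPrime] {f g : MvPolynomial (σ × τ) K}
    (hf : ∃ p : τ → σ → K, (∀ j, p j ∈ zeroLocus K (x j)) ∧ aeval (fun z => p z.2 z.1) f ≠ 0)
    (hg : ∃ p : τ → σ → K, (∀ j, p j ∈ zeroLocus K (x j)) ∧ aeval (fun z => p z.2 z.1) g ≠ 0) :
    ∃ p : τ → σ → K, (∀ j, p j ∈ zeroLocus K (x j)) ∧ aeval (fun z => p z.2 z.1) f ≠ 0 ∧
      aeval (fun z => p z.2 z.1) g ≠ 0 := by
  classical
  have := Fintype.ofFinite τ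
  -- Make the two points agree on more and more columns.
  suffices ∀ s : Finset τ, ∃ p p' : τ → σ → K, (∀ j ∈ s, p j = p' j) ∧
      ((∀ j, p j ∈ zeroLocus K (x j)) ∧ aeval (fun z => p z.2 z.1) f ≠ 0) ∧
      (∀ j, p' j ∈ zeroLocus K (x j)) ∧ aeval (fun z => p' z.2 z.1) g ≠ 0 by
    obtain ⟨p, p', heq, ⟨hp, hpf⟩, -, hpg⟩ := this Finset.univ
    obtain rfl : p = p' := funext fun j => heq j (Finset.mem_univ j)
    exact ⟨p, hp, hpf, hpg⟩
  intro s
  induction s using Finset.induction_on with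
  | empty =>
    obtain ⟨p, hp⟩ := hf
    obtain ⟨p', hp'⟩ := hg
    exact ⟨p, p', by simp, hp, hp'⟩
  | insert a s _ ih =>
    obtain ⟨p, p', heq, ⟨hp, hpf⟩, hp', hpg⟩ := ih
    have notMem : specializeColumnsExcept p a f * specializeColumnsExcept p' a g ∉ x a :=
      Ideal.IsPrime.mul_notMem inferInstance (specializeColumnsExcept_notMem (hp a) hpf)
        (specializeColumnsExcept_notMem (hp' a) hpg)
    obtain ⟨r, hr, hne⟩ := exists_mem_zeroLocus_aeval_ne_zero notMem
    rw [map_mul, aeval_specializeColumnsExcept, aeval_specializeColumnsExcept] at hne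
    have mem {q : τ → σ → K} (hq : ∀ j, q j ∈ zeroLocus K (x j)) (j : τ) :
        Function.update q a r j ∈ zeroLocus K (x j) := by
      obtain rfl | hj := eq_or_ne j a <;> simp [*]
    refine ⟨_, _, fun j hj => ?_, ⟨mem hp, left_ne_zero_of_mul hne⟩, mem hp',
      right_ne_zero_of_mul hne⟩
    obtain rfl | hja := eq_or_ne j a
    · simp
    · simpa [hja] using heq j (Finset.mem_of_mem_insert_of_ne hj hja)

variable [Finite τ]

theorem notMem_radical_columnIdeal_iff {x : τ → Ideal (MvPolynomial σ K)}
    {f : MvPolynomial (σ × τ) K} :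
    f ∉ (columnIdeal x).radical ↔
      ∃ p : τ → σ → K, (∀ j, p j ∈ zeroLocus K (x j)) ∧ aeval (fun z => p z.2 z.1) f ≠ 0 := by
  rw [← vanishingIdeal_zeroLocus_eq_radical (K := K), mem_vanishingIdeal_iff]
  push Not
  simp only [← mem_zeroLocus_columnIdeal_iff]
  exact ⟨fun ⟨q, hq⟩ => ⟨fun j i => q (i, j), hq⟩, fun ⟨p, hp⟩ => ⟨_, hp⟩⟩

theorem comap_rename_radical_columnIdeal (x : τ → Ideal (MvPolynomial σ K))
    [∀ j, (x j).IsPrime] (j : τ) :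
    (columnIdeal x).radical.comap (rename fun i => (i, j)) = x j := by
  classical
  refine le_antisymm (fun f hf => ?_)
    ((le_comap_columnIdeal x j).trans (Ideal.comap_mono Ideal.le_radical))
  contrapose! hf
  choose q hq using fun j => zeroLocus_nonempty (x j)
  obtain ⟨p, hp, hpf⟩ := exists_mem_zeroLocus_aeval_ne_zero hf
  rw [Ideal.mem_comap, notMem_radical_columnIdeal_iff]
  refine ⟨Function.update q j p, fun j' => ?_, ?_⟩
  · obtain rfl | hj' := eq_or_ne j' j <;> simp [*]
  · simpa [aeval_rename, Function.comp_def] using hpf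

instance isPrime_radical_columnIdeal (x : τ → Ideal (MvPolynomial σ K)) [∀ j, (x j).IsPrime] :
    (columnIdeal x).radical.IsPrime := by
  refine ⟨?_, fun {f g} => ?_⟩
  · rw [Ideal.ne_top_iff_one, notMem_radical_columnIdeal_iff]
    choose q hq using fun j => zeroLocus_nonempty (x j)
    exact ⟨q, hq, by simp⟩
  · contrapose!
    simp only [notMem_radical_columnIdeal_iff, map_mul, mul_ne_zero_iff]
    exact fun h => exists_columns_aeval_ne_zero x h.1 h.2

theorem mem_minimalPrimes_columnIdeal_iff {J : τ → Ideal (MvPolynomial σ K)}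
    {P : Ideal (MvPolynomial (σ × τ) K)} :
    P ∈ (columnIdeal J).minimalPrimes ↔
      ∃ x : τ → Ideal (MvPolynomial σ K), (∀ j, x j ∈ (J j).minimalPrimes) ∧
        (columnIdeal x).radical = P := by
  constructor
  · intro hP
    have := hP.1.1
    choose x hx hxP using fun j =>
      Ideal.exists_minimalPrimes_le (columnIdeal_le_iff.1 hP.1.2 j)
    have (j : τ) : (x j).IsPrime := (hx j).1.1
    have hle : (columnIdeal x).radical ≤ P :=
      Ideal.IsPrime.radical_le_iff inferInstance |>.2 (columnIdeal_le_iff.2 hxP)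
    exact ⟨x, hx, hle.antisymm (hP.2 ⟨inferInstance,
      (columnIdeal_mono fun j => (hx j).1.2).trans Ideal.le_radical⟩ hle)⟩
  · rintro ⟨x, hx, rfl⟩
    have (j : τ) : (x j).IsPrime := (hx j).1.1
    refine ⟨⟨inferInstance, (columnIdeal_mono fun j => (hx j).1.2).trans Ideal.le_radical⟩, ?_⟩
    rintro Q ⟨hQ, hJQ⟩ hle
    rw [hQ.radical_le_iff, columnIdeal_le_iff]
    intro j
    refine (hx j).2 ⟨inferInstance, columnIdeal_le_iff.1 hJQ j⟩ ?_
    exact (Ideal.comap_mono hle).trans (comap_rename_radical_columnIdeal x j).le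

end AlgebraicallyClosed

end ColumnIdeal

section TensorProduct

open scoped TensorProduct

theorem flat_piTensorProduct {R ι : Type*} [CommRing R] [Finite ι] (M : ι → Type*)
    [∀ i, AddCommGroup (M i)] [∀ i, Module R (M i)] [∀ i, Module.Flat R (M i)] :
    Module.Flat R (⨂[R] i, M i) := by
  induction ι using Finite.induction_empty_option with
  | of_equiv e ih =>
    have := ih fun i => M (e i)
    exact Module.Flat.of_linearEquiv (PiTensorProduct.reindex R M e.symm)
  | h_empty => exact Module.Flat.of_linearEquiv (PiTensorProduct.isEmptyEquiv _)
  | @h_option ι _ ih =>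
    let e := (Equiv.optionEquivSumPUnit.{0} ι).symm
    have := ih fun i => M (e (.inl i))
    have : Module.Flat R (⨂[R] i, M (e (.inr i))) :=
      Module.Flat.of_linearEquiv (PiTensorProduct.subsingletonEquiv PUnit.unit)
    exact Module.Flat.of_linearEquiv ((PiTensorProduct.reindex R M e.symm).trans
      (PiTensorProduct.tmulEquivDep R fun i => M (e i)).symm)

variable {R σ τ : Type*} [CommRing R]

/-- The inclusion of the `j`-th column into the quotient by a column ideal. -/
noncomputable def columnInclusion (J : τ → Ideal (MvPolynomial σ R)) (j : τ) :
    MvPolynomial σ R ⧸ J j →ₐ[R] MvPolynomial (σ × τ) R ⧸ columnIdeal J :=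
  Ideal.quotientMapₐ _ (rename fun i => (i, j)) (le_comap_columnIdeal J j)

section Lift

variable {A : Type*} [CommRing A] [Algebra R A] {J : τ → Ideal (MvPolynomial σ R)}

theorem aeval_comp_rename_column (φ : ∀ j, MvPolynomial σ R ⧸ J j →ₐ[R] A) (j : τ) :
    (aeval fun z : σ × τ => φ z.2 (Ideal.Quotient.mk _ (X z.1))).comp (rename fun i => (i, j)) =
      (φ j).comp (Ideal.Quotient.mkₐ R (J j)) := by
  ext i
  simp

/-- The universal property of the quotient by a column ideal as the coproduct of the quotients of
the columns. -/
noncomputable def columnLift (φ : ∀ j, MvPolynomial σ R ⧸ J j →ₐ[R] A) :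
    MvPolynomial (σ × τ) R ⧸ columnIdeal J →ₐ[R] A :=
  Ideal.Quotient.liftₐ _ (aeval fun z : σ × τ => φ z.2 (Ideal.Quotient.mk _ (X z.1))) <|
    show columnIdeal J ≤ RingHom.ker _ from columnIdeal_le_iff.2 fun j f hf => by
      simpa [Ideal.Quotient.eq_zero_iff_mem.2 hf] using
        DFunLike.congr_fun (aeval_comp_rename_column φ j) f

theorem columnLift_comp_columnInclusion (φ : ∀ j, MvPolynomial σ R ⧸ J j →ₐ[R] A) (j : τ) :
    (columnLift φ).comp (columnInclusion J j) = φ j :=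
  Ideal.Quotient.algHom_ext _ (aeval_comp_rename_column φ j)

theorem columnQuotient_algHom_ext {f g : MvPolynomial (σ × τ) R ⧸ columnIdeal J →ₐ[R] A}
    (h : ∀ j, f.comp (columnInclusion J j) = g.comp (columnInclusion J j)) : f = g := by
  apply Ideal.Quotient.algHom_ext
  ext z
  simpa [columnInclusion] using DFunLike.congr_fun (h z.2) (Ideal.Quotient.mk _ (X z.1))

end Lift

section PiTensorLift

variable [Fintype τ] {A : τ → Type*} {B : Type*} [∀ j, CommRing (A j)] [∀ j, Algebra R (A j)]
  [CommRing B] [Algebra R B]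

/-- The universal property of `⨂[R] j, A j` as the coproduct of the commutative algebras `A j`. -/
noncomputable def piTensorLift (φ : ∀ j, A j →ₐ[R] B) : (⨂[R] j, A j) →ₐ[R] B :=
  PiTensorProduct.liftAlgHom
    ((MultilinearMap.mkPiAlgebra R τ B).compLinearMap fun j => (φ j).toLinearMap)
    (by simp) fun x y => by simp [Finset.prod_mul_distrib]

theorem piTensorLift_tprod (φ : ∀ j, A j →ₐ[R] B) (a : ∀ j, A j) :
    piTensorLift φ (⨂ₜ[R] j, a j) = ∏ j, φ j (a j) :=
  PiTensorProduct.lift.tprod a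

theorem piTensorLift_comp_singleAlgHom [DecidableEq τ] (φ : ∀ j, A j →ₐ[R] B) (j : τ) :
    (piTensorLift φ).comp (PiTensorProduct.singleAlgHom j) = φ j := by
  ext a
  rw [AlgHom.comp_apply, PiTensorProduct.singleAlgHom_apply, piTensorLift_tprod,
    Fintype.prod_eq_single j fun j' h => by simp [h]]
  simp

end PiTensorLift

section Equiv

variable [DecidableEq τ] (J : τ → Ideal (MvPolynomial σ R))

/-- The canonical map from the quotient by a column ideal to the tensor product of the quotients of
the columns. -/
noncomputable def columnQuotientToTensor :
    (MvPolynomial (σ × τ) R ⧸ columnIdeal J) →ₐ[R] ⨂[R] j, MvPolynomial σ R ⧸ J j :=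
  columnLift (A := ⨂[R] j, MvPolynomial σ R ⧸ J j) PiTensorProduct.singleAlgHom

theorem columnQuotientToTensor_comp_columnInclusion (j : τ) :
    (columnQuotientToTensor J).comp (columnInclusion J j) =
      PiTensorProduct.singleAlgHom (A := fun j => MvPolynomial σ R ⧸ J j) j :=
  columnLift_comp_columnInclusion (A := ⨂[R] j, MvPolynomial σ R ⧸ J j) _ j

/-- The quotient by a column ideal is the tensor product of the quotients of the columns. -/
noncomputable def columnQuotientEquiv [Fintype τ] :
    (MvPolynomial (σ × τ) R ⧸ columnIdeal J) ≃ₐ[R] ⨂[R] j, MvPolynomial σ R ⧸ J j :=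
  AlgEquiv.ofAlgHom (columnQuotientToTensor J) (piTensorLift (columnInclusion J))
    (PiTensorProduct.algHom_ext fun j => by
      rw [AlgHom.comp_assoc, piTensorLift_comp_singleAlgHom,
        columnQuotientToTensor_comp_columnInclusion, AlgHom.id_comp])
    (columnQuotient_algHom_ext fun j => by
      rw [AlgHom.comp_assoc, columnQuotientToTensor_comp_columnInclusion,
        piTensorLift_comp_singleAlgHom, AlgHom.id_comp])

end Equiv

theorem flat_columnQuotient [Finite τ] (J : τ → Ideal (MvPolynomial σ R))
    [∀ j, Module.Flat R (MvPolynomial σ R ⧸ J j)] :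
    Module.Flat R (MvPolynomial (σ × τ) R ⧸ columnIdeal J) := by
  classical
  have := Fintype.ofFinite τ
  have := flat_piTensorProduct (R := R) fun j => MvPolynomial σ R ⧸ J j
  exact .of_linearEquiv (columnQuotientEquiv J).toLinearEquiv

end TensorProduct

theorem C_notMem_of_mem_minimalPrimes {R ρ : Type*} [CommRing R] [IsDomain R]
    {I p : Ideal (MvPolynomial ρ R)} [Module.IsTorsionFree R (MvPolynomial ρ R ⧸ I)]
    (hp : p ∈ I.minimalPrimes) {a : R} (ha : a ≠ 0) : C a ∉ p := by
  intro h
  obtain ⟨f, hf, haf⟩ := Ideal.exists_mul_mem_of_mem_minimalPrimes hp h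
  rw [← smul_eq_C_mul, ← Ideal.Quotient.eq_zero_iff_mem] at haf
  exact hf (Ideal.Quotient.eq_zero_iff_mem.1 ((smul_eq_zero.1 haf).resolve_left ha))

section Contraction

section MinimalPrimes

variable {A B : Type*} [CommRing A] [CommRing B] [Algebra A B]

theorem under_mem_minimalPrimes_of_hasGoingDown [Algebra.HasGoingDown A B] {I : Ideal A}
    {P : Ideal B} (hP : P ∈ (I.map (algebraMap A B)).minimalPrimes) :
    P.under A ∈ I.minimalPrimes := by
  have := hP.1.1
  refine ⟨⟨inferInstance, Ideal.map_le_iff_le_comap.1 hP.1.2⟩, ?_⟩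
  rintro q ⟨hq, hIq⟩ hle
  obtain ⟨Q, hQP, hQ, hQq⟩ := Ideal.exists_ideal_le_liesOver_of_le P hle
  have hIQ : I.map (algebraMap A B) ≤ Q := Ideal.map_le_iff_le_comap.2 (hIq.trans hQq.over.le)
  exact (Ideal.comap_mono (hP.2 ⟨hQ, hIQ⟩ hQP)).trans hQq.over.ge

theorem exists_mem_minimalPrimes_map_under_eq {I : Ideal A} {Q : Ideal B} [Q.IsPrime]
    (hQ : Q.under A ∈ I.minimalPrimes) :
    ∃ P ∈ (I.map (algebraMap A B)).minimalPrimes, P.under A = Q.under A := by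
  obtain ⟨P, hP, hPQ⟩ := Ideal.exists_minimalPrimes_le (Ideal.map_le_iff_le_comap.2 hQ.1.2)
  have := hP.1.1
  have hle : P.under A ≤ Q.under A := Ideal.comap_mono hPQ
  exact ⟨P, hP, hle.antisymm <|
    hQ.2 ⟨inferInstance, Ideal.map_le_iff_le_comap.1 hP.1.2⟩ hle⟩

theorem exists_algHom_le_ker [Algebra.IsIntegral A B] {Ω : Type*} [Field Ω] [IsAlgClosed Ω]
    [Algebra A Ω] (P : Ideal B) [P.IsPrime] (p : Ideal A) [P.LiesOver p]
    (h : RingHom.ker (algebraMap A Ω) = p) : ∃ θ : B →ₐ[A] Ω, P ≤ RingHom.ker θ := by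
  have : p.IsPrime := h ▸ RingHom.ker_isPrime _
  let : Algebra (A ⧸ p) Ω := (Ideal.Quotient.lift p (algebraMap A Ω) fun a ha => by
    rwa [← RingHom.mem_ker, h]).toAlgebra
  have : IsScalarTower A (A ⧸ p) Ω := .of_algebraMap_eq fun _ => rfl
  have : FaithfulSMul (A ⧸ p) Ω := (faithfulSMul_iff_algebraMap_injective _ _).2 <|
    RingHom.lift_injective_of_ker_le_ideal _ _ h.le
  have : Module.IsTorsionFree (A ⧸ p) (B ⧸ P) :=
    Module.isTorsionFree_iff_faithfulSMul.2 inferInstance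
  let φ : B ⧸ P →ₐ[A ⧸ p] Ω := IsAlgClosed.lift
  refine ⟨(φ.restrictScalars A).comp (Ideal.Quotient.mkₐ A P), fun b hb => ?_⟩
  simp [RingHom.mem_ker, Ideal.Quotient.eq_zero_iff_mem.2 hb]

end MinimalPrimes

section CoefficientAction

variable {M R ρ : Type*}

theorem mvPolynomial_smul_eq_map [Monoid M] [CommSemiring R] [MulSemiringAction M R] (m : M)
    (f : MvPolynomial ρ R) : m • f = map (MulSemiringAction.toRingHom M R m) f := by
  ext
  simp [coeff_map]

/-- The action of ring endomorphisms of `R` on polynomials through their coefficients. -/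
noncomputable instance mvPolynomialMulSemiringAction [Monoid M] [CommSemiring R]
    [MulSemiringAction M R] : MulSemiringAction M (MvPolynomial ρ R) where
  smul_one m := by rw [mvPolynomial_smul_eq_map, map_one]
  smul_mul m f g := by simp only [mvPolynomial_smul_eq_map, map_mul]

theorem toRingHom_mvPolynomial [Monoid M] [CommSemiring R] [MulSemiringAction M R] (m : M) :
    MulSemiringAction.toRingHom M (MvPolynomial ρ R) m = map (MulSemiringAction.toRingHom M R m) :=
  RingHom.ext (mvPolynomial_smul_eq_map m)

end CoefficientAction

attribute [local instance] MvPolynomial.algebraMvPolynomial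
open scoped Pointwise

instance isScalarTower_mvPolynomial {R S T ρ : Type*} [CommSemiring R] [CommSemiring S]
    [CommSemiring T] [Algebra R S] [Algebra S T] [Algebra R T] [IsScalarTower R S T] :
    IsScalarTower (MvPolynomial ρ R) (MvPolynomial ρ S) (MvPolynomial ρ T) :=
  .of_algebraMap_eq fun f => by
    simp only [algebraMap_def, map_map, IsScalarTower.algebraMap_eq R S T]

theorem flat_mvPolynomial {R S ρ : Type*} [CommRing R] [CommRing S] [Algebra R S]
    [Module.Flat R S] : Module.Flat (MvPolynomial ρ R) (MvPolynomial ρ S) :=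
  .isBaseChange R _ S _ Algebra.IsPushout.out

theorem exists_smul_le_ker_of_under_eq {F k ρ Ω : Type*} [Field F] [Field k] [Algebra F k]
    [Normal F k] [Field Ω] [IsAlgClosed Ω] [Algebra (MvPolynomial ρ k) Ω]
    (P : Ideal (MvPolynomial ρ k)) [P.IsPrime]
    (h : P.under (MvPolynomial ρ F) =
      (RingHom.ker (algebraMap (MvPolynomial ρ k) Ω)).under (MvPolynomial ρ F)) :
    ∃ g : k ≃ₐ[F] k, g • P ≤ RingHom.ker (algebraMap (MvPolynomial ρ k) Ω) := by
  let : Algebra (MvPolynomial ρ F) Ω := .compHom Ω (algebraMap _ (MvPolynomial ρ k))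
  let : Algebra k Ω := .compHom Ω (algebraMap k (MvPolynomial ρ k))
  let : Algebra F Ω := .compHom Ω (algebraMap F (MvPolynomial ρ k))
  have : IsScalarTower (MvPolynomial ρ F) (MvPolynomial ρ k) Ω := .of_algebraMap_eq fun _ => rfl
  have : IsScalarTower k (MvPolynomial ρ k) Ω := .of_algebraMap_eq fun _ => rfl
  have : IsScalarTower F (MvPolynomial ρ k) Ω := .of_algebraMap_eq fun _ => rfl
  have : IsScalarTower F k Ω := .to₁₂₄ F k (MvPolynomial ρ k) Ω
  have : IsScalarTower F (MvPolynomial ρ F) Ω := .to₁₂₄ F (MvPolynomial ρ F) (MvPolynomial ρ k) Ω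
  obtain ⟨θ, hθ⟩ := exists_algHom_le_ker (Ω := Ω) P (P.under (MvPolynomial ρ F)) <| by
    rw [IsScalarTower.algebraMap_eq _ (MvPolynomial ρ k), ← RingHom.comap_ker, h]
  -- Both `θ` and `algebraMap` embed `k` into `Ω`; as `k` is normal, their images agree.
  let g : k ≃ₐ[F] k := Normal.algHomEquivAut F Ω k
    ((θ.restrictScalars F).comp (IsScalarTower.toAlgHom F k (MvPolynomial ρ k)))
  have hgk (a : k) : algebraMap (MvPolynomial ρ k) Ω (C (g a)) = θ (C a) :=
    DFunLike.congr_fun ((Normal.algHomEquivAut F Ω k).symm_apply_apply _) a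
  have hg : (algebraMap (MvPolynomial ρ k) Ω).comp
      (map (MulSemiringAction.toRingHom (k ≃ₐ[F] k) k g)) = θ := by
    refine ringHom_ext (fun a => ?_) fun i => ?_
    · simpa using hgk a
    · simpa [IsScalarTower.algebraMap_apply (MvPolynomial ρ F) (MvPolynomial ρ k) Ω]
        using (θ.commutes (X i)).symm
  refine ⟨g, Ideal.pointwise_smul_subset_iff.2 fun f hf => ?_⟩
  rw [Ideal.mem_inv_pointwise_smul_iff, mvPolynomial_smul_eq_map, RingHom.mem_ker,
    ← RingHom.comp_apply, hg]
  exact hθ hf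

theorem exists_smul_le_of_under_eq_of_normal {F k ρ : Type*} [Field F] [Field k] [Algebra F k]
    [Normal F k] {P Q : Ideal (MvPolynomial ρ k)} [P.IsPrime] [Q.IsPrime]
    (h : P.under (MvPolynomial ρ F) = Q.under (MvPolynomial ρ F)) :
    ∃ g : k ≃ₐ[F] k, g • P ≤ Q := by
  have ker_eq : RingHom.ker (algebraMap (MvPolynomial ρ k) (AlgebraicClosure Q.ResidueField)) =
      Q := by
    rw [IsScalarTower.algebraMap_eq _ Q.ResidueField, RingHom.ker_comp_of_injective _
      (RingHom.injective _), Ideal.ker_algebraMap_residueField]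
  rw [← ker_eq] at h ⊢
  exact exists_smul_le_ker_of_under_eq P h

section AlgebraicallyClosed

variable {L k ρ : Type*} [CommRing L] [IsDomain L] [Field k] [Algebra L k] [FaithfulSMul L k]

theorem exists_smul_le_of_under_eq [IsAlgClosed k] [Algebra.IsAlgebraic L k]
    {P Q : Ideal (MvPolynomial ρ k)} [P.IsPrime] [Q.IsPrime]
    (h : P.under (MvPolynomial ρ L) = Q.under (MvPolynomial ρ L)) :
    ∃ g : k ≃ₐ[L] k, g • P ≤ Q := by
  let F := FractionRing L
  let := FractionRing.liftAlgebra L k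
  have : IsScalarTower L F k := FractionRing.isScalarTower_liftAlgebra L k
  have : Algebra.IsAlgebraic F k := .extendScalars (IsFractionRing.injective L F)
  have : Normal F k :=
    normal_iff.2 fun x => ⟨Algebra.IsIntegral.isIntegral x, IsAlgClosed.splits _⟩
  let M := (nonZeroDivisors L).map (C : L →+* MvPolynomial ρ L)
  obtain ⟨g, hg⟩ := exists_smul_le_of_under_eq_of_normal (F := F) (P := P) (Q := Q) <|
    (IsLocalization.orderEmbedding M (MvPolynomial ρ F)).injective <| by
      change (P.under (MvPolynomial ρ F)).under _ = (Q.under (MvPolynomial ρ F)).under _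
      simpa only [Ideal.under_under]
  exact ⟨g.restrictScalars L, hg⟩

variable (L k) in
theorem flat_field_of_faithfulSMul : Module.Flat L k := by
  let := FractionRing.liftAlgebra L k
  have : IsScalarTower L (FractionRing L) k := FractionRing.isScalarTower_liftAlgebra L k
  have := IsLocalization.flat (FractionRing L) (nonZeroDivisors L)
  exact .trans L (FractionRing L) k

theorem exists_isPrime_under_eq [Algebra.IsAlgebraic L k] {p : Ideal (MvPolynomial ρ L)}
    [p.IsPrime] (hp : ∀ a : L, a ≠ 0 → C a ∉ p) :
    ∃ Q : Ideal (MvPolynomial ρ k), Q.IsPrime ∧ Q.under (MvPolynomial ρ L) = p := by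
  let F := FractionRing L
  let := FractionRing.liftAlgebra L k
  have : IsScalarTower L F k := FractionRing.isScalarTower_liftAlgebra L k
  have : Algebra.IsAlgebraic F k := .extendScalars (IsFractionRing.injective L F)
  let M := (nonZeroDivisors L).map (C : L →+* MvPolynomial ρ L)
  have hM : Disjoint (M : Set (MvPolynomial ρ L)) p := by
    rw [Set.disjoint_left]
    rintro - ⟨a, ha, rfl⟩
    exact hp a (nonZeroDivisors.ne_zero ha)
  have : (p.map (algebraMap _ (MvPolynomial ρ F))).IsPrime :=
    IsLocalization.isPrime_of_isPrime_disjoint M _ p inferInstance hM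
  obtain ⟨Q, hQ, hQp⟩ := Ideal.exists_ideal_over_prime_of_isIntegral_of_isDomain
    (S := MvPolynomial ρ k) (p.map (algebraMap _ (MvPolynomial ρ F))) <| by
      rw [(RingHom.injective_iff_ker_eq_bot (algebraMap (MvPolynomial ρ F) (MvPolynomial ρ k))).1
        (map_injective _ (algebraMap F k).injective)]
      exact bot_le
  refine ⟨Q, hQ, ?_⟩
  rw [← Ideal.under_under (B := MvPolynomial ρ F), Ideal.under_def _ Q, hQp]
  exact IsLocalization.under_map_of_isPrime_disjoint M _ inferInstance hM

end AlgebraicallyClosed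

section GroupAction

variable {G A B : Type*} [Group G] [CommRing B] [MulSemiringAction G B]

theorem smul_mem_minimalPrimes_smul {I P : Ideal B} (hP : P ∈ I.minimalPrimes) (g : G) :
    g • P ∈ (g • I).minimalPrimes := by
  have := hP.1.1
  refine ⟨⟨inferInstance, Ideal.pointwise_smul_le_pointwise_smul_iff.2 hP.1.2⟩, ?_⟩
  rintro Q ⟨hQ, hIQ⟩ hQP
  rw [Ideal.pointwise_smul_subset_iff] at hIQ ⊢
  exact hP.2 ⟨inferInstance, hIQ⟩ (by rwa [← Ideal.subset_pointwise_smul_iff])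

theorem smul_radical (g : G) (I : Ideal B) : g • I.radical = (g • I).radical := by
  simp only [Ideal.pointwise_smul_eq_comap, Ideal.comap_radical]

variable [CommRing A] [Algebra A B] [SMulCommClass G A B]

theorem smul_map_algebraMap (g : G) (I : Ideal A) :
    g • I.map (algebraMap A B) = I.map (algebraMap A B) := by
  rw [Ideal.pointwise_smul_def, Ideal.map_map]
  congr 1
  ext a
  simp

variable (G B) in
/-- The minimal primes over the extension of an ideal of `A` to `B`, with the action of a group of
`A`-automorphisms of `B`. -/
def minimalPrimesMap (I : Ideal A) : SubMulAction G (Ideal B) where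
  carrier := (I.map (algebraMap A B)).minimalPrimes
  smul_mem' g P hP := by
    simpa only [smul_map_algebraMap] using smul_mem_minimalPrimes_smul hP g

end GroupAction

section CoefficientActionOnIdeals

variable {M R S σ τ : Type*} [CommRing R] [Monoid M] [MulSemiringAction M R]

theorem smul_columnIdeal (m : M) (x : τ → Ideal (MvPolynomial σ R)) :
    m • columnIdeal x = columnIdeal (m • x) := by
  simp only [Ideal.pointwise_smul_def, toRingHom_mvPolynomial, map_map_columnIdeal, Pi.smul_def]

instance smulCommClass_mvPolynomial [CommRing S] [Algebra S R] [SMulCommClass M S R] :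
    SMulCommClass M (MvPolynomial σ S) (MvPolynomial σ R) where
  smul_comm m f h := by
    have : m • algebraMap _ (MvPolynomial σ R) f = algebraMap _ (MvPolynomial σ R) f := by
      ext
      rw [algebraMap_def, coeff_smul, coeff_map, smul_algebraMap]
    rw [Algebra.smul_def, Algebra.smul_def, smul_mul', this]

end CoefficientActionOnIdeals

theorem map_rename_eq_comap {R ρ ρ' : Type*} [CommRing R] (e : ρ ≃ ρ')
    (I : Ideal (MvPolynomial ρ R)) : I.map (rename (R := R) e) = I.comap (rename e.symm) :=
  Ideal.map_comap_of_equiv (renameEquiv R e).toRingEquiv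

section ContractedColumnIdeal

variable (L : Type*) {k σ τ : Type*} [CommRing L] [Field k] [Algebra L k]

/-- The radical of a column ideal over the extension `k` of `L`, contracted to `L`. If `k` is an
algebraic closure of the fraction field of `L` and the `x j` range over the minimal primes over the
extensions to `k` of ideals `J j` with flat quotients, these are the minimal primes over
`columnIdeal J`. -/
noncomputable def contractedColumnIdeal (x : τ → Ideal (MvPolynomial σ k)) :
    Ideal (MvPolynomial (σ × τ) L) :=
  (columnIdeal x).radical.under (MvPolynomial (σ × τ) L)

theorem contractedColumnIdeal_smul (g : k ≃ₐ[L] k) (x : τ → Ideal (MvPolynomial σ k)) :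
    contractedColumnIdeal L (g • x) = contractedColumnIdeal L x := by
  rw [contractedColumnIdeal, ← smul_columnIdeal, ← smul_radical, Ideal.under_smul,
    contractedColumnIdeal]

theorem map_rename_contractedColumnIdeal {τ' : Type*} (e : τ ≃ τ')
    (x : τ → Ideal (MvPolynomial σ k)) :
    (contractedColumnIdeal L x).map (rename (Prod.map id e)) =
      contractedColumnIdeal L (x ∘ e.symm) := by
  rw [contractedColumnIdeal, contractedColumnIdeal, ← map_rename_columnIdeal]
  change Ideal.map (rename ((Equiv.refl σ).prodCongr e)) _ =
    (Ideal.map (rename ((Equiv.refl σ).prodCongr e)) _).radical.under _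
  rw [map_rename_eq_comap, map_rename_eq_comap, ← Ideal.comap_radical]
  ext f
  simp only [Ideal.mem_comap, algebraMap_def, map_rename]

variable {L}

theorem smul_le_of_smul_radical_columnIdeal_le [Finite σ] [Finite τ] [IsAlgClosed k]
    {x y : τ → Ideal (MvPolynomial σ k)} [∀ j, (x j).IsPrime] [∀ j, (y j).IsPrime]
    {g : k ≃ₐ[L] k} (hg : g • (columnIdeal x).radical ≤ (columnIdeal y).radical) : g • x ≤ y := by
  intro j
  have (j : τ) : ((g • x) j).IsPrime := Ideal.IsPrime.smul (I := x j) g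
  rw [smul_radical, smul_columnIdeal] at hg
  have := Ideal.comap_mono (f := rename fun i => (i, j)) hg
  rwa [comap_rename_radical_columnIdeal, comap_rename_radical_columnIdeal] at this

variable [IsDomain L] [FaithfulSMul L k] [IsAlgClosed k] [Algebra.IsAlgebraic L k]
variable [Finite σ] [Finite τ] {J : τ → Ideal (MvPolynomial σ L)}

theorem contractedColumnIdeal_eq_iff {x y : τ → Ideal (MvPolynomial σ k)}
    (hx : ∀ j, x j ∈ ((J j).map (algebraMap _ (MvPolynomial σ k))).minimalPrimes)
    (hy : ∀ j, y j ∈ ((J j).map (algebraMap _ (MvPolynomial σ k))).minimalPrimes) :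
    contractedColumnIdeal L x = contractedColumnIdeal L y ↔ ∃ g : k ≃ₐ[L] k, y = g • x := by
  refine ⟨fun h => ?_, fun ⟨g, hg⟩ => by rw [hg, contractedColumnIdeal_smul]⟩
  have (j : τ) : (x j).IsPrime := (hx j).1.1
  have (j : τ) : (y j).IsPrime := (hy j).1.1
  obtain ⟨g, hg⟩ : ∃ g : k ≃ₐ[L] k, g • (columnIdeal x).radical ≤ (columnIdeal y).radical :=
    exists_smul_le_of_under_eq h
  have hle : g • x ≤ y := smul_le_of_smul_radical_columnIdeal_le hg
  have hgx (j : τ) : g • x j ∈ ((J j).map (algebraMap _ (MvPolynomial σ k))).minimalPrimes :=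
    (minimalPrimesMap (k ≃ₐ[L] k) (MvPolynomial σ k) (J j)).smul_mem g (hx j)
  have hge : y ≤ g • x := fun j => (hy j).2 (hgx j).1 (hle j)
  exact ⟨g, hge.antisymm hle⟩

theorem mem_minimalPrimes_columnIdeal_iff_exists_contractedColumnIdeal_eq
    [∀ j, Module.Flat L (MvPolynomial σ L ⧸ J j)] {P : Ideal (MvPolynomial (σ × τ) L)} :
    P ∈ (columnIdeal J).minimalPrimes ↔
      ∃ x : τ → Ideal (MvPolynomial σ k),
        (∀ j, x j ∈ ((J j).map (algebraMap _ (MvPolynomial σ k))).minimalPrimes) ∧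
          contractedColumnIdeal L x = P := by
  have hmap : (columnIdeal J).map (algebraMap _ (MvPolynomial (σ × τ) k)) =
      columnIdeal fun j => (J j).map (algebraMap _ (MvPolynomial σ k)) :=
    map_map_columnIdeal _ J
  constructor
  · intro hP
    have := hP.1.1
    have := flat_columnQuotient J
    have : Module.IsTorsionFree L (MvPolynomial (σ × τ) L ⧸ columnIdeal J) :=
      Module.Flat.isTorsionFree
    obtain ⟨Q, hQ, rfl⟩ := exists_isPrime_under_eq (k := k)
      fun a => C_notMem_of_mem_minimalPrimes hP
    obtain ⟨P', hP', hPQ⟩ := exists_mem_minimalPrimes_map_under_eq hP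
    rw [hmap, mem_minimalPrimes_columnIdeal_iff] at hP'
    obtain ⟨x, hx, rfl⟩ := hP'
    exact ⟨x, hx, hPQ⟩
  · rintro ⟨x, hx, rfl⟩
    have := flat_field_of_faithfulSMul L k
    have := flat_mvPolynomial (R := L) (S := k) (ρ := σ × τ)
    apply under_mem_minimalPrimes_of_hasGoingDown
    rw [hmap, mem_minimalPrimes_columnIdeal_iff]
    exact ⟨x, hx, rfl⟩

end ContractedColumnIdeal

theorem exists_isAlgClosed_isAlgebraic.{u} (L : Type u) [CommRing L] [IsDomain L] :
    ∃ (k : Type u) (_ : Field k) (_ : Algebra L k),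
      FaithfulSMul L k ∧ IsAlgClosed k ∧ Algebra.IsAlgebraic L k :=
  ⟨AlgebraicClosure (FractionRing L), inferInstance, inferInstance,
    .trans L (FractionRing L) _, inferInstance,
    (IsFractionRing.comap_isAlgebraic_iff (K := FractionRing L)).2 inferInstance⟩

section OrbitCount

variable {L σ τ : Type*} [CommRing L] [IsDomain L] [Finite σ] [Finite τ]

theorem map_rename_contractedColumnIdeal_eq_iff {k : Type*} [Field k] [Algebra L k]
    [FaithfulSMul L k] [IsAlgClosed k] [Algebra.IsAlgebraic L k] {J : Ideal (MvPolynomial σ L)}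
    (x y : τ → minimalPrimesMap (k ≃ₐ[L] k) (MvPolynomial σ k) J) (π : Equiv.Perm τ) :
    (contractedColumnIdeal L fun j => (x j).1).map (rename (Prod.map id π)) =
        contractedColumnIdeal L (fun j => (y j).1) ↔
      ∃ g : k ≃ₐ[L] k, ∀ j, y (π j) = g • x j := by
  rw [map_rename_contractedColumnIdeal]
  refine (contractedColumnIdeal_eq_iff (J := fun _ => J) (fun j => (x (π.symm j)).2)
    fun j => (y j).2).trans <| exists_congr fun g => ?_
  rw [funext_iff, ← π.forall_congr_right]
  simp [Subtype.ext_iff]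

theorem card_orbits_minimalPrimes_columnIdeal (k : Type*) [Field k] [Algebra L k]
    [FaithfulSMul L k] [IsAlgClosed k] [Algebra.IsAlgebraic L k] (J : Ideal (MvPolynomial σ L))
    [Module.Flat L (MvPolynomial σ L ⧸ J)] :
    Nat.card (Quot fun P Q : (columnIdeal fun _ : τ => J).minimalPrimes =>
        ∃ π : Equiv.Perm τ, P.1.map (rename (Prod.map id π)) = Q.1) =
      Nat.card (Quot fun x y : τ → minimalPrimesMap (k ≃ₐ[L] k) (MvPolynomial σ k) J =>
        ∃ (π : Equiv.Perm τ) (g : k ≃ₐ[L] k), ∀ j, y (π j) = g • x j) := by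
  let Θ (x : τ → minimalPrimesMap (k ≃ₐ[L] k) (MvPolynomial σ k) J) :
      (columnIdeal fun _ : τ => J).minimalPrimes :=
    ⟨contractedColumnIdeal L fun j => (x j).1,
      mem_minimalPrimes_columnIdeal_iff_exists_contractedColumnIdeal_eq.2
        ⟨_, fun j => (x j).2, rfl⟩⟩
  have hΘ : Θ.Surjective := by
    rintro ⟨P, hP⟩
    obtain ⟨x, hx, rfl⟩ :=
      (mem_minimalPrimes_columnIdeal_iff_exists_contractedColumnIdeal_eq (k := k)).1 hP
    exact ⟨fun j => ⟨x j, hx j⟩, rfl⟩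
  have := Std.Refl.mk (r := fun x y : τ → minimalPrimesMap (k ≃ₐ[L] k) (MvPolynomial σ k) J =>
    ∃ (π : Equiv.Perm τ) (g : k ≃ₐ[L] k), ∀ j, y (π j) = g • x j) fun x => ⟨1, 1, by simp⟩
  exact (card_quot_eq_of_surjective hΘ fun x y =>
    (exists_congr (map_rename_contractedColumnIdeal_eq_iff x y)).symm).symm

end OrbitCount

theorem orbit_count_components_product_type_general {L σ : Type*} [CommRing L] [IsDomain L]
    [Finite σ] (J : Ideal (MvPolynomial σ L)) [Module.Flat L (MvPolynomial σ L ⧸ J)] :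
    QuasiPolynomialCount fun n =>
      Nat.card (Quot fun P Q : (columnIdeal fun _ : Fin n => J).minimalPrimes =>
        ∃ π : Equiv.Perm (Fin n), P.1.map (rename (Prod.map id π)) = Q.1) := by
  obtain ⟨k, _, _, _, _, _⟩ := exists_isAlgClosed_isAlgebraic L
  have : Finite (minimalPrimesMap (k ≃ₐ[L] k) (MvPolynomial σ k) J) :=
    Ideal.finite_minimalPrimes_of_isNoetherianRing _ _
  simpa only [card_orbits_minimalPrimes_columnIdeal k] using
    quasiPolynomialCount_card_quot_perm_smul (k ≃ₐ[L] k)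
      (minimalPrimesMap (k ≃ₐ[L] k) (MvPolynomial σ k) J)

end Contraction

/-- The Main Theorem for `FIᵒᵖ`-schemes of product type: with `L` a Noetherian domain,
`J ⊆ L[y_1,…,y_c]` an ideal whose quotient is a free `L`-module, and `I n` the ideal of
`L[x_{i,j}]` generated by the copies of `J` in each column, the number of
`Sym([n])`-orbits on minimal primes over `I n` is a quasipolynomial in `n` for `n ≫ 0`. -/
theorem orbit_count_components_product_type
    (L : Type) [CommRing L] [IsDomain L] [IsNoetherianRing L] (c : ℕ)
    (J : Ideal (MvPolynomial (Fin c) L))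
    (hfree : Module.Free L (MvPolynomial (Fin c) L ⧸ J)) :
    QuasiPolynomialCount (fun n =>
      Nat.card (Quot (fun (P Q : {P : Ideal (MvPolynomial (Fin c × Fin n) L) //
          P ∈ (⨆ j : Fin n, Ideal.map (rename (fun i : Fin c => (i, j))) J).minimalPrimes}) =>
        ∃ π : Equiv.Perm (Fin n),
          Ideal.map (rename (Prod.map (id : Fin c → Fin c) π)) P.1 = Q.1))) :=
  orbit_count_components_product_type_general J
end

section
/- Let (I_n)_{n∈ℕ} be a symmetric wide-matrix ideal chain over a Noetherian commutative ring K with I_n ≠ A_n for every n. Then there exist a real constant c ≥ 1 and n_0 ∈ ℕ such that for all n ≥ n_0, the number of minimal prime ideals of A_n over I_n is at most c^n. -/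
open MvPolynomial

/-!
Chains of ideals in wide matrices satisfy the ascending chain condition, by Higman's lemma applied
to leading monomials, so one can argue by Noetherian induction on the chain.

Regard `I (n + 1)` as an ideal of polynomials in the variables of the last column, with coefficients
in the ring of the first `n` columns. By Dickson's lemma finitely many polynomials, in this sense,
form a Gröbner basis relative to `I n` simultaneously for all `n`, with leading coefficients `g w`
outside of the chain. A component of `I n` that contains all column translates of some `g w` is a
component of the strictly larger chain obtained by adjoining `g w`. Any other component avoids a
translate of each `g w`; these translates live in `n₀` columns, which can be moved to the first `n₀`
by a permutation and chosen in at most `n ^ n₀` ways.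

Where the leading coefficients in the first `n₀` columns do not vanish, division with remainder
shows that contraction sends a component `P` of `I (n + 1)` to a component `P'` of `I n`, and that
`P` is a component of the ideal generated by `P'` and the fixed Gröbner basis. Over a given `P'`
there are at most as many of these as the geometric fibre of that fixed family has components,
and since primes remain prime under extension of algebraically closed fields, this number depends
only on the contraction of `P'` to `n₀` columns, a component of `I n₀`. Hence the number of such
components grows at most by a constant factor from `n` to `n + 1`.
-/

section GeometricIntegrality

open scoped TensorProduct

theorem exists_algHom_ne_zero_of_isAlgClosed {k A : Type*} [Field k] [IsAlgClosed k] [CommRing A]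
    [IsReduced A] [Algebra k A] [Algebra.FiniteType k A] {a : A} (ha : a ≠ 0) :
    ∃ φ : A →ₐ[k] k, φ a ≠ 0 := by
  have : IsJacobsonRing A := isJacobsonRing_of_finiteType (A := k)
  have hjac : a ∉ (⊥ : Ideal A).jacobson := by
    rwa [← Ideal.radical_eq_jacobson, Ideal.radical_bot_of_isReduced, Ideal.mem_bot]
  obtain ⟨𝔪, h𝔪, ha𝔪⟩ : ∃ 𝔪 : Ideal A, 𝔪.IsMaximal ∧ a ∉ 𝔪 := by
    simpa [Ideal.jacobson, Ideal.mem_sInf] using hjac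
  let : Field (A ⧸ 𝔪) := Ideal.Quotient.field 𝔪
  have : Module.Finite k (A ⧸ 𝔪) := finite_of_finite_type_of_isJacobsonRing k (A ⧸ 𝔪)
  let e : k ≃ₐ[k] A ⧸ 𝔪 := AlgEquiv.ofBijective (Algebra.ofId k _)
    IsAlgClosed.algebraMap_bijective_of_isIntegral
  refine ⟨e.symm.toAlgHom.comp (Ideal.Quotient.mkₐ k 𝔪), ?_⟩
  simpa [Ideal.Quotient.eq_zero_iff_mem] using ha𝔪

theorem basis_repr_lift_eq {k A B ι : Type*} [CommRing k] [CommRing A] [Algebra k A] [CommRing B]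
    [Algebra k B] (b : Module.Basis ι k B) (φ : A →ₐ[k] k) (z : A ⊗[k] B) (i : ι) :
    b.repr (Algebra.TensorProduct.lift ((Algebra.ofId k B).comp φ) (AlgHom.id k B)
      (fun _ _ => Commute.all _ _) z) i = φ ((Algebra.TensorProduct.basis A b).repr z i) := by
  induction z using TensorProduct.induction_on with
  | zero => simp
  | tmul a c => simp [Algebra.ofId_apply, ← Algebra.smul_def]
  | add z w hz hw => simp only [map_add, Finsupp.add_apply, hz, hw]

theorem isDomain_tensorProduct_of_isAlgClosed (k A B : Type*) [Field k] [IsAlgClosed k]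
    [CommRing A] [IsDomain A] [Algebra k A] [Algebra.FiniteType k A] [CommRing B] [IsDomain B]
    [Algebra k B] : IsDomain (A ⊗[k] B) := by
  let b := Module.Basis.ofVectorSpace k B
  let bA := Algebra.TensorProduct.basis A b
  have exists_coord {z : A ⊗[k] B} (hz : z ≠ 0) : ∃ i, bA.repr z i ≠ 0 := by
    by_contra! h
    exact hz (bA.repr.map_eq_zero_iff.1 (Finsupp.ext h))
  have : NoZeroDivisors (A ⊗[k] B) := by
    refine ⟨fun {x y} hxy => ?_⟩
    by_contra! ⟨hx, hy⟩
    obtain ⟨i, hi⟩ := exists_coord hx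
    obtain ⟨j, hj⟩ := exists_coord hy
    obtain ⟨φ, hφ⟩ := exists_algHom_ne_zero_of_isAlgClosed (k := k) (mul_ne_zero hi hj)
    let f : A ⊗[k] B →ₐ[k] B := Algebra.TensorProduct.lift ((Algebra.ofId k B).comp φ)
      (AlgHom.id k B) fun _ _ => Commute.all _ _
    have hf {z : A ⊗[k] B} {i} (h : φ (bA.repr z i) ≠ 0) : f z ≠ 0 := fun hz =>
      h (by rw [← basis_repr_lift_eq b φ z i]; change b.repr (f z) i = 0; simp [hz])
    rw [map_mul] at hφ
    have hfxy : f x * f y = 0 := by rw [← map_mul, hxy, map_zero]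
    exact mul_ne_zero (hf (left_ne_zero_of_mul hφ)) (hf (right_ne_zero_of_mul hφ)) hfxy
  exact NoZeroDivisors.to_isDomain _

theorem isPrime_map_map_of_isAlgClosed {σ k M : Type*} [Finite σ] [Field k] [IsAlgClosed k]
    [CommRing M] [IsDomain M] (j : k →+* M) (p : Ideal (MvPolynomial σ k)) [p.IsPrime] :
    (p.map (MvPolynomial.map j)).IsPrime := by
  algebraize [j]
  let e := MvPolynomial.algebraTensorAlgEquiv (σ := σ) k M
  let f := Algebra.TensorProduct.map (AlgHom.id k M) (Ideal.Quotient.mkₐ k p)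
  have : IsDomain (M ⊗[k] (MvPolynomial σ k ⧸ p)) :=
    have := isDomain_tensorProduct_of_isAlgClosed k (MvPolynomial σ k ⧸ p) M
    (Algebra.TensorProduct.comm k M (MvPolynomial σ k ⧸ p)).toMulEquiv.isDomain _
  have hker : RingHom.ker f = p.map Algebra.TensorProduct.includeRight := by
    rw [Algebra.TensorProduct.lTensor_ker _ (Ideal.Quotient.mkₐ_surjective k p)]
    exact congrArg _ (Ideal.Quotient.mkₐ_ker k p)
  have hmap : p.map (MvPolynomial.map j) = (RingHom.ker f).map e := by
    have hcomp : (e : M ⊗[k] MvPolynomial σ k →+* MvPolynomial σ M).comp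
        (Algebra.TensorProduct.includeRight : _ →ₐ[k] M ⊗[k] MvPolynomial σ k).toRingHom =
          MvPolynomial.map j := by
      ext <;> simp [e, RingHom.algebraMap_toAlgebra]
    rw [hker, ← hcomp, ← Ideal.map_map]
    rfl
  rw [hmap]
  have := RingHom.ker_isPrime f
  exact Ideal.map_isPrime_of_equiv e

end GeometricIntegrality

section GeometricFibres

variable {A B σ : Type*} [CommRing A] [CommRing B]

/-- The geometric point of `Spec A` over a prime `Q`: the canonical homomorphism from `A` to an
algebraic closure of the residue field of `Q`. -/
noncomputable def geometricPoint (Q : Ideal A) [Q.IsPrime] :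
    A →+* AlgebraicClosure Q.ResidueField :=
  (algebraMap Q.ResidueField _).comp (algebraMap A Q.ResidueField)

theorem ker_geometricPoint (Q : Ideal A) [Q.IsPrime] : RingHom.ker (geometricPoint Q) = Q := by
  ext a
  rw [RingHom.mem_ker, geometricPoint, RingHom.comp_apply,
    map_eq_zero_iff _ (algebraMap Q.ResidueField (AlgebraicClosure _)).injective,
    Ideal.algebraMap_residueField_eq_zero]

theorem exists_algebraicClosure_lift {k l : Type*} [Field k] [Field l] (r : k →+* l) :
    ∃ j : AlgebraicClosure k →+* AlgebraicClosure l,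
      j.comp (algebraMap k _) = (algebraMap l _).comp r := by
  algebraize [(algebraMap l (AlgebraicClosure l)).comp r]
  exact ⟨(IsAlgClosed.lift : AlgebraicClosure k →ₐ[k] AlgebraicClosure l), AlgHom.comp_algebraMap _⟩

theorem exists_comp_geometricPoint_eq (φ : A →+* B) {Q : Ideal A} [Q.IsPrime] {P : Ideal B}
    [P.IsPrime] (h : P.comap φ = Q) :
    ∃ j : AlgebraicClosure Q.ResidueField →+* AlgebraicClosure P.ResidueField,
      j.comp (geometricPoint Q) = (geometricPoint P).comp φ := by
  obtain ⟨j, hj⟩ := exists_algebraicClosure_lift (Ideal.ResidueField.map Q P φ h.symm)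
  refine ⟨j, RingHom.ext fun a => ?_⟩
  simpa [geometricPoint] using RingHom.congr_fun hj (algebraMap A _ a)

/-- The ideal cut out by `𝔣` in the polynomial ring over the geometric point at `Q`; its zero locus
is the geometric fibre at `Q` of the family over `Spec A` defined by `𝔣`. -/
noncomputable def geometricFibre (Q : Ideal A) [Q.IsPrime] (𝔣 : Ideal (MvPolynomial σ A)) :
    Ideal (MvPolynomial σ (AlgebraicClosure Q.ResidueField)) :=
  𝔣.map (MvPolynomial.map (geometricPoint Q))

theorem exists_isPrime_comap_map_geometricPoint_eq {P : Ideal (MvPolynomial σ A)} [P.IsPrime]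
    {P' : Ideal A} [P'.IsPrime] (hP : P.comap C = P') :
    ∃ 𝔭 : Ideal (MvPolynomial σ (AlgebraicClosure P'.ResidueField)),
      𝔭.IsPrime ∧ 𝔭.comap (MvPolynomial.map (geometricPoint P')) = P := by
  obtain ⟨j, hj⟩ := exists_comp_geometricPoint_eq C hP
  let θ := eval₂Hom j fun i => geometricPoint P (X i)
  have hθ : θ.comp (MvPolynomial.map (geometricPoint P')) = geometricPoint P := by
    ext i
    · simpa [θ] using RingHom.congr_fun hj i
    · simp [θ]
  exact ⟨RingHom.ker θ, RingHom.ker_isPrime θ, by rw [RingHom.comap_ker, hθ, ker_geometricPoint]⟩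

theorem exists_minimalPrimes_comap_map_eq {k M : Type*} [Finite σ] [Field k] [IsAlgClosed k]
    [CommRing M] [IsDomain M] {φ : A →+* B} {ι₀ : A →+* k} {ι : B →+* M} {j : k →+* M}
    (hj : j.comp ι₀ = ι.comp φ) {𝔣 : Ideal (MvPolynomial σ A)} {P : Ideal (MvPolynomial σ B)}
    (hP : P ∈ ((RingHom.ker ι).map C ⊔ 𝔣.map (MvPolynomial.map φ)).minimalPrimes)
    {𝔭 : Ideal (MvPolynomial σ M)} [𝔭.IsPrime] (h𝔭 : 𝔭.comap (MvPolynomial.map ι) = P) :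
    ∃ p ∈ (𝔣.map (MvPolynomial.map ι₀)).minimalPrimes,
      (p.map (MvPolynomial.map j)).comap (MvPolynomial.map ι) = P := by
  have hmap : (MvPolynomial.map (σ := σ) j).comp (MvPolynomial.map ι₀) =
      (MvPolynomial.map ι).comp (MvPolynomial.map φ) := by
    refine MvPolynomial.ringHom_ext (fun a => ?_) fun i => by simp
    simpa using RingHom.congr_fun hj a
  have h𝔣P : 𝔣.map (MvPolynomial.map φ) ≤ P := le_sup_right.trans hP.1.2
  have h𝔣𝔭 : 𝔣.map (MvPolynomial.map ι₀) ≤ 𝔭.comap (MvPolynomial.map j) := by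
    rw [← h𝔭] at h𝔣P
    rwa [← Ideal.map_le_iff_le_comap, Ideal.map_map, hmap, ← Ideal.map_map,
      Ideal.map_le_iff_le_comap]
  obtain ⟨p, hp, hp𝔭⟩ := Ideal.exists_minimalPrimes_le h𝔣𝔭
  have := hp.1.1
  have := isPrime_map_map_of_isAlgClosed j p
  refine ⟨p, hp, le_antisymm ?_ (hP.2 ⟨inferInstance, sup_le ?_ ?_⟩ ?_)⟩
  · exact h𝔭 ▸ Ideal.comap_mono (Ideal.map_le_iff_le_comap.2 hp𝔭)
  · refine Ideal.map_le_iff_le_comap.2 fun b hb => ?_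
    simp [Ideal.mem_comap, RingHom.mem_ker.1 hb]
  · rw [← Ideal.map_le_iff_le_comap, Ideal.map_map, ← hmap, ← Ideal.map_map]
    exact Ideal.map_mono hp.1.2
  · exact h𝔭 ▸ Ideal.comap_mono (Ideal.map_le_iff_le_comap.2 hp𝔭)

theorem ncard_minimalPrimes_over_le_geometricFibre [Finite σ] (φ : A →+* B)
    (𝔣 : Ideal (MvPolynomial σ A)) {Q : Ideal A} [Q.IsPrime] {P' : Ideal B} [P'.IsPrime]
    (hQ : P'.comap φ = Q) :
    {P ∈ (P'.map C ⊔ 𝔣.map (MvPolynomial.map φ)).minimalPrimes | P.comap C = P'}.ncard ≤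
      (geometricFibre Q 𝔣).minimalPrimes.ncard := by
  obtain ⟨j, hj⟩ := exists_comp_geometricPoint_eq φ hQ
  have hfin := Ideal.finite_minimalPrimes_of_isNoetherianRing _ (geometricFibre Q 𝔣)
  refine (Set.ncard_le_ncard (t := (fun p => (p.map (MvPolynomial.map j)).comap
    (MvPolynomial.map (geometricPoint P'))) '' (geometricFibre Q 𝔣).minimalPrimes) ?_
      (hfin.image _)).trans (Set.ncard_image_le hfin)
  rintro P ⟨hP, hPP'⟩
  have := hP.1.1
  obtain ⟨𝔭, _, h𝔭⟩ := exists_isPrime_comap_map_geometricPoint_eq hPP'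
  rw [← ker_geometricPoint P'] at hP
  exact exists_minimalPrimes_comap_map_eq hj hP h𝔭

end GeometricFibres

theorem exists_pow_mul_mem_of_mem_minimalPrimes {R : Type*} [CommRing R] {I P : Ideal R}
    (hP : P ∈ I.minimalPrimes) {q : R} (hq : q ∈ P) : ∃ k : ℕ, ∃ s ∉ P, q ^ k * s ∈ I := by
  have := hP.1.1
  obtain ⟨k, hk⟩ := (IsLocalization.AtPrime.radical_map_of_mem_minimalPrimes
    (Localization.AtPrime P) P I hP).ge (Ideal.mem_map_of_mem _ hq)
  rw [← map_pow, IsLocalization.algebraMap_mem_map_algebraMap_iff P.primeCompl] at hk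
  obtain ⟨s, hs, hsq⟩ := hk
  exact ⟨k, s, hs, mul_comm s _ ▸ hsq⟩

section RelativeGroebnerBases

open scoped MonomialOrder

variable {σ A ω : Type*} [CommRing A] (m : MonomialOrder σ)

theorem monomialOrder_degree_induction {p : MvPolynomial σ A → Prop} (zero : p 0)
    (step : ∀ f, (∀ g, (g ≠ 0 → m.degree g ≺[m] m.degree f) → p g) → p f)
    (f : MvPolynomial σ A) : p f := by
  induction h : m.toSyn (m.degree f) using WellFoundedLT.induction generalizing f with
  | ind d ih =>
    subst h
    refine step f fun g hg => ?_
    obtain rfl | hg0 := eq_or_ne g 0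
    exacts [zero, ih _ (hg hg0) g rfl]

theorem exists_pseudoRemainder (F : ω → MvPolynomial σ A) (S : MvPolynomial σ A) :
    ∃ s ∈ Submonoid.closure (Set.range fun w => m.leadingCoeff (F w)), ∃ R : MvPolynomial σ A,
      (∀ v ∈ R.support, ∀ w, ¬ m.degree (F w) ≤ v) ∧
        C s * S - R ∈ Ideal.span (Set.range F) := by
  classical
  induction S using monomialOrder_degree_induction m with
  | zero => exact ⟨1, one_mem _, 0, by simp, by simp⟩
  | step S ih =>
    by_cases hS : ∃ w, m.degree (F w) ≤ m.degree S
    · obtain ⟨w, hw⟩ := hS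
      obtain ⟨s, hs, R, hR, hmem⟩ := ih (m.sPolynomial S (F w)) fun h => by
        simpa only [sup_eq_left.2 hw] using m.degree_sPolynomial_lt_sup_degree h
      refine ⟨s * m.leadingCoeff (F w), mul_mem hs (Submonoid.subset_closure ⟨w, rfl⟩), R, hR, ?_⟩
      rw [MonomialOrder.sPolynomial, tsub_eq_zero_of_le hw] at hmem
      have hF := Ideal.mul_mem_left _ (C s * monomial (m.degree S - m.degree (F w))
        (m.leadingCoeff S)) (Ideal.subset_span (Set.mem_range_self (f := F) w))
      convert add_mem hmem hF using 1
      simp only [C_mul, monomial_zero']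
      ring
    · obtain ⟨s, hs, R, hR, hmem⟩ := ih (S - m.leadingTerm S) fun h =>
        m.degree_sub_leadingTerm_lt_degree (m.degree_ne_zero_of_sub_leadingTerm_ne_zero h)
      refine ⟨s, hs, R + C s * m.leadingTerm S, fun v hv w hwv => ?_, ?_⟩
      · by_cases hvR : v ∈ R.support
        · exact hR v hvR w hwv
        · have hvS : m.degree S = v := by
            by_contra hne
            simp [MonomialOrder.leadingTerm, notMem_support_iff.1 hvR, coeff_C_mul, coeff_monomial,
              hne] at hv
          exact hS ⟨w, hvS ▸ hwv⟩
      · convert hmem using 1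
        ring

/-- `F` is a Gröbner basis of `𝔟` relative to an ideal `J` of the coefficient ring: `𝔟` contains
`J` and `F`, and the leading monomials of the elements of `𝔟` whose leading coefficient is nonzero
modulo `J` are multiples of leading monomials of `F`. The leading coefficients of `F` need not be
units, so that dividing by `F` multiplies the dividend by a product of them. -/
structure IsRelGroebnerBasis (J : Ideal A) (𝔟 : Ideal (MvPolynomial σ A))
    (F : ω → MvPolynomial σ A) : Prop where
  map_le : J.map C ≤ 𝔟
  mem : ∀ w, F w ∈ 𝔟
  exists_degree_le : ∀ G ∈ 𝔟, m.leadingCoeff G ∉ J → ∃ w, m.degree (F w) ≤ m.degree G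

namespace IsRelGroebnerBasis

variable {m} {J : Ideal A} {𝔟 : Ideal (MvPolynomial σ A)} {F : ω → MvPolynomial σ A}

theorem span_le (h : IsRelGroebnerBasis m J 𝔟 F) : Ideal.span (Set.range F) ≤ 𝔟 :=
  Ideal.span_le.2 (Set.range_subset_iff.2 h.mem)

theorem mem_map_of_reduced (h : IsRelGroebnerBasis m J 𝔟 F) {R : MvPolynomial σ A} (hR : R ∈ 𝔟)
    (hred : ∀ v ∈ R.support, ∀ w, ¬ m.degree (F w) ≤ v) : R ∈ J.map C := by
  classical
  induction R using monomialOrder_degree_induction m with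
  | zero => exact zero_mem _
  | step R ih =>
    have hlc : m.leadingCoeff R ∈ J := by
      by_contra hlc
      obtain ⟨w, hw⟩ := h.exists_degree_le R hR hlc
      refine hred _ (m.degree_mem_support ?_) w hw
      rintro rfl
      simp at hlc
    have hlt : m.leadingTerm R ∈ J.map C := by
      rw [MonomialOrder.leadingTerm, ← mul_one (m.leadingCoeff R), ← C_mul_monomial]
      exact Ideal.mul_mem_right _ _ (Ideal.mem_map_of_mem C hlc)
    have hsupp : (R - m.leadingTerm R).support ⊆ R.support := fun v hv => by
      rw [mem_support_iff, coeff_sub, MonomialOrder.leadingTerm, coeff_monomial] at hv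
      split_ifs at hv with hd
      · simp [← hd, MonomialOrder.leadingCoeff] at hv
      · simpa using hv
    rw [← sub_add_cancel R (m.leadingTerm R)]
    refine add_mem (ih _ (fun hne => ?_) (sub_mem hR (h.map_le hlt)) fun v hv => ?_) hlt
    · exact m.degree_sub_leadingTerm_lt_degree (m.degree_ne_zero_of_sub_leadingTerm_ne_zero hne)
    · exact hred v (hsupp hv)

theorem exists_pseudoRemainder (h : IsRelGroebnerBasis m J 𝔟 F) {P : Ideal (MvPolynomial σ A)}
    [P.IsPrime] (hlc : ∀ w, C (m.leadingCoeff (F w)) ∉ P) {q : A} {S : MvPolynomial σ A}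
    (hqS : C q * S ∈ 𝔟) :
    ∃ s : A, C s ∉ P ∧ ∃ R, C s * S - R ∈ Ideal.span (Set.range F) ∧ C q * R ∈ J.map C := by
  obtain ⟨s, hs, R, hred, hmem⟩ := _root_.exists_pseudoRemainder m F S
  have hclosure : Submonoid.closure (Set.range fun w => m.leadingCoeff (F w)) ≤
      (P.comap C).primeCompl := Submonoid.closure_le.2 (Set.range_subset_iff.2 hlc)
  refine ⟨s, hclosure hs, R, hmem, h.mem_map_of_reduced ?_ fun v hv => hred v ?_⟩
  · convert sub_mem (𝔟.mul_mem_left (C s) hqS) (𝔟.mul_mem_left (C q) (h.span_le hmem)) using 1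
    ring
  · rw [mem_support_iff, coeff_C_mul] at hv
    exact mem_support_iff.2 (right_ne_zero_of_mul hv)

theorem comap_C_mem_minimalPrimes (h : IsRelGroebnerBasis m J 𝔟 F) {P : Ideal (MvPolynomial σ A)}
    (hP : P ∈ 𝔟.minimalPrimes) (hlc : ∀ w, C (m.leadingCoeff (F w)) ∉ P) :
    P.comap C ∈ J.minimalPrimes := by
  have := hP.1.1
  refine ⟨⟨inferInstance, Ideal.map_le_iff_le_comap.1 (h.map_le.trans hP.1.2)⟩, ?_⟩
  rintro Q ⟨hQ, hJQ⟩ hQP q hq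
  obtain ⟨k, S, hS, hqS⟩ := exists_pow_mul_mem_of_mem_minimalPrimes hP hq
  rw [← map_pow] at hqS
  obtain ⟨s, hs, R, hmem, hqR⟩ := h.exists_pseudoRemainder hlc hqS
  by_contra hqQ
  have hRQ : R ∈ Q.map C := mem_map_C_iff.2 fun v => by
    have hv := hJQ (mem_map_C_iff.1 hqR v)
    rw [coeff_C_mul] at hv
    exact (hQ.mem_or_mem hv).resolve_left fun h => hqQ (hQ.mem_of_pow_mem _ h)
  have hsS : C s * S ∈ P :=
    (P.sub_mem_iff_left (Ideal.map_le_iff_le_comap.2 hQP hRQ)).1 (hP.1.2 (h.span_le hmem))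
  exact (‹P.IsPrime›.mem_or_mem hsS).elim hs hS

theorem mem_minimalPrimes_sup_span (h : IsRelGroebnerBasis m J 𝔟 F)
    {P : Ideal (MvPolynomial σ A)} (hP : P ∈ 𝔟.minimalPrimes)
    (hlc : ∀ w, C (m.leadingCoeff (F w)) ∉ P) :
    P ∈ ((P.comap C).map C ⊔ Ideal.span (Set.range F)).minimalPrimes := by
  have := hP.1.1
  refine ⟨⟨this, sup_le Ideal.map_comap_le (h.span_le.trans hP.1.2)⟩, ?_⟩
  rintro P₀ ⟨hP₀, hle⟩ hP₀P
  refine hP.2 ⟨hP₀, fun S hS => ?_⟩ hP₀P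
  obtain ⟨s, hs, R, hmem, hR⟩ := h.exists_pseudoRemainder hlc (q := 1) (by simpa using hS)
  have hJP : J.map C ≤ P₀ := (Ideal.map_mono
    (Ideal.map_le_iff_le_comap.1 (h.map_le.trans hP.1.2))).trans (le_sup_left.trans hle)
  have hsS : C s * S ∈ P₀ :=
    (P₀.sub_mem_iff_left (hJP (by simpa using hR))).1 (hle (Ideal.mem_sup_right hmem))
  exact (hP₀.mem_or_mem hsS).resolve_left fun h => hs (hP₀P h)

end IsRelGroebnerBasis

end RelativeGroebnerBases

section ExponentialGrowth

open Filter

/-- At most exponential growth: `f n ≤ C ^ n` for some constant `C` and all large `n`. -/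
def IsExpBounded (f : ℕ → ℕ) : Prop :=
  ∃ C : ℕ, ∀ᶠ n in atTop, f n ≤ C ^ n

namespace IsExpBounded

variable {f g : ℕ → ℕ}

theorem mono (hf : IsExpBounded f) (hgf : ∀ᶠ n in atTop, g n ≤ f n) : IsExpBounded g := by
  obtain ⟨C, hC⟩ := hf
  exact ⟨C, (hgf.and hC).mono fun _ h => h.1.trans h.2⟩

theorem add (hf : IsExpBounded f) (hg : IsExpBounded g) : IsExpBounded fun n => f n + g n := by
  obtain ⟨C, hC⟩ := hf
  obtain ⟨D, hD⟩ := hg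
  refine ⟨C + D, ?_⟩
  filter_upwards [hC, hD, eventually_ne_atTop 0] with n hCn hDn hn
  exact (add_le_add hCn hDn).trans (pow_add_pow_le (Nat.zero_le _) (Nat.zero_le _) hn)

theorem mul (hf : IsExpBounded f) (hg : IsExpBounded g) : IsExpBounded fun n => f n * g n := by
  obtain ⟨C, hC⟩ := hf
  obtain ⟨D, hD⟩ := hg
  refine ⟨C * D, ?_⟩
  filter_upwards [hC, hD] with n hCn hDn
  exact (Nat.mul_le_mul hCn hDn).trans_eq (mul_pow C D n).symm

theorem sum {α : Type*} (s : Finset α) {f : α → ℕ → ℕ} (hf : ∀ a ∈ s, IsExpBounded (f a)) :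
    IsExpBounded fun n => ∑ a ∈ s, f a n := by
  classical
  induction s using Finset.induction_on with
  | empty => exact ⟨0, by simp⟩
  | insert a s ha ih =>
    simp only [Finset.sum_insert ha]
    exact (hf a (s.mem_insert_self a)).add (ih fun b hb => hf b (Finset.mem_insert_of_mem hb))

theorem pow_const (k : ℕ) : IsExpBounded fun n => n ^ k :=
  ⟨2 ^ k, .of_forall fun n => by
    rw [← pow_mul, mul_comm, pow_mul]
    exact Nat.pow_le_pow_left Nat.lt_two_pow_self.le k⟩

theorem of_succ_le_mul {E : ℕ} (h : ∀ᶠ n in atTop, f (n + 1) ≤ E * f n) : IsExpBounded f := by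
  obtain ⟨n₀, hn₀⟩ := eventually_atTop.1 h
  refine ⟨f (n₀ + 1) + E, eventually_atTop.2 ⟨n₀ + 1, fun n hn => ?_⟩⟩
  induction n, hn using Nat.le_induction with
  | base => exact (Nat.le_add_right _ _).trans (Nat.le_self_pow n₀.succ_ne_zero _)
  | succ n hn ih =>
    rw [pow_succ']
    exact (hn₀ n (n₀.le_succ.trans hn)).trans (Nat.mul_le_mul (Nat.le_add_left _ _) ih)

end IsExpBounded

end ExponentialGrowth

section WideMatrixChains

variable {K ρ : Type*} [CommRing K]

/-- The coordinate ring of the space of matrices with rows indexed by `ρ` and `n` columns. -/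
abbrev MatrixRing (K ρ : Type*) [CommRing K] (n : ℕ) : Type _ := MvPolynomial (ρ × Fin n) K

/-- The map between the coordinate rings of matrices that relabels the columns along `σ`. -/
noncomputable def columnMap {m n : ℕ} (σ : Fin m ↪ Fin n) : MatrixRing K ρ m →+* MatrixRing K ρ n :=
  (rename (Prod.map id σ)).toRingHom

theorem columnMap_apply {m n : ℕ} (σ : Fin m ↪ Fin n) (f : MatrixRing K ρ m) :
    columnMap σ f = rename (Prod.map id σ) f := rfl

theorem columnMap_columnMap {k m n : ℕ} (σ : Fin k ↪ Fin m) (τ : Fin m ↪ Fin n)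
    (f : MatrixRing K ρ k) : columnMap τ (columnMap σ f) = columnMap (σ.trans τ) f := by
  simp only [columnMap_apply, rename_rename, Prod.map_comp_map, Function.comp_id,
    Function.Embedding.coe_trans]

theorem columnMap_comp {k m n : ℕ} (σ : Fin k ↪ Fin m) (τ : Fin m ↪ Fin n) :
    (columnMap τ).comp (columnMap σ) = columnMap (K := K) (ρ := ρ) (σ.trans τ) :=
  RingHom.ext (columnMap_columnMap σ τ)

theorem columnMap_refl {n : ℕ} (f : MatrixRing K ρ n) : columnMap (.refl _) f = f := by
  rw [columnMap_apply, Function.Embedding.coe_refl, Prod.map_id, rename_id_apply]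

theorem columnMap_injective {m n : ℕ} (σ : Fin m ↪ Fin n) :
    Function.Injective (columnMap (K := K) (ρ := ρ) σ) :=
  rename_injective _ (Function.injective_id.prodMap σ.injective)

theorem columnMap_perm_surjective {n : ℕ} (π : Equiv.Perm (Fin n)) :
    Function.Surjective (columnMap (K := K) (ρ := ρ) π.toEmbedding) := fun f =>
  ⟨columnMap π.symm.toEmbedding f, by
    rw [columnMap_columnMap, ← Equiv.trans_toEmbedding, Equiv.symm_trans_self,
      Equiv.refl_toEmbedding, columnMap_refl]⟩

theorem exists_perm_trans_eq {m n : ℕ} (σ τ : Fin m ↪ Fin n) :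
    ∃ π : Equiv.Perm (Fin n), σ.trans π.toEmbedding = τ :=
  (Equiv.Perm.isMultiplyPretransitive (Fin n) m).exists_smul_eq σ τ

/-- A symmetric chain of ideals in the coordinate rings of wide matrices, encoded by stability
under all injections of the columns: these are the inclusions followed by permutations. -/
@[ext]
structure WideMatrixChain (K ρ : Type*) [CommRing K] where
  toFun : ∀ n, Ideal (MatrixRing K ρ n)
  le_comap' : ∀ {m n} (σ : Fin m ↪ Fin n), toFun m ≤ (toFun n).comap (columnMap σ)

namespace WideMatrixChain

instance : CoeFun (WideMatrixChain K ρ) fun _ => ∀ n, Ideal (MatrixRing K ρ n) := ⟨toFun⟩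

noncomputable instance : PartialOrder (WideMatrixChain K ρ) :=
  PartialOrder.lift toFun fun _ _ => WideMatrixChain.ext

theorem map_mem (I : WideMatrixChain K ρ) {m n : ℕ} (σ : Fin m ↪ Fin n) {f : MatrixRing K ρ m}
    (hf : f ∈ I m) : columnMap σ f ∈ I n :=
  I.le_comap' σ hf

theorem comap_perm (I : WideMatrixChain K ρ) {n : ℕ} (π : Equiv.Perm (Fin n)) :
    (I n).comap (columnMap π.toEmbedding) = I n := by
  refine le_antisymm (fun f hf => ?_) fun f hf => I.map_mem _ hf
  have := I.map_mem π.symm.toEmbedding hf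
  rwa [columnMap_columnMap, ← Equiv.trans_toEmbedding, Equiv.self_trans_symm,
    Equiv.refl_toEmbedding, columnMap_refl] at this

/-- The chain with members `I n`, when these are stable under permutations and increasing. -/
noncomputable def ofSymmetric (I : ∀ n, Ideal (MatrixRing K ρ n))
    (hsym : ∀ (n : ℕ) (π : Equiv.Perm (Fin n)), (I n).map (rename (Prod.map (id : ρ → ρ) π)) = I n)
    (hincl : ∀ n, (I n).map (rename (Prod.map (id : ρ → ρ) Fin.castSucc)) ≤ I (n + 1)) :
    WideMatrixChain K ρ where
  toFun := I
  le_comap' {m n} σ f hf := by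
    rw [Ideal.mem_comap]
    have hmn : m ≤ n := by simpa using Fintype.card_le_of_embedding σ
    have hcast : columnMap (Fin.castLEEmb hmn) f ∈ I n := by
      clear σ
      induction n, hmn using Nat.le_induction with
      | base => exact (columnMap_refl f).symm ▸ hf
      | succ n hmn ih =>
        have := hincl n (Ideal.mem_map_of_mem _ ih)
        rwa [← Fin.coe_castSuccEmb, ← columnMap_apply, columnMap_columnMap] at this
    obtain ⟨π, rfl⟩ := exists_perm_trans_eq (Fin.castLEEmb hmn) σ
    rw [← columnMap_columnMap, ← hsym n π]
    exact Ideal.mem_map_of_mem _ hcast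

/-- The smallest chain that contains `I` and the polynomial `g` in `k` columns. -/
noncomputable def adjoin (I : WideMatrixChain K ρ) {k : ℕ} (g : MatrixRing K ρ k) :
    WideMatrixChain K ρ where
  toFun n := I n ⊔ Ideal.span (Set.range fun σ : Fin k ↪ Fin n => columnMap σ g)
  le_comap' {m n} τ := by
    refine sup_le (fun f hf => Ideal.mem_sup_left (I.map_mem τ hf)) (Ideal.span_le.2 ?_)
    rintro _ ⟨σ, rfl⟩
    refine Ideal.mem_sup_right (Ideal.subset_span ⟨σ.trans τ, ?_⟩)
    exact (columnMap_columnMap σ τ g).symm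

theorem lt_adjoin (I : WideMatrixChain K ρ) {k : ℕ} {g : MatrixRing K ρ k} (hg : g ∉ I k) :
    I < I.adjoin g :=
  lt_of_le_not_ge (fun _ => le_sup_left) fun h =>
    hg (h k (Ideal.mem_sup_right (Ideal.subset_span ⟨.refl _, columnMap_refl g⟩)))

theorem mem_minimalPrimes_adjoin (I : WideMatrixChain K ρ) {k n : ℕ} {g : MatrixRing K ρ k}
    {P : Ideal (MatrixRing K ρ n)} (hP : P ∈ (I n).minimalPrimes)
    (hg : ∀ σ : Fin k ↪ Fin n, columnMap σ g ∈ P) : P ∈ (I.adjoin g n).minimalPrimes :=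
  ⟨⟨hP.1.1, sup_le hP.1.2 (Ideal.span_le.2 (Set.range_subset_iff.2 hg))⟩,
    fun _ hQ hQP => hP.2 ⟨hQ.1, le_sup_left.trans hQ.2⟩ hQP⟩

end WideMatrixChain

end WideMatrixChains

theorem wellFoundedGT_of_wellQuasiOrdered {α β : Type*} {r : α → α → Prop} [IsPreorder α r]
    (hr : WellQuasiOrdered r) [PartialOrder β] [WellFoundedGT β] :
    WellFoundedGT {L : α → β // ∀ a b, r a b → L a ≤ L b} := by
  refine isWellFounded_iff _ _ |>.2 (RelEmbedding.wellFounded_iff_isEmpty.2 ⟨fun e => ?_⟩)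
  have he : StrictMono e := fun i j hij => e.map_rel_iff.2 hij
  have hgrow : ∀ k, ∃ a, ¬ (e (k + 1)).1 a ≤ (e k).1 a := fun k =>
    not_forall.1 (he k.lt_succ_self).not_ge
  choose a ha using hgrow
  obtain ⟨g, hg⟩ := hr.exists_monotone_subseq a
  refine not_strictMono_of_wellFoundedGT (fun i => (e (g i)).1 (a (g i))) fun i j hij => ?_
  have hsucc : (e (g i + 1)).1 (a (g i)) ≤ (e (g j)).1 (a (g j)) :=
    (he.monotone (g.strictMono hij) _).trans ((e (g j)).2 _ _ (hg i j hij.le))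
  exact lt_of_le_not_ge ((he.monotone (Nat.le_succ _) _).trans hsucc)
    fun h => ha (g i) (hsucc.trans h)

section LeadingCoefficientIdeals

open scoped MonomialOrder

variable {σ R : Type*} [CommRing R] (m : MonomialOrder σ)

/-- The ideal of the coefficients at `d` of the elements of `I` of degree at most `d`: zero and the
leading coefficients of the elements of `I` of degree `d`. -/
def leadingCoeffIdeal (I : Ideal (MvPolynomial σ R)) (d : σ →₀ ℕ) : Ideal R where
  carrier := {a | ∃ f ∈ I, m.degree f ≼[m] d ∧ coeff d f = a}
  add_mem' := by
    rintro _ _ ⟨f, hf, hfd, rfl⟩ ⟨g, hg, hgd, rfl⟩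
    exact ⟨f + g, add_mem hf hg, m.degree_add_le.trans (sup_le hfd hgd), coeff_add ..⟩
  zero_mem' := ⟨0, zero_mem I, by simp, coeff_zero d⟩
  smul_mem' := by
    rintro a _ ⟨f, hf, hfd, rfl⟩
    exact ⟨a • f, I.smul_of_tower_mem a hf, m.degree_smul_le.trans hfd, coeff_smul ..⟩

variable {m} {I J : Ideal (MvPolynomial σ R)}

theorem leadingCoeffIdeal_mono (h : I ≤ J) (d : σ →₀ ℕ) :
    leadingCoeffIdeal m I d ≤ leadingCoeffIdeal m J d :=
  fun _ ⟨f, hf, hfd⟩ => ⟨f, h hf, hfd⟩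

theorem le_of_leadingCoeffIdeal_le (hIJ : I ≤ J)
    (h : ∀ d, leadingCoeffIdeal m J d ≤ leadingCoeffIdeal m I d) : J ≤ I := fun f hf => by
  induction f using monomialOrder_degree_induction m with
  | zero => exact zero_mem I
  | step f ih =>
    obtain ⟨g, hg, hgf, hcoeff⟩ := h (m.degree f) ⟨f, hf, le_rfl, rfl⟩
    refine (I.sub_mem_iff_left hg).1 (ih _ (fun hne => ?_) (sub_mem hf (hIJ hg)))
    refine lt_of_le_of_ne (m.degree_sub_le.trans (sup_le le_rfl hgf)) fun heq => ?_
    refine mem_support_iff.1 (m.degree_mem_support hne) ?_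
    rw [m.toSyn.injective heq, coeff_sub, hcoeff, sub_self]

end LeadingCoefficientIdeals

section ColumnLex

open scoped MonomialOrder

variable {ρ : Type*} [LinearOrder ρ] [Finite ρ]

instance finite_prodLex {α β : Type*} [Finite α] [Finite β] : Finite (α ×ₗ β) :=
  inferInstanceAs (Finite (α × β))

/-- The lexicographic monomial order on matrices with `n` columns, the variables being ordered by
rows first. It is compatible with increasing relabellings of the columns. -/
noncomputable def columnLex (ρ : Type*) [LinearOrder ρ] [Finite ρ] (n : ℕ) :
    MonomialOrder (ρ × Fin n) where
  syn := Lex ((ρ ×ₗ Fin n) →₀ ℕ)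
  toSyn := (Finsupp.domCongr (toLex : _ ≃ ρ ×ₗ Fin n)).trans { toLex with map_add' := toLex_add }
  toSyn_monotone _ _ h := Finsupp.toLex_monotone (α := ρ ×ₗ Fin n) fun _ => h _

theorem columnLex_lt_iff {n : ℕ} {a b : ρ × Fin n →₀ ℕ} : a ≺[columnLex ρ n] b ↔
    ∃ i, (∀ j, toLex j < toLex i → a j = b j) ∧ a i < b i :=
  Iff.rfl

theorem columnLex_mapDomain_le {m n : ℕ} {σ : Fin m ↪ Fin n} (hσ : StrictMono σ)
    {a b : ρ × Fin m →₀ ℕ} (h : a ≼[columnLex ρ m] b) :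
    a.mapDomain (Prod.map id σ) ≼[columnLex ρ n] b.mapDomain (Prod.map id σ) := by
  have hinj := (Function.injective_id (α := ρ)).prodMap σ.injective
  obtain heq | hlt := h.eq_or_lt
  · rw [(columnLex ρ m).toSyn.injective heq]
  obtain ⟨i, heq, hi⟩ := columnLex_lt_iff.1 hlt
  refine (columnLex_lt_iff.2 ⟨Prod.map id σ i, fun j hj => ?_, ?_⟩).le
  · by_cases hr : j ∈ Set.range (Prod.map (id : ρ → ρ) σ)
    · obtain ⟨j, rfl⟩ := hr
      rw [Finsupp.mapDomain_apply hinj, Finsupp.mapDomain_apply hinj]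
      refine heq j ?_
      simpa [Prod.Lex.toLex_lt_toLex, hσ.lt_iff_lt] using hj
    · rw [Finsupp.mapDomain_of_notMem_range _ _ hr, Finsupp.mapDomain_of_notMem_range _ _ hr]
  · rwa [Finsupp.mapDomain_apply hinj, Finsupp.mapDomain_apply hinj]

variable {K : Type*} [CommRing K]

theorem degree_columnMap_le {m n : ℕ} {σ : Fin m ↪ Fin n} (hσ : StrictMono σ)
    (f : MatrixRing K ρ m) : (columnLex ρ n).degree (columnMap σ f) ≼[columnLex ρ n]
      ((columnLex ρ m).degree f).mapDomain (Prod.map id σ) := by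
  refine (columnLex ρ n).degree_le_iff.2 fun v hv => ?_
  obtain ⟨u, rfl, hu⟩ := coeff_rename_ne_zero _ _ _ (mem_support_iff.1 hv)
  exact columnLex_mapDomain_le hσ ((columnLex ρ m).le_degree (mem_support_iff.2 hu))

theorem leadingCoeffIdeal_le_of_mapDomain_le (I : WideMatrixChain K ρ) {m n : ℕ}
    {σ : Fin m ↪ Fin n} (hσ : StrictMono σ) {a : ρ × Fin m →₀ ℕ} {b : ρ × Fin n →₀ ℕ}
    (h : a.mapDomain (Prod.map id σ) ≤ b) :
    leadingCoeffIdeal (columnLex ρ m) (I m) a ≤ leadingCoeffIdeal (columnLex ρ n) (I n) b := by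
  rintro _ ⟨f, hf, hfa, rfl⟩
  obtain ⟨e, rfl⟩ := exists_add_of_le h
  refine ⟨monomial e 1 * columnMap σ f, Ideal.mul_mem_left _ _ (I.map_mem σ hf), ?_, ?_⟩
  · refine (columnLex ρ n).degree_mul_le.trans ?_
    rw [add_comm, map_add, map_add]
    exact add_le_add ((degree_columnMap_le hσ f).trans (columnLex_mapDomain_le hσ hfa))
      ((columnLex ρ n).degree_monomial_le 1)
  · rw [add_comm, coeff_monomial_mul, one_mul]
    exact coeff_rename_mapDomain _ (Function.injective_id.prodMap σ.injective) _ _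

end ColumnLex

section AscendingChainCondition

variable {ρ : Type*}

/-- The columns of an exponent matrix, read as a word over `ρ → ℕ`. -/
def columnWord {n : ℕ} (d : ρ × Fin n →₀ ℕ) : List (ρ → ℕ) := List.ofFn fun j i => d (i, j)

theorem exists_mapDomain_le_of_sublistForall₂ {m n : ℕ} {a : ρ × Fin m →₀ ℕ} {b : ρ × Fin n →₀ ℕ}
    (h : List.SublistForall₂ (· ≤ ·) (columnWord a) (columnWord b)) :
    ∃ σ : Fin m ↪ Fin n, StrictMono σ ∧ a.mapDomain (Prod.map id σ) ≤ b := by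
  obtain ⟨l, hal, hlb⟩ := List.sublistForall₂_iff.1 h
  obtain ⟨f, hf⟩ := List.sublist_iff_exists_fin_orderEmbedding_get_eq.1 hlb
  have hm : m = l.length := by simpa [columnWord] using hal.length_eq
  have hn : (columnWord b).length = n := by simp [columnWord]
  let σ : Fin m ↪o Fin n := (Fin.castOrderIso hm).toOrderEmbedding.trans
    (f.trans (Fin.castOrderIso hn).toOrderEmbedding)
  have hσ : ∀ i j, a (i, j) ≤ b (i, σ j) := fun i j => by
    have hj := (List.forall₂_iff_get.1 hal).2 j (by simp [columnWord]) (hm ▸ j.2) i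
    have hij := hj.trans_eq (congrFun (hf (Fin.cast hm j)) i)
    simp only [columnWord, List.get_ofFn] at hij
    exact hij
  refine ⟨σ.toEmbedding, σ.strictMono, fun x => ?_⟩
  by_cases hx : x ∈ Set.range (Prod.map (id : ρ → ρ) σ)
  · obtain ⟨⟨i, j⟩, rfl⟩ := hx
    exact (Finsupp.mapDomain_apply (Function.injective_id.prodMap σ.injective) a (i, j)).trans_le
      (hσ i j)
  · exact (Finsupp.mapDomain_of_notMem_range a x hx).trans_le (Nat.zero_le _)

theorem wellQuasiOrdered_sublistForall₂ {α : Type*} [Preorder α] [WellQuasiOrderedLE α] :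
    WellQuasiOrdered (List.SublistForall₂ (α := α) (· ≤ ·)) := by
  have := Set.PartiallyWellOrderedOn.partiallyWellOrderedOn_sublistForall₂ (α := α) (· ≤ ·)
    (Set.isPWO_of_wellQuasiOrderedLE Set.univ)
  simpa [Set.partiallyWellOrderedOn_univ_iff] using this

theorem WideMatrixChain.wellFoundedGT (K ρ : Type*) [CommRing K] [IsNoetherianRing K]
    [LinearOrder ρ] [Finite ρ] : WellFoundedGT (WideMatrixChain K ρ) := by
  let r : (Σ n, ρ × Fin n →₀ ℕ) → (Σ n, ρ × Fin n →₀ ℕ) → Prop :=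
    fun a b => List.SublistForall₂ (· ≤ ·) (columnWord a.2) (columnWord b.2)
  have : IsPreorder _ r :=
    { refl a := List.SublistForall₂.is_refl.refl _
      trans a b c := List.SublistForall₂.is_trans.trans _ _ _ }
  have hr : WellQuasiOrdered r := fun f =>
    wellQuasiOrdered_sublistForall₂ fun k => columnWord (f k).2
  have := wellFoundedGT_of_wellQuasiOrdered hr (β := Ideal K)
  let L (I : WideMatrixChain K ρ) : {L : (Σ n, ρ × Fin n →₀ ℕ) → Ideal K //
      ∀ a b, r a b → L a ≤ L b} :=
    ⟨fun a => leadingCoeffIdeal (columnLex ρ a.1) (I a.1) a.2, fun a b hab =>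
      have ⟨_, hσ, hle⟩ := exists_mapDomain_le_of_sublistForall₂ hab
      leadingCoeffIdeal_le_of_mapDomain_le I hσ hle⟩
  refine StrictMono.wellFoundedGT (f := L) fun I J hIJ => ?_
  refine lt_of_le_not_ge (fun a => leadingCoeffIdeal_mono (hIJ.le a.1) a.2) fun h => ?_
  exact hIJ.not_ge fun n => le_of_leadingCoeffIdeal_le (hIJ.le n) fun d => h ⟨n, d⟩

end AscendingChainCondition

section AppendColumn

variable {K ρ : Type*} [CommRing K]

/-- The presentation of the coordinate ring of matrices with `n + 1` columns as a polynomial ring,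
in the variables of the last column, over the one of matrices with `n` columns. -/
noncomputable def appendColumn {n : ℕ} :
    MvPolynomial ρ (MatrixRing K ρ n) →+* MatrixRing K ρ (n + 1) :=
  eval₂Hom (columnMap Fin.castSuccEmb) fun i => X (i, Fin.last n)

theorem appendColumn_C {n : ℕ} (a : MatrixRing K ρ n) :
    appendColumn (C a) = columnMap Fin.castSuccEmb a :=
  eval₂Hom_C ..

theorem appendColumn_surjective {n : ℕ} :
    Function.Surjective (appendColumn (K := K) (ρ := ρ) (n := n)) := fun p => by
  induction p using MvPolynomial.induction_on with
  | C r => exact ⟨C (C r), by rw [appendColumn_C, columnMap_apply, rename_C]⟩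
  | add p q hp hq =>
    obtain ⟨⟨p, rfl⟩, q, rfl⟩ := And.intro hp hq
    exact ⟨p + q, map_add ..⟩
  | mul_X p x hp =>
    obtain ⟨p, rfl⟩ := hp
    obtain ⟨i, j⟩ := x
    induction j using Fin.lastCases with
    | last => exact ⟨p * X i, by rw [map_mul, appendColumn, eval₂Hom_X']⟩
    | cast j =>
      refine ⟨p * C (X (i, j)), ?_⟩
      rw [map_mul, appendColumn_C, columnMap_apply, rename_X]
      rfl

/-- The injection of columns that extends `σ` by sending the last column to the last column. -/
def extendLast {m n : ℕ} (σ : Fin m ↪ Fin n) : Fin (m + 1) ↪ Fin (n + 1) :=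
  Fin.Embedding.snoc (σ.trans Fin.castSuccEmb) (a := Fin.last n) fun ⟨j, hj⟩ =>
    Fin.castSucc_ne_last (σ j) hj

theorem appendColumn_map_columnMap {m n : ℕ} (σ : Fin m ↪ Fin n)
    (F : MvPolynomial ρ (MatrixRing K ρ m)) :
    appendColumn (map (columnMap σ) F) = columnMap (extendLast σ) (appendColumn F) := by
  have hσ : Fin.castSuccEmb.trans (extendLast σ) = σ.trans Fin.castSuccEmb := by
    ext j
    simp [extendLast]
  have h : (appendColumn.comp (map (columnMap σ)) : MvPolynomial ρ (MatrixRing K ρ m) →+* _) =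
      (columnMap (extendLast σ)).comp appendColumn := by
    refine ringHom_ext (fun a => ?_) fun i => ?_
    · simp only [RingHom.comp_apply, map_C, appendColumn_C, columnMap_columnMap, hσ]
    · simp [appendColumn, columnMap_apply, extendLast]
  exact RingHom.congr_fun h F

end AppendColumn

section CoefficientMaps

variable {σ A B : Type*} [CommRing A] [CommRing B] (m : MonomialOrder σ) {φ : A →+* B}

theorem degree_map_of_injective (hφ : Function.Injective φ) (F : MvPolynomial σ A) :
    m.degree (map φ F) = m.degree F := by
  rw [MonomialOrder.degree, MonomialOrder.degree, support_map_of_injective _ hφ]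

theorem leadingCoeff_map_of_injective (hφ : Function.Injective φ) (F : MvPolynomial σ A) :
    m.leadingCoeff (map φ F) = φ (m.leadingCoeff F) := by
  rw [MonomialOrder.leadingCoeff, MonomialOrder.leadingCoeff, degree_map_of_injective m hφ,
    coeff_map]

end CoefficientMaps

namespace WideMatrixChain

variable {K ρ : Type*} [CommRing K] (I : WideMatrixChain K ρ)

/-- The ideal `I (n + 1)`, seen in the polynomial ring in the variables of the last column. -/
noncomputable def columnIdeal (n : ℕ) : Ideal (MvPolynomial ρ (MatrixRing K ρ n)) :=
  (I (n + 1)).comap appendColumn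

theorem map_C_le_columnIdeal (n : ℕ) : (I n).map C ≤ I.columnIdeal n :=
  Ideal.map_le_iff_le_comap.2 fun f hf => by
    rw [Ideal.mem_comap, columnIdeal, Ideal.mem_comap, appendColumn_C]
    exact I.map_mem _ hf

theorem map_columnMap_mem_columnIdeal {m n : ℕ} (σ : Fin m ↪ Fin n)
    {F : MvPolynomial ρ (MatrixRing K ρ m)} (hF : F ∈ I.columnIdeal m) :
    map (columnMap σ) F ∈ I.columnIdeal n := by
  rw [columnIdeal, Ideal.mem_comap, appendColumn_map_columnMap]
  exact I.map_mem _ hF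

-- By Dickson's lemma there are finitely many minimal leading monomials, over all `n` at once.
theorem exists_isRelGroebnerBasis [Finite ρ] (m : MonomialOrder ρ) :
    ∃ (ω : Set (ρ →₀ ℕ)) (N : ω → ℕ) (F : ∀ w, MvPolynomial ρ (MatrixRing K ρ (N w))), ω.Finite ∧
      (∀ w, m.leadingCoeff (F w) ∉ I (N w)) ∧
      ∀ {n} (σ : ∀ w, Fin (N w) ↪ Fin n), IsRelGroebnerBasis m (I n) (I.columnIdeal n)
        fun w => map (columnMap (σ w)) (F w) := by
  let S : Set (ρ →₀ ℕ) := {d | ∃ n, ∃ G ∈ I.columnIdeal n,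
    m.leadingCoeff G ∉ I n ∧ m.degree G = d}
  have hmin (w : {d | Minimal (· ∈ S) d}) : w.1 ∈ S := w.2.prop
  choose N F hF hlc hdeg using hmin
  refine ⟨{d | Minimal (· ∈ S) d}, N, F,
    WellQuasiOrderedLE.finite_of_isAntichain (setOfPred_minimal_antichain _), hlc,
    fun {n} σ => ⟨I.map_C_le_columnIdeal n, fun w => I.map_columnMap_mem_columnIdeal _ (hF w),
      fun G hG hGn => ?_⟩⟩
  obtain ⟨d, hdG, hd⟩ := exists_minimal_le_of_wellFoundedLT (· ∈ S) _ ⟨n, G, hG, hGn, rfl⟩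
  refine ⟨⟨d, hd⟩, ?_⟩
  rwa [degree_map_of_injective m (columnMap_injective _), hdeg]

end WideMatrixChain

theorem ncard_le_mul_of_fibre_le {α β : Type*} {s : Set α} {t : Set β} (hs : s.Finite)
    (ht : t.Finite) {f : α → β} (hf : Set.MapsTo f s t) {E : ℕ}
    (hE : ∀ b ∈ t, {a ∈ s | f a = b}.ncard ≤ E) : s.ncard ≤ E * t.ncard := by
  classical
  lift s to Finset α using hs
  lift t to Finset β using ht
  simp only [Set.ncard_coe_finset]
  refine Finset.card_le_mul_card_image_of_maps_to hf E fun b hb => ?_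
  simpa only [← Set.ncard_coe_finset, Finset.coe_filter, Finset.mem_coe] using hE b hb

namespace WideMatrixChain

section AvoidingPrimes

variable {K ρ ω : Type*} [CommRing K] (I : WideMatrixChain K ρ)

/-- The components of `I n` that do not lie in the hypersurfaces cut out by the polynomials `s w`
in the first `n₀` columns. For `n < n₀` these are all components. -/
def minimalPrimesAvoiding {n₀ : ℕ} (s : ω → MatrixRing K ρ n₀) (n : ℕ) :
    Set (Ideal (MatrixRing K ρ n)) :=
  {P ∈ (I n).minimalPrimes | ∀ (hn : n₀ ≤ n) (w : ω), columnMap (Fin.castLEEmb hn) (s w) ∉ P}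

theorem finite_minimalPrimes [IsNoetherianRing K] [Finite ρ] (n : ℕ) :
    (I n).minimalPrimes.Finite :=
  Ideal.finite_minimalPrimes_of_isNoetherianRing _ _

theorem ncard_avoiding_le_ncard_minimalPrimesAvoiding [IsNoetherianRing K] [Finite ρ] {n₀ n : ℕ}
    (hn : n₀ ≤ n) (s : ω → MatrixRing K ρ n₀) (ι : Fin n₀ ↪ Fin n) :
    {P ∈ (I n).minimalPrimes | ∀ w, columnMap ι (s w) ∉ P}.ncard ≤
      (I.minimalPrimesAvoiding s n).ncard := by
  obtain ⟨π, rfl⟩ := exists_perm_trans_eq (Fin.castLEEmb hn) ι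
  refine Set.ncard_le_ncard_of_injOn (Ideal.comap (columnMap π.toEmbedding)) ?_
    (Ideal.comap_injective_of_surjective _ (columnMap_perm_surjective π)).injOn
    ((I.finite_minimalPrimes n).subset (Set.sep_subset _ _))
  rintro P ⟨hP, hs⟩
  refine ⟨?_, fun _ w => ?_⟩
  · rw [← I.comap_perm π]
    exact Ideal.minimalPrimes_comap_of_surjective (columnMap_perm_surjective π) hP
  · rw [Ideal.mem_comap, columnMap_columnMap]
    exact hs w

variable {I} {m : MonomialOrder ρ} {n₀ : ℕ} {F : ω → MvPolynomial ρ (MatrixRing K ρ n₀)}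

theorem comap_appendColumn_mem_minimalPrimes {n : ℕ} {P : Ideal (MatrixRing K ρ (n + 1))}
    (hP : P ∈ (I (n + 1)).minimalPrimes) :
    P.comap appendColumn ∈ (I.columnIdeal n).minimalPrimes :=
  Ideal.minimalPrimes_comap_of_surjective appendColumn_surjective hP

theorem comap_C_comap_appendColumn {n : ℕ} (P : Ideal (MatrixRing K ρ (n + 1))) :
    (P.comap appendColumn).comap C = P.comap (columnMap Fin.castSuccEmb) := by
  ext a
  simp only [Ideal.mem_comap, appendColumn_C]

theorem C_leadingCoeff_notMem {n : ℕ} (hn : n₀ ≤ n) {P : Ideal (MatrixRing K ρ (n + 1))}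
    (hP : P ∈ I.minimalPrimesAvoiding (fun w => m.leadingCoeff (F w)) (n + 1)) (w : ω) :
    C (m.leadingCoeff (map (columnMap (Fin.castLEEmb hn)) (F w))) ∉ P.comap appendColumn := by
  rw [leadingCoeff_map_of_injective m (columnMap_injective _), Ideal.mem_comap, appendColumn_C,
    columnMap_columnMap]
  exact hP.2 (hn.trans n.le_succ) w

variable (hF : ∀ {n} (hn : n₀ ≤ n), IsRelGroebnerBasis m (I n) (I.columnIdeal n)
  fun w => map (columnMap (Fin.castLEEmb hn)) (F w))

include hF

theorem mapsTo_comap_minimalPrimesAvoiding {n : ℕ} (hn : n₀ ≤ n) :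
    Set.MapsTo (Ideal.comap (columnMap Fin.castSuccEmb))
      (I.minimalPrimesAvoiding (fun w => m.leadingCoeff (F w)) (n + 1))
      (I.minimalPrimesAvoiding (fun w => m.leadingCoeff (F w)) n) := fun P hP => by
  refine ⟨?_, fun _ w hw => hP.2 (hn.trans n.le_succ) w ?_⟩
  · rw [← comap_C_comap_appendColumn]
    exact (hF hn).comap_C_mem_minimalPrimes (comap_appendColumn_mem_minimalPrimes hP.1)
      (C_leadingCoeff_notMem hn hP)
  · rwa [Ideal.mem_comap, columnMap_columnMap] at hw

theorem comap_castLE_mem_minimalPrimes {n : ℕ} (hn : n₀ ≤ n) {P : Ideal (MatrixRing K ρ n)}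
    (hP : P ∈ I.minimalPrimesAvoiding (fun w => m.leadingCoeff (F w)) n) :
    P.comap (columnMap (Fin.castLEEmb hn)) ∈ (I n₀).minimalPrimes := by
  induction n, hn using Nat.le_induction with
  | base =>
    have hid : P.comap (columnMap (Fin.castLEEmb le_rfl)) = P :=
      Ideal.ext fun f => iff_of_eq (congrArg (· ∈ P) (columnMap_refl f))
    exact hid.symm ▸ hP.1
  | succ n hn ih =>
    have := ih (mapsTo_comap_minimalPrimesAvoiding hF hn hP)
    rwa [Ideal.comap_comap, columnMap_comp] at this

theorem ncard_fibre_le_geometricFibre [IsNoetherianRing K] [Finite ρ] {n : ℕ} (hn : n₀ ≤ n)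
    (P' : Ideal (MatrixRing K ρ n)) [P'.IsPrime]
    {Q : Ideal (MatrixRing K ρ n₀)} [Q.IsPrime]
    (hQ : P'.comap (columnMap (Fin.castLEEmb hn)) = Q) :
    {P ∈ I.minimalPrimesAvoiding (fun w => m.leadingCoeff (F w)) (n + 1) |
      P.comap (columnMap Fin.castSuccEmb) = P'}.ncard ≤
      (geometricFibre Q (Ideal.span (Set.range F))).minimalPrimes.ncard := by
  refine (Set.ncard_le_ncard_of_injOn (Ideal.comap appendColumn) ?_
    (Ideal.comap_injective_of_surjective _ appendColumn_surjective).injOn ?_).trans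
    (ncard_minimalPrimes_over_le_geometricFibre _ _ hQ)
  · rintro P ⟨hP, rfl⟩
    have := (hF hn).mem_minimalPrimes_sup_span (comap_appendColumn_mem_minimalPrimes hP.1)
      (C_leadingCoeff_notMem hn hP)
    refine ⟨?_, comap_C_comap_appendColumn P⟩
    rwa [comap_C_comap_appendColumn, Set.range_comp', ← Ideal.map_span] at this
  · exact (Ideal.finite_minimalPrimes_of_isNoetherianRing _ _).subset (Set.sep_subset _ _)

theorem isExpBounded_ncard_minimalPrimesAvoiding [IsNoetherianRing K] [Finite ρ] :
    IsExpBounded fun n =>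
      (I.minimalPrimesAvoiding (fun w => m.leadingCoeff (F w)) n).ncard := by
  have := (I.finite_minimalPrimes n₀).to_subtype
  obtain ⟨E, hE⟩ := Finite.exists_le fun Q : (I n₀).minimalPrimes =>
    have := Q.2.1.1
    (geometricFibre Q.1 (Ideal.span (Set.range F))).minimalPrimes.ncard
  refine .of_succ_le_mul (E := E) (Filter.eventually_atTop.2 ⟨n₀, fun n hn => ?_⟩)
  refine ncard_le_mul_of_fibre_le ((I.finite_minimalPrimes _).subset (Set.sep_subset _ _))
    ((I.finite_minimalPrimes _).subset (Set.sep_subset _ _))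
    (mapsTo_comap_minimalPrimesAvoiding hF hn) fun P' hP' => ?_
  have := hP'.1.1.1
  exact (ncard_fibre_le_geometricFibre hF hn P' rfl).trans
    (hE ⟨_, comap_castLE_mem_minimalPrimes hF hn hP'⟩)

end AvoidingPrimes

end WideMatrixChain

section Components

variable {ω : Type*} [Fintype ω] {N : ω → ℕ} {n : ℕ}

theorem exists_common_factorization (σ : ∀ w, Fin (N w) ↪ Fin n) (hn : ∑ w, N w ≤ n) :
    ∃ (τ : ∀ w, Fin (N w) ↪ Fin (∑ w, N w)) (ι : Fin (∑ w, N w) ↪ Fin n),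
      ∀ w, (τ w).trans ι = σ w := by
  classical
  let S : Finset (Fin n) := Finset.univ.biUnion fun w => Finset.univ.map (σ w)
  have hS : S.card ≤ ∑ w, N w := Finset.card_biUnion_le.trans_eq (by simp)
  obtain ⟨T, hST, -, hT⟩ := Finset.exists_subsuperset_card_eq S.subset_univ hS (by simpa using hn)
  let ι := (T.orderEmbOfFin hT).toEmbedding
  have hfactor (w : ω) (j : Fin (N w)) : ∃ i, ι i = σ w j := by
    have hj : σ w j ∈ (T : Set (Fin n)) := hST (by simpa [S] using ⟨w, j, rfl⟩)
    rwa [← Finset.range_orderEmbOfFin T hT] at hj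
  choose τ hτ using hfactor
  refine ⟨fun w => ⟨τ w, fun i j hij => (σ w).injective ?_⟩, ι, fun w => DFunLike.ext _ _ (hτ w)⟩
  rw [← hτ, ← hτ, hij]

namespace WideMatrixChain

variable {K ρ : Type*} [CommRing K] (I : WideMatrixChain K ρ)

theorem minimalPrimes_subset_adjoin_union_avoiding (g : ∀ w, MatrixRing K ρ (N w))
    (hn : ∑ w, N w ≤ n) :
    (I n).minimalPrimes ⊆ (⋃ w, (I.adjoin (g w) n).minimalPrimes) ∪
      ⋃ (τ : ∀ w, Fin (N w) ↪ Fin (∑ w, N w)) (ι : Fin (∑ w, N w) ↪ Fin n),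
        {P ∈ (I n).minimalPrimes | ∀ w, columnMap ι (columnMap (τ w) (g w)) ∉ P} := fun P hP => by
  by_cases h : ∃ w, ∀ σ : Fin (N w) ↪ Fin n, columnMap σ (g w) ∈ P
  · obtain ⟨w, hw⟩ := h
    exact .inl (Set.mem_iUnion.2 ⟨w, I.mem_minimalPrimes_adjoin hP hw⟩)
  · push Not at h
    choose σ hσ using h
    obtain ⟨τ, ι, hτι⟩ := exists_common_factorization σ hn
    refine .inr (Set.mem_iUnion₂.2 ⟨τ, ι, hP, fun w => ?_⟩)
    rw [columnMap_columnMap, hτι]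
    exact hσ w

variable [IsNoetherianRing K] [Finite ρ]

theorem ncard_minimalPrimes_le [DecidableEq ω] (g : ∀ w, MatrixRing K ρ (N w)) (hn : ∑ w, N w ≤ n) :
    (I n).minimalPrimes.ncard ≤ ∑ w, (I.adjoin (g w) n).minimalPrimes.ncard +
      ∑ τ : ∀ w, Fin (N w) ↪ Fin (∑ w, N w),
        n ^ (∑ w, N w) * (I.minimalPrimesAvoiding (fun w => columnMap (τ w) (g w)) n).ncard := by
  refine (Set.ncard_le_ncard (I.minimalPrimes_subset_adjoin_union_avoiding g hn) ?_).trans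
    ((Set.ncard_union_le _ _).trans (add_le_add (Set.ncard_iUnion_le_of_fintype _)
      ((Set.ncard_iUnion_le_of_fintype _).trans (Finset.sum_le_sum fun τ _ => ?_))))
  · exact (Set.finite_iUnion fun w => (I.adjoin (g w)).finite_minimalPrimes n).union
      (Set.finite_iUnion fun τ => Set.finite_iUnion fun ι =>
        (I.finite_minimalPrimes n).subset (Set.sep_subset _ _))
  · have hcard : Fintype.card (Fin (∑ w, N w) ↪ Fin n) ≤ n ^ (∑ w, N w) := by
      simpa only [Fintype.card_embedding_eq, Fintype.card_fin] using Nat.descFactorial_le_pow n _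
    refine (Set.ncard_iUnion_le_of_fintype _).trans ?_
    refine (Finset.sum_le_card_nsmul _ _ _ fun ι _ =>
      I.ncard_avoiding_le_ncard_minimalPrimesAvoiding hn _ ι).trans ?_
    exact Nat.mul_le_mul_right _ hcard

theorem isExpBounded_ncard_minimalPrimes : IsExpBounded fun n => (I n).minimalPrimes.ncard := by
  classical
  let : LinearOrder ρ := LinearOrder.lift' (Finite.equivFin ρ) (Finite.equivFin ρ).injective
  have := WideMatrixChain.wellFoundedGT K ρ
  induction I using WellFoundedGT.induction with
  | ind I ih =>
    obtain ⟨ω, N, F, hω, hlc, hF⟩ := I.exists_isRelGroebnerBasis MonomialOrder.lex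
    have := hω.fintype
    refine ((IsExpBounded.sum Finset.univ fun w _ => ih _ (I.lt_adjoin (hlc w))).add
      (.sum Finset.univ fun τ _ => (IsExpBounded.pow_const _).mul ?_)).mono
      (Filter.eventually_atTop.2 ⟨∑ w, N w, fun n hn => I.ncard_minimalPrimes_le _ hn⟩)
    simp only [← leadingCoeff_map_of_injective _ (columnMap_injective (τ _))]
    refine isExpBounded_ncard_minimalPrimesAvoiding fun {n} hn => ?_
    simp only [map_map, columnMap_comp]
    exact hF _

end WideMatrixChain

end Components

theorem number_of_components_exponentially_bounded_general {K ρ : Type*} [CommRing K]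
    [IsNoetherianRing K] [Finite ρ] (I : ∀ n : ℕ, Ideal (MvPolynomial (ρ × Fin n) K))
    (hsym : ∀ (n : ℕ) (π : Equiv.Perm (Fin n)),
      Ideal.map (rename (Prod.map (id : ρ → ρ) π)) (I n) = I n)
    (hincl : ∀ n : ℕ,
      Ideal.map (rename (Prod.map (id : ρ → ρ) (Fin.castSucc : Fin n → Fin (n + 1))))
        (I n) ≤ I (n + 1)) :
    ∃ C : ℝ, 1 ≤ C ∧ ∃ n₀ : ℕ, ∀ n : ℕ, n₀ ≤ n →
      (Nat.card {P : Ideal (MvPolynomial (ρ × Fin n) K) // P ∈ (I n).minimalPrimes} : ℝ)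
        ≤ C ^ n := by
  obtain ⟨C, hC⟩ := (WideMatrixChain.ofSymmetric I hsym hincl).isExpBounded_ncard_minimalPrimes
  obtain ⟨n₀, hn₀⟩ := Filter.eventually_atTop.1 hC
  refine ⟨C + 1, by simp, n₀, fun n hn => ?_⟩
  calc (Nat.card {P // P ∈ (I n).minimalPrimes} : ℝ) ≤ (C : ℝ) ^ n := by exact_mod_cast hn₀ n hn
    _ ≤ (C + 1 : ℝ) ^ n := by gcongr; simp

/-- For a symmetric wide-matrix ideal chain `(I n)` over a Noetherian ring `K` with
`I n ≠ A_n` for all `n`, the number of minimal primes of `A_n` over `I n` is eventually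
bounded by `c^n` for some constant `c ≥ 1`. -/
theorem number_of_components_exponentially_bounded
    (K : Type) [CommRing K] [IsNoetherianRing K] (c : ℕ)
    (I : ∀ n : ℕ, Ideal (MvPolynomial (Fin c × Fin n) K))
    (hsym : ∀ (n : ℕ) (π : Equiv.Perm (Fin n)),
      Ideal.map (rename (Prod.map (id : Fin c → Fin c) π)) (I n) = I n)
    (hincl : ∀ n : ℕ,
      Ideal.map (rename (Prod.map (id : Fin c → Fin c) (Fin.castSucc : Fin n → Fin (n + 1))))
        (I n) ≤ I (n + 1))
    (hproper : ∀ n : ℕ, I n ≠ ⊤) :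
    ∃ C : ℝ, 1 ≤ C ∧ ∃ n₀ : ℕ, ∀ n : ℕ, n₀ ≤ n →
      (Nat.card {P : Ideal (MvPolynomial (Fin c × Fin n) K) // P ∈ (I n).minimalPrimes} : ℝ)
        ≤ C ^ n :=
  number_of_components_exponentially_bounded_general I hsym hincl
end

section
/- Let G be a groupoid whose type of objects Q is a finite set and all of whose hom-sets Hom(p,q) are finite, and let F be a (covariant) functor from G to the category of types with each F(p) a finite set. On the disjoint union X := ⊔_{p∈Q} F(p), declare (p,x) ∼ (q,y) if there exists g ∈ Hom(p,q) with F(g)(x) = y; since G is a groupoid this is an equivalence relation, whose classes are called the orbits of G on X. For p ∈ Q write G(p) := ⊔_{q∈Q} Hom(p,q) (nonempty, as it contains id_p). Then the number of orbits of G on X equals Σ_{p∈Q} (1/|G(p)|) · Σ_{g∈Hom(p,p)} |{x ∈ F(p) : F(g)(x) = x}|, as an identity of rational numbers. -/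
open CategoryTheory

/-!
An action `F` of a groupoid `G` has an action groupoid, the category of elements of `F`, whose
isomorphism classes are the orbits; so the theorem is a statement about counting isomorphism classes
in a finite groupoid. There, an isomorphism class is counted once if each of its objects `x` has
weight one over the size of the class, and by orbit-stabilizer this weight is
`|Hom(x, x)| / |⊔_y Hom(x, y)|`. In the action groupoid, `Hom(x, x)` is the stabilizer of `x`, while
the arrows out of `x ∈ F p` correspond to the arrows out of `p`, as each of these moves `x` to
exactly one element. Summing over `x ∈ F p` and counting pairs `(g, x)` with `F g x = x` in two ways
gives the formula.
-/

universe u v w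

section Counting

theorem sum_card_subtype_comm {α : Type u} {β : Type v} [Fintype α] [Fintype β]
    (r : α → β → Prop) :
    ∑ a, Nat.card {b // r a b} = ∑ b, Nat.card {a // r a b} := by
  classical
  simpa only [Nat.card_eq_fintype_card, Fintype.card_subtype, Finset.bipartiteAbove,
    Finset.bipartiteBelow] using
    Finset.sum_card_bipartiteAbove_eq_sum_card_bipartiteBelow r

variable {K : Type w} [DivisionSemiring K] [CharZero K]

theorem sum_inv_card_fiber {α : Type u} {β : Type v} [Fintype α] {f : α → β}
    (hf : f.Surjective) :
    ∑ a, (Nat.card {a' // f a = f a'} : K)⁻¹ = Nat.card β := by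
  classical
  have : Fintype β := Fintype.ofSurjective f hf
  have fiber_weight (b : β) : ∑ a : {a // f a = b}, (Nat.card {a' // f a = f a'} : K)⁻¹ = 1 := by
    obtain ⟨a₀, rfl⟩ := hf b
    have : Nonempty {a // f a = f a₀} := ⟨⟨a₀, rfl⟩⟩
    have weight_eq (a : {a // f a = f a₀}) :
        (Nat.card {a' // f a = f a'} : K)⁻¹ = (Nat.card {a // f a = f a₀} : K)⁻¹ := by
      simp only [a.2, eq_comm]
    rw [Fintype.sum_congr _ _ weight_eq, Finset.sum_const, Finset.card_univ, nsmul_eq_mul,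
      ← Nat.card_eq_fintype_card, mul_inv_cancel₀ (Nat.cast_ne_zero.mpr Nat.card_pos.ne')]
  rw [← Fintype.sum_fiberwise f, Fintype.sum_congr _ _ fiber_weight]
  simp

theorem card_quotient_eq_sum_inv_card_class {α : Type u} [Fintype α] (s : Setoid α) :
    (Nat.card (Quotient s) : K) = ∑ a, (Nat.card {a' // s a a'} : K)⁻¹ := by
  rw [← sum_inv_card_fiber (Quotient.mk_surjective (s := s))]
  simp only [Quotient.eq]

end Counting

section IsomorphismClasses

variable {E : Type u} [Groupoid.{v} E]

/-- Orbit-stabilizer for groupoids: the arrows out of `x` are the pairs of an object isomorphic to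
`x` and a loop at `x`, once an arrow from `x` to each isomorphic object is chosen. -/
noncomputable def starEquivIsomorphicProdLoop (x : E) :
    Quiver.Star x ≃ {y // IsIsomorphic x y} × (x ⟶ x) where
  toFun f :=
    have hf : IsIsomorphic x f.1 := Groupoid.isIsomorphic_iff_nonempty_hom.mpr ⟨f.2⟩
    (⟨f.1, hf⟩, f.2 ≫ hf.some.inv)
  invFun yg := ⟨yg.1, yg.2 ≫ yg.1.2.some.hom⟩
  left_inv f := by simp
  right_inv yg := by simp

variable {K : Type w} [DivisionSemiring K] [CharZero K]

theorem inv_card_isomorphic_eq_inv_card_star_mul_card_loop (x : E) [Finite (x ⟶ x)] :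
    (Nat.card {y // IsIsomorphic x y} : K)⁻¹ =
      (Nat.card (Quiver.Star x) : K)⁻¹ * Nat.card (x ⟶ x) := by
  have : Nonempty (x ⟶ x) := ⟨𝟙 x⟩
  have loop_ne_zero : (Nat.card (x ⟶ x) : K) ≠ 0 := Nat.cast_ne_zero.mpr Nat.card_pos.ne'
  rw [Nat.card_congr (starEquivIsomorphicProdLoop x), Nat.card_prod, Nat.cast_mul,
    (Nat.cast_commute _ _).eq, mul_inv_rev, inv_mul_cancel_right₀ loop_ne_zero]

theorem card_isomorphismClasses_eq_sum [Fintype E] [∀ x : E, Finite (x ⟶ x)] :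
    (Nat.card (Quotient (isIsomorphicSetoid E)) : K) =
      ∑ x : E, (Nat.card (Quiver.Star x) : K)⁻¹ * Nat.card (x ⟶ x) := by
  rw [card_quotient_eq_sum_inv_card_class]
  exact Fintype.sum_congr _ _ fun x =>
    inv_card_isomorphic_eq_inv_card_star_mul_card_loop x

end IsomorphismClasses

section ActionGroupoid

/-- The projection from the category of elements of `F` is a discrete opfibration: arrows out of
`x ∈ F p` correspond to arrows out of `p`. -/
def elementsStarEquiv {C : Type u} [Category.{v} C] (F : C ⥤ Type w) (x : F.Elements) :
    Quiver.Star x ≃ Quiver.Star x.1 where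
  toFun f := ⟨f.1.1, f.2.1⟩
  invFun g := ⟨F.elementsMk g.1 (F.map g.2 x.2), g.2, rfl⟩
  left_inv := by
    rintro ⟨⟨q, y⟩, (g : x.1 ⟶ q), (rfl : F.map g x.2 = y)⟩
    rfl
  right_inv _ := rfl

/-- The orbits of a groupoid action are the isomorphism classes of its action groupoid. -/
def orbitEquivIsomorphismClasses {Q : Type u} [Groupoid.{v} Q] (F : Q ⥤ Type w) :
    Quot (fun x y : Σ p : Q, F.obj p => ∃ g : x.1 ⟶ y.1, F.map g x.2 = y.2) ≃
      Quotient (isIsomorphicSetoid F.Elements) :=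
  Quot.congrRight fun (x y : F.Elements) =>
    (nonempty_subtype (p := fun g : x.1 ⟶ y.1 => F.map g x.2 = y.2)).symm.trans
      (Groupoid.isIsomorphic_iff_nonempty_hom (X := x) (Y := y)).symm

end ActionGroupoid

theorem orbit_counting_lemma_for_groupoids_general {K : Type*} [DivisionSemiring K] [CharZero K]
    {Q : Type u} [Groupoid.{v} Q] [Fintype Q] [∀ p : Q, Fintype (p ⟶ p)]
    (F : Q ⥤ Type w) [∀ p : Q, Finite (F.obj p)] :
    (Nat.card (Quot (fun (x y : Σ p : Q, F.obj p) =>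
        ∃ g : x.1 ⟶ y.1, F.map g x.2 = y.2)) : K) =
      ∑ p : Q, (1 / (Nat.card (Σ q : Q, p ⟶ q) : K)) *
        ∑ g : p ⟶ p, (Nat.card {x : F.obj p // F.map g x = x} : K) := by
  have (p : Q) : Fintype (F.obj p) := Fintype.ofFinite _
  let : Fintype F.Elements := inferInstanceAs (Fintype (Σ p, F.obj p))
  have (x : F.Elements) : Finite (x ⟶ x) :=
    inferInstanceAs (Finite {g : x.1 ⟶ x.1 // F.map g x.2 = x.2})
  calc
    _ = ∑ x : F.Elements, (Nat.card (Quiver.Star x) : K)⁻¹ * Nat.card (x ⟶ x) := by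
      rw [Nat.card_congr (orbitEquivIsomorphismClasses F), card_isomorphismClasses_eq_sum]
    _ = ∑ p : Q, ∑ x : F.obj p, (Nat.card (Quiver.Star p) : K)⁻¹ *
          Nat.card {g : p ⟶ p // F.map g x = x} := by
      simp only [Nat.card_congr (elementsStarEquiv F _)]
      exact Fintype.sum_sigma fun x : Σ p, F.obj p =>
        (Nat.card (Quiver.Star x.1) : K)⁻¹ * Nat.card {g : x.1 ⟶ x.1 // F.map g x.2 = x.2}
    _ = _ := by
      simp only [← Finset.mul_sum, ← Nat.cast_sum, one_div,
        sum_card_subtype_comm fun (x : F.obj _) g => F.map g x = x]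

/-- The orbit-counting lemma for finite groupoids: if a finite groupoid `G` with object
set `Q` acts on finite sets `F p` (via a functor `F` to types), then the number of orbits
on `X = ⊔_p F p` equals `Σ_{p ∈ Q} (1/|G(p)|) · Σ_{g : p ⟶ p} |Fix(g)|`, where
`G(p) = ⊔_q Hom(p,q)`. -/
theorem orbit_counting_lemma_for_groupoids
    (Q : Type) [Groupoid.{0} Q] [Fintype Q] [∀ p q : Q, Fintype (p ⟶ q)]
    (F : Q ⥤ Type) [∀ p : Q, Fintype (F.obj p)] :
    (Nat.card (Quot (fun (x y : Σ p : Q, F.obj p) =>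
        ∃ g : x.1 ⟶ y.1, F.map g x.2 = y.2)) : ℚ) =
      ∑ p : Q, (1 / (Nat.card (Σ q : Q, p ⟶ q) : ℚ)) *
        ∑ g : p ⟶ p, (Nat.card {x : F.obj p // F.map g x = x} : ℚ) :=
  orbit_counting_lemma_for_groupoids_general F
end

section
/- Let (s, k, M, (∼_n)_{n∈ℕ}) be a model functor. Then the number of Sym([n])-orbits on the quotient set F_n/∼_n is a quasipolynomial in n for all n ≫ 0. (Here Sym([n]) acts on F_n/∼_n because the action τ·(σ,α) = (τ∘σ, α∘τ⁻¹) on F_n preserves ∼_n, by Axiom (1) applied to bijections.) -/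
/-- A pair `(σ, α)` consisting of an injection `σ : [s] → [n]` together with a word
`α : [n] ∖ im(σ) → [k]`. -/
structure MPair (s k n : ℕ) where
  σ : Fin s → Fin n
  inj : Function.Injective σ
  α : {j : Fin n // j ∉ Set.range σ} → Fin k

/-- The count vector of a pair: the `l`-th entry records how often the letter `l` occurs
in the word `α`. -/
noncomputable def MPair.countVec {s k n : ℕ} (p : MPair s k n) : Fin k → ℕ :=
  fun l => Nat.card {j : {j : Fin n // j ∉ Set.range p.σ} // p.α j = l}

/-- The set `F_n` of pairs whose count vector lies in `M`. -/
def FPair (s k : ℕ) (M : Set (Fin k → ℕ)) (n : ℕ) : Type :=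
  {p : MPair s k n // p.countVec ∈ M}

/-- Restriction of a pair along an injection `π : [m] → [n]` whose image contains the
image of `σ`: this underlies the map `F(π)` of the model functor. -/
noncomputable def MPair.restrict {s k m n : ℕ} (π : Fin m → Fin n)
    (hπ : Function.Injective π) (p : MPair s k n)
    (hsub : Set.range p.σ ⊆ Set.range π) : MPair s k m where
  σ := fun i => (hsub (Set.mem_range_self i)).choose
  inj := by
    intro i i' hii
    apply p.inj
    have h1 := (hsub (Set.mem_range_self i)).choose_spec
    have h2 := (hsub (Set.mem_range_self i')).choose_spec
    rw [← h1, ← h2]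
    exact congrArg π hii
  α := fun j => p.α ⟨π j.1, by
    rintro ⟨i, hi⟩
    exact j.2 ⟨i, hπ ((hsub (Set.mem_range_self i)).choose_spec.trans hi)⟩⟩

/-- The count vector can only decrease under restriction. -/
theorem MPair.countVec_restrict_le {s k m n : ℕ} (π : Fin m → Fin n)
    (hπ : Function.Injective π) (p : MPair s k n)
    (hsub : Set.range p.σ ⊆ Set.range π) (l : Fin k) :
    (p.restrict π hπ hsub).countVec l ≤ p.countVec l := by
  classical
  apply Nat.card_le_card_of_injective
    (fun j => (⟨⟨π j.1.1, by
        rintro ⟨i, hi⟩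
        exact j.1.2 ⟨i, hπ ((hsub (Set.mem_range_self i)).choose_spec.trans hi)⟩⟩,
      j.2⟩ : {j : {j : Fin n // j ∉ Set.range p.σ} // p.α j = l}))
  intro a b hab
  have hval : π a.1.1 = π b.1.1 := congrArg (fun x => x.1.1) hab
  exact Subtype.ext (Subtype.ext (hπ hval))

/-- Restriction, as a map `F(π)` on the sets `F_n` of the model functor; this uses
downward closedness of `M`. -/
noncomputable def FPair.restrict {s k m n : ℕ} {M : Set (Fin k → ℕ)}
    (hM : ∀ β ∈ M, ∀ β' : Fin k → ℕ, (∀ l, β' l ≤ β l) → β' ∈ M)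
    (π : Fin m → Fin n) (hπ : Function.Injective π) (p : FPair s k M n)
    (hsub : Set.range p.1.σ ⊆ Set.range π) : FPair s k M m :=
  ⟨p.1.restrict π hπ hsub, hM _ p.2 _ (fun l => MPair.countVec_restrict_le π hπ p.1 hsub l)⟩

/-!
Encode an element of `F_n` as a word of length `n` in the alphabet `[s] ⊔ [k]`; its `Sym([n])`-orbit
is determined by the multiplicities of the letters, so the orbits on `F_n/∼_n` are the classes of an
equivalence relation on multiplicity vectors of total size `n`. A pair of equivalent elements is a
word in pairs of letters. By Axiom (1), the set of multiplicity vectors of these words is closed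
downwards as long as the letters of `[s]` survive in both components, hence it is semilinear, and so
is the relation on multiplicity vectors obtained from it by taking row and column sums. Choosing the
lexicographically smallest vector in each class turns the orbit count into the number of points of
total size `n` in a semilinear set, and a Hilbert–Serre argument shows that the Hilbert function of
a semilinear set is annihilated by a product of operators `S` and `S ^ d - 1`, where `S` shifts
sequences; the solutions of such recurrences are the eventual quasipolynomials.
-/

section Recurrences

open Polynomial

/-- The shift operator `(a n)ₙ ↦ (a (n + 1))ₙ` on rational sequences. -/
noncomputable def sequenceShift : Module.End ℚ (ℕ → ℚ) := LinearMap.funLeft ℚ ℚ (· + 1)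

theorem sequenceShift_pow_apply (m : ℕ) (a : ℕ → ℚ) (n : ℕ) :
    (sequenceShift ^ m) a n = a (n + m) := by
  induction m generalizing a with
  | zero => simp
  | succ m ih =>
    rw [pow_succ, Module.End.mul_apply, ih]
    simp [sequenceShift, LinearMap.funLeft, add_assoc]

theorem aeval_sequenceShift_X_pow (c : ℕ) (a : ℕ → ℚ) :
    aeval sequenceShift (X ^ c : ℚ[X]) a = fun n => a (n + c) := by
  funext n
  rw [map_pow, aeval_X, sequenceShift_pow_apply]

theorem aeval_sequenceShift_X_pow_sub_one (c : ℕ) (a : ℕ → ℚ) :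
    aeval sequenceShift (X ^ c - 1 : ℚ[X]) a = fun n => a (n + c) - a n := by
  rw [map_sub, map_one, LinearMap.sub_apply, aeval_sequenceShift_X_pow]
  rfl

theorem aeval_sequenceShift_X_pow_sub_one_pow (N d : ℕ) (a : ℕ → ℚ) :
    aeval sequenceShift ((X ^ N - 1) ^ d : ℚ[X]) a = (fwdDiff N)^[d] a := by
  rw [map_pow, Module.End.pow_apply]
  congr 2
  exact funext (aeval_sequenceShift_X_pow_sub_one N)

/-- The multiplicative set generated by `X` and the polynomials `X ^ N - 1` with `N > 0`. -/
noncomputable def cyclotomicMonoid : Submonoid ℚ[X] :=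
  Submonoid.closure (insert X {q | ∃ N, 0 < N ∧ q = X ^ N - 1})

theorem X_mem_cyclotomicMonoid : X ∈ cyclotomicMonoid :=
  Submonoid.subset_closure (Set.mem_insert _ _)

theorem X_pow_sub_one_mem_cyclotomicMonoid {N : ℕ} (hN : 0 < N) :
    X ^ N - 1 ∈ cyclotomicMonoid :=
  Submonoid.subset_closure (Set.mem_insert_of_mem _ ⟨N, hN, rfl⟩)

/-- A sequence satisfying a linear recurrence whose characteristic polynomial is a product of
factors `X` and `X ^ N - 1`. Such sequences are the eventual quasipolynomials; this form is
the one that is visibly stable under sums and summation. -/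
def HasCyclotomicRecurrence (a : ℕ → ℚ) : Prop :=
  ∃ p ∈ cyclotomicMonoid, aeval sequenceShift p a = 0

namespace HasCyclotomicRecurrence

variable {a b : ℕ → ℚ}

theorem zero : HasCyclotomicRecurrence 0 :=
  ⟨1, one_mem _, map_zero _⟩

theorem of_aeval {p : ℚ[X]} (hp : p ∈ cyclotomicMonoid)
    (h : HasCyclotomicRecurrence (aeval sequenceShift p a)) : HasCyclotomicRecurrence a := by
  obtain ⟨q, hq, h⟩ := h
  exact ⟨q * p, mul_mem hq hp, by rwa [map_mul, Module.End.mul_apply]⟩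

theorem aeval_sequenceShift (h : HasCyclotomicRecurrence a) (q : ℚ[X]) :
    HasCyclotomicRecurrence (aeval sequenceShift q a) := by
  obtain ⟨p, hp, h⟩ := h
  refine ⟨p, hp, ?_⟩
  rw [← Module.End.mul_apply, ← map_mul, mul_comm, map_mul, Module.End.mul_apply, h, map_zero]

theorem neg (h : HasCyclotomicRecurrence a) : HasCyclotomicRecurrence (-a) := by
  obtain ⟨p, hp, h⟩ := h
  exact ⟨p, hp, by rw [map_neg, h, neg_zero]⟩

theorem add (ha : HasCyclotomicRecurrence a) (hb : HasCyclotomicRecurrence b) :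
    HasCyclotomicRecurrence (a + b) := by
  obtain ⟨p, hp, ha⟩ := ha
  refine of_aeval hp ?_
  rw [map_add, ha, zero_add]
  exact hb.aeval_sequenceShift p

theorem sub (ha : HasCyclotomicRecurrence a) (hb : HasCyclotomicRecurrence b) :
    HasCyclotomicRecurrence (a - b) := by
  rw [sub_eq_add_neg]
  exact ha.add hb.neg

theorem shift (h : HasCyclotomicRecurrence a) (c : ℕ) :
    HasCyclotomicRecurrence fun n => a (n + c) :=
  aeval_sequenceShift_X_pow c a ▸ h.aeval_sequenceShift (X ^ c)

theorem of_shift (c : ℕ) (h : HasCyclotomicRecurrence fun n => a (n + c)) :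
    HasCyclotomicRecurrence a :=
  of_aeval (pow_mem X_mem_cyclotomicMonoid c)
    (aeval_sequenceShift_X_pow c a ▸ h)

theorem of_difference {w : ℕ} (hw : 0 < w)
    (h : HasCyclotomicRecurrence fun n => a (n + w) - a n) : HasCyclotomicRecurrence a :=
  of_aeval (X_pow_sub_one_mem_cyclotomicMonoid hw)
    (aeval_sequenceShift_X_pow_sub_one w a ▸ h)

theorem of_eventually_zero (h : ∀ᶠ n in Filter.atTop, a n = 0) : HasCyclotomicRecurrence a := by
  obtain ⟨c, hc⟩ := Filter.eventually_atTop.mp h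
  refine of_shift c ?_
  convert zero using 1
  exact funext fun n => hc _ (Nat.le_add_left c n)

end HasCyclotomicRecurrence

theorem exists_dvd_of_mem_cyclotomicMonoid {p : ℚ[X]} (hp : p ∈ cyclotomicMonoid) :
    ∃ N m d : ℕ, 0 < N ∧ p ∣ X ^ m * (X ^ N - 1) ^ d := by
  have hdvd (N N' d : ℕ) : ((X : ℚ[X]) ^ N - 1) ^ d ∣ (X ^ (N * N') - 1) ^ d := by
    rw [pow_mul]
    exact pow_dvd_pow_of_dvd (by simpa using sub_dvd_pow_sub_pow ((X : ℚ[X]) ^ N) 1 N') d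
  induction hp using Submonoid.closure_induction with
  | mem q hq =>
    obtain rfl | ⟨N, hN, rfl⟩ := hq
    · exact ⟨1, 1, 0, one_pos, by simp⟩
    · exact ⟨N, 0, 1, hN, by simp⟩
  | one => exact ⟨1, 0, 0, one_pos, one_dvd _⟩
  | mul p q _ _ hp hq =>
    obtain ⟨N, m, d, hN, hp⟩ := hp
    obtain ⟨N', m', d', hN', hq⟩ := hq
    refine ⟨N * N', m + m', d + d', by positivity, (mul_dvd_mul hp hq).trans ?_⟩
    rw [mul_mul_mul_comm, pow_add, pow_add]
    exact mul_dvd_mul_left _ (mul_dvd_mul (hdvd N N' d) (mul_comm N' N ▸ hdvd N' N d'))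

/-- Newton's expansion `∑ₖ (Δᵏ a)(y) · (t choose k)`, which stops at `k = d`. -/
theorem exists_polynomial_of_fwdDiff_iterate_eq_zero {N d : ℕ} {a : ℕ → ℚ}
    (h : (fwdDiff N)^[d] a = 0) (y : ℕ) : ∃ P : ℚ[X], ∀ t : ℕ, a (y + t * N) = P.eval (t : ℚ) := by
  have hvanish (j : ℕ) (hj : d ≤ j) : (fwdDiff N)^[j] a = 0 := by
    obtain ⟨i, rfl⟩ := Nat.exists_eq_add_of_le' hj
    rw [Function.iterate_add_apply, h, ← fwdDiff_aux.coe_fwdDiffₗ_pow, map_zero]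
  have hnewton (t : ℕ) :
      a (y + t * N) = ∑ j ∈ Finset.range d, (t.choose j : ℚ) * (fwdDiff N)^[j] a y := by
    rw [← smul_eq_mul t N, shift_eq_sum_fwdDiff_iter N a t y]
    simp only [nsmul_eq_mul]
    rcases le_total d (t + 1) with hd | hd
    · refine (Finset.sum_subset (Finset.range_mono hd) fun j _ hj => ?_).symm
      rw [hvanish j (by simpa using hj), Pi.zero_apply, mul_zero]
    · refine Finset.sum_subset (Finset.range_mono hd) fun j _ hj => ?_
      rw [Nat.choose_eq_zero_of_lt (by simpa using hj), Nat.cast_zero, zero_mul]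
  refine ⟨∑ j ∈ Finset.range d, C ((fwdDiff N)^[j] a y / j.factorial) * descPochhammer ℚ j,
    fun t => ?_⟩
  rw [hnewton, eval_finsetSum]
  refine Finset.sum_congr rfl fun j _ => ?_
  have hj : (j.factorial : ℚ) ≠ 0 := by exact_mod_cast j.factorial_ne_zero
  rw [eval_mul, eval_C, descPochhammer_eval_eq_descFactorial,
    Nat.descFactorial_eq_factorial_mul_choose]
  push_cast
  field_simp

theorem HasCyclotomicRecurrence.exists_isQuasiPolynomial {a : ℕ → ℚ}
    (h : HasCyclotomicRecurrence a) :
    ∃ f : ℤ → ℚ, IsQuasiPolynomial f ∧ ∃ n₀ : ℕ, ∀ n : ℕ, n₀ ≤ n → a n = f n := by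
  obtain ⟨p, hp, hpa⟩ := h
  obtain ⟨N, m, d, hN, q, hq⟩ := exists_dvd_of_mem_cyclotomicMonoid hp
  have hdiff : (fwdDiff N)^[d] (fun n => a (n + m)) = 0 := by
    rw [← aeval_sequenceShift_X_pow_sub_one_pow, ← aeval_sequenceShift_X_pow,
      ← Module.End.mul_apply, ← map_mul, mul_comm, hq, mul_comm, map_mul,
      Module.End.mul_apply, hpa, map_zero]
  choose P hP using exists_polynomial_of_fwdDiff_iterate_eq_zero hdiff
  have : NeZero N := ⟨hN.ne'⟩
  let residue (z : ZMod N) : ℕ := (z - m).val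
  let Q (z : ZMod N) : ℚ[X] :=
    (P (residue z)).comp (C (1 / (N : ℚ)) * (X - C (m + residue z : ℚ)))
  refine ⟨fun n => (Q n).eval (n : ℚ), ⟨N, hN, Q, fun _ => rfl⟩, m, fun n hn => ?_⟩
  obtain ⟨r, rfl⟩ := Nat.exists_eq_add_of_le' hn
  have hresidue : residue ((r + m : ℕ) : ℤ) = r % N := by
    simp [residue, ← ZMod.val_natCast]
  have hr : r % N + r / N * N = r := Nat.mod_add_div' r N
  have harg : 1 / (N : ℚ) * ((r + m : ℚ) - (m + (r % N : ℕ))) = (r / N : ℕ) := by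
    have hrQ : ((r % N : ℕ) : ℚ) + (r / N : ℕ) * N = r := by exact_mod_cast hr
    have hNQ : (N : ℚ) ≠ 0 := by exact_mod_cast hN.ne'
    field_simp
    linarith
  simp only [Q, hresidue, eval_comp, eval_mul, eval_sub, eval_C, eval_X]
  push_cast
  rw [harg, ← hP, hr]

end Recurrences

section GradedCard

variable {M : Type*} (deg : M → ℕ)

/-- The Hilbert function of `A` with respect to `deg`: the number of elements of `A` in each
degree, with junk value `0` in the degrees where there are infinitely many. -/
noncomputable def gradedCard (A : Set M) (n : ℕ) : ℚ :=
  ((A ∩ deg ⁻¹' {n}).ncard : ℚ)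

variable {deg}

theorem gradedCard_inter_add_diff (hfin : ∀ n, (deg ⁻¹' {n}).Finite) (A B : Set M) :
    gradedCard deg (A ∩ B) + gradedCard deg (A \ B) = gradedCard deg A := by
  funext n
  have h := Set.ncard_inter_add_ncard_sdiff_eq_ncard (A ∩ deg ⁻¹' {n}) B
    ((hfin n).subset Set.inter_subset_right)
  rw [Set.inter_right_comm, ← Set.sdiff_inter_right_comm] at h
  simp only [Pi.add_apply, gradedCard]
  exact_mod_cast h

theorem gradedCard_union_add_inter (hfin : ∀ n, (deg ⁻¹' {n}).Finite) (A B : Set M) :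
    gradedCard deg (A ∪ B) + gradedCard deg (A ∩ B) = gradedCard deg A + gradedCard deg B := by
  rw [← gradedCard_inter_add_diff hfin (A ∪ B) B, ← gradedCard_inter_add_diff hfin A B,
    Set.union_inter_cancel_right, Set.union_sdiff_right]
  ring

theorem gradedCard_image {f : M → M} (hf : Function.Injective f) {w : ℕ}
    (hdeg : ∀ x, deg (f x) = deg x + w) (A : Set M) (n : ℕ) :
    gradedCard deg (f '' A) (n + w) = gradedCard deg A n := by
  have hpreimage : f ⁻¹' (deg ⁻¹' {n + w}) = deg ⁻¹' {n} := by
    ext x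
    simp [hdeg]
  rw [gradedCard, ← Set.image_inter_preimage, Set.ncard_image_of_injective _ hf, hpreimage,
    gradedCard]

theorem hasCyclotomicRecurrence_gradedCard_of_finite {A : Set M} (hA : A.Finite) :
    HasCyclotomicRecurrence (gradedCard deg A) := by
  refine .of_eventually_zero ?_
  obtain ⟨c, hc⟩ := (hA.image deg).bddAbove
  filter_upwards [Filter.eventually_gt_atTop c] with n hn
  have hempty : A ∩ deg ⁻¹' {n} = ∅ :=
    Set.eq_empty_of_forall_notMem fun x hx => (hc ⟨x, hx⟩).not_gt hn
  rw [gradedCard, hempty, Set.ncard_empty, Nat.cast_zero]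

end GradedCard

section HilbertSerre

open scoped Pointwise

variable {M : Type*} [AddCommMonoid M]

/-- `TranslateLE Q x y` says that `y` is reached from `x` by adding an element of `Q`. -/
def TranslateLE (Q : AddSubmonoid M) (x y : M) : Prop :=
  ∃ q ∈ Q, x + q = y

instance (Q : AddSubmonoid M) : IsPreorder M (TranslateLE Q) where
  refl x := ⟨0, Q.zero_mem, add_zero x⟩
  trans := by
    rintro x _ _ ⟨q, hq, rfl⟩ ⟨r, hr, rfl⟩
    exact ⟨q + r, Q.add_mem hq hr, (add_assoc x q r).symm⟩

/-- `A` is stable under translation by `Q`: the set analogue of a module over the monoid algebra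
of `Q`. -/
def IsTranslateStable (Q : AddSubmonoid M) (A : Set M) : Prop :=
  ∀ ⦃x⦄, x ∈ A → ∀ ⦃q⦄, q ∈ Q → x + q ∈ A

/-- The set analogue of a Noetherian module over the monoid algebra of `Q`. -/
structure IsNoetherianTranslateStable (Q : AddSubmonoid M) (A : Set M) : Prop where
  stable : IsTranslateStable Q A
  pwo : A.PartiallyWellOrderedOn (TranslateLE Q)

theorem isNoetherianTranslateStable_vadd {Q : AddSubmonoid M} (hQ : Q.FG) (a : M) :
    IsNoetherianTranslateStable Q (a +ᵥ (Q : Set M)) where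
  stable := by
    rintro _ ⟨q, hq, rfl⟩ r hr
    exact ⟨q + r, Q.add_mem hq hr, (add_assoc a q r).symm⟩
  pwo := by
    obtain ⟨d, f, rfl⟩ := AddSubmonoid.fg_iff_exists_fin_addMonoidHom.mp hQ
    have hrange : a +ᵥ (AddMonoidHom.mrange f : Set M) = (fun u => a + f u) '' Set.univ := by
      rw [AddMonoidHom.coe_mrange, ← Set.image_univ, ← Set.image_vadd, Set.image_image]
      rfl
    rw [hrange]
    refine (Set.isPWO_of_wellQuasiOrderedLE Set.univ).image_of_monotone_on ?_
    rintro u - v - huv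
    exact ⟨f (v - u), ⟨v - u, rfl⟩, by
      rw [add_assoc, ← map_add, add_tsub_cancel_of_le huv]⟩

theorem add_mem_of_mem_closure_of_ne_zero {G A B : Set M}
    (hB : IsTranslateStable (AddSubmonoid.closure G) B)
    (hAB : ∀ g ∈ G, ∀ x ∈ A, x + g ∈ B) {x : M} (hx : x ∈ A) {q : M}
    (hq : q ∈ AddSubmonoid.closure G) (hq0 : q ≠ 0) : x + q ∈ B := by
  induction hq using AddSubmonoid.closure_induction with
  | mem g hg => exact hAB g hg x hx
  | zero => exact absurd rfl hq0
  | add q r hq hr ihq ihr =>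
    rcases eq_or_ne q 0 with rfl | hq0'
    · rw [zero_add] at hq0 ⊢
      exact ihr hq0
    · rw [← add_assoc]
      exact hB (ihq hq0') hr

/-- `A \ B` is an antichain, as a nontrivial translation maps `A` into `B`. -/
theorem finite_diff_of_add_mem {G A B : Set M}
    (hA : A.PartiallyWellOrderedOn (TranslateLE (AddSubmonoid.closure G)))
    (hB : IsTranslateStable (AddSubmonoid.closure G) B)
    (hAB : ∀ g ∈ G, ∀ x ∈ A, x + g ∈ B) : (A \ B).Finite := by
  refine IsAntichain.finite_of_partiallyWellOrderedOn ?_ (hA.mono Set.sdiff_subset)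
  rintro x ⟨hxA, -⟩ y ⟨-, hyB⟩ hxy ⟨q, hq, rfl⟩
  refine hyB (add_mem_of_mem_closure_of_ne_zero hB hAB hxA hq ?_)
  rintro rfl
  exact hxy (add_zero x).symm

variable [IsCancelAdd M] {deg : M →+ ℕ}

/-- The exact sequence `0 → ker → A/B → A/B → coker → 0` of multiplication by `g`, in degrees `n`
and `n + deg g`. -/
theorem gradedCard_diff_add_degree_sub (hfin : ∀ n, (deg ⁻¹' {n}).Finite) {A B : Set M} {g : M}
    (hA : ∀ x ∈ A, x + g ∈ A) (hB : ∀ x ∈ B, x + g ∈ B) (n : ℕ) :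
    gradedCard deg (A \ B) (n + deg g) - gradedCard deg (A \ B) n =
      gradedCard deg (A \ (B ∪ (· + g) '' A)) (n + deg g) -
        gradedCard deg ({x ∈ A | x + g ∈ B} \ B) n := by
  have hcoker := congrFun (gradedCard_inter_add_diff hfin (A \ B) ((· + g) '' A)) (n + deg g)
  have hker := congrFun (gradedCard_inter_add_diff hfin (A \ B) {x | x + g ∈ B}) n
  have himage : (A \ B) ∩ (· + g) '' A = (· + g) '' ((A \ B) \ {x | x + g ∈ B}) := by
    ext y
    constructor
    · rintro ⟨⟨-, hyB⟩, x, hx, rfl⟩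
      exact ⟨x, ⟨⟨hx, fun hxB => hyB (hB x hxB)⟩, hyB⟩, rfl⟩
    · rintro ⟨x, ⟨⟨hx, -⟩, hxg⟩, rfl⟩
      exact ⟨⟨hA x hx, hxg⟩, x, hx, rfl⟩
  have hker_eq : (A \ B) ∩ {x | x + g ∈ B} = {x ∈ A | x + g ∈ B} \ B :=
    Set.sdiff_inter_right_comm ..
  rw [Pi.add_apply, Set.sdiff_sdiff, himage,
    gradedCard_image (add_left_injective g) (fun x => map_add deg x g)] at hcoker
  rw [Pi.add_apply, hker_eq] at hker
  linarith

/-- Induction on the number of generators that act nontrivially on `A/B`, as in the proof of the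
Hilbert–Serre theorem. -/
theorem hasCyclotomicRecurrence_gradedCard_diff (hfin : ∀ n, (deg ⁻¹' {n}).Finite)
    {G : Finset M} (hG : ∀ g ∈ G, 0 < deg g) {A B : Set M}
    (hA : IsNoetherianTranslateStable (AddSubmonoid.closure (G : Set M)) A)
    (hB : IsTranslateStable (AddSubmonoid.closure (G : Set M)) B) :
    HasCyclotomicRecurrence (gradedCard deg (A \ B)) := by
  classical
  have hmem {g : M} (hg : g ∈ G) : g ∈ AddSubmonoid.closure (G : Set M) :=
    AddSubmonoid.subset_closure hg
  refine Finset.induction_on' (motive := fun T => ∀ A B : Set M,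
    IsNoetherianTranslateStable (AddSubmonoid.closure (G : Set M)) A →
    IsTranslateStable (AddSubmonoid.closure (G : Set M)) B →
    (∀ g ∈ G, g ∉ T → ∀ x ∈ A, x + g ∈ B) →
    HasCyclotomicRecurrence (gradedCard deg (A \ B))) G ?_ ?_ A B hA hB
    fun g hg hg' => absurd hg hg'
  · intro A B hA hB hAB
    exact hasCyclotomicRecurrence_gradedCard_of_finite
      (finite_diff_of_add_mem hA.pwo hB fun g hg => hAB g hg (Finset.notMem_empty g))
  · intro g T hg _ _ ih A B hA hB hAB
    have hcoker : HasCyclotomicRecurrence (gradedCard deg (A \ (B ∪ (· + g) '' A))) := by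
      refine ih _ _ hA ?_ fun h hh hhT x hx => ?_
      · rintro _ (hx | ⟨x, hx, rfl⟩) q hq
        · exact .inl (hB hx hq)
        · exact .inr ⟨x + q, hA.stable hx hq, add_right_comm x q g⟩
      · obtain rfl | hne := eq_or_ne h g
        · exact .inr ⟨x, hx, rfl⟩
        · exact .inl (hAB h hh (by simp [hne, hhT]) x hx)
    have hker : HasCyclotomicRecurrence (gradedCard deg ({x ∈ A | x + g ∈ B} \ B)) := by
      refine ih _ _ ⟨?_, hA.pwo.mono (Set.sep_subset _ _)⟩ hB fun h hh hhT x hx => ?_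
      · rintro x ⟨hxA, hxB⟩ q hq
        exact ⟨hA.stable hxA hq, add_right_comm x q g ▸ hB hxB hq⟩
      · obtain rfl | hne := eq_or_ne h g
        · exact hx.2
        · exact hAB h hh (by simp [hne, hhT]) x hx.1
    refine .of_difference (hG g hg) ?_
    convert (hcoker.shift (deg g)).sub hker using 1
    exact funext (gradedCard_diff_add_degree_sub hfin (fun x hx => hA.stable hx (hmem hg))
      fun x hx => hB hx (hmem hg))

theorem IsNoetherianTranslateStable.hasCyclotomicRecurrence_gradedCard
    (hfin : ∀ n, (deg ⁻¹' {n}).Finite) (hdeg : ∀ x, deg x = 0 → x = 0)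
    {Q : AddSubmonoid M} (hQ : Q.FG) {A : Set M} (hA : IsNoetherianTranslateStable Q A) :
    HasCyclotomicRecurrence (gradedCard deg A) := by
  classical
  obtain ⟨G, rfl⟩ := hQ
  have hG : AddSubmonoid.closure ((G.erase 0 : Finset M) : Set M) = AddSubmonoid.closure G := by
    rw [Finset.coe_erase, AddSubmonoid.closure_sdiff_singleton_zero]
  rw [← Set.sdiff_empty (s := A)]
  refine hasCyclotomicRecurrence_gradedCard_diff hfin (G := G.erase 0) (fun g hg => ?_)
    (hG ▸ hA) fun x hx => absurd hx (Set.notMem_empty x)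
  exact Nat.pos_of_ne_zero fun h => Finset.ne_of_mem_erase hg (hdeg g h)

theorem fg_addSubmonoid_inf {Q R : AddSubmonoid M} (hQ : Q.FG) (hR : R.FG) : (Q ⊓ R).FG := by
  obtain ⟨d, f, rfl⟩ := AddSubmonoid.fg_iff_exists_fin_addMonoidHom.mp hQ
  obtain ⟨e, g, rfl⟩ := AddSubmonoid.fg_iff_exists_fin_addMonoidHom.mp hR
  let F : (Fin d → ℕ) × (Fin e → ℕ) →+ M := f.comp (AddMonoidHom.fst _ _)
  have hmap : AddMonoidHom.mrange f ⊓ AddMonoidHom.mrange g =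
      (F.eqLocusM (g.comp (AddMonoidHom.snd _ _))).map F := by
    ext y
    constructor
    · rintro ⟨⟨u, rfl⟩, v, hv⟩
      exact ⟨(u, v), hv.symm, rfl⟩
    · rintro ⟨⟨u, v⟩, huv, rfl⟩
      exact ⟨⟨u, rfl⟩, v, huv.symm⟩
  rw [hmap]
  exact (AddSubmonoid.fg_eqLocusM _ _).map F

theorem IsNoetherianTranslateStable.inter {Q R : AddSubmonoid M} {A B : Set M}
    (hA : IsNoetherianTranslateStable Q A) (hB : IsNoetherianTranslateStable R B) :
    IsNoetherianTranslateStable (Q ⊓ R) (A ∩ B) where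
  stable _ hx _ hq := ⟨hA.stable hx.1 hq.1, hB.stable hx.2 hq.2⟩
  pwo := by
    rw [Set.partiallyWellOrderedOn_iff_exists_lt]
    intro f hf
    obtain ⟨φ, hφ⟩ := hA.pwo.exists_monotone_subseq fun n => (hf n).1
    obtain ⟨m, n, hmn, r, hr, hrn⟩ := hB.pwo.exists_lt fun n => (hf (φ n)).2
    obtain ⟨q, hq, hqn⟩ := hφ m n hmn.le
    obtain rfl : q = r := add_left_cancel (hqn.trans hrn.symm)
    exact ⟨φ m, φ n, φ.strictMono hmn, q, ⟨hq, hr⟩, hqn⟩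

/-- Inclusion–exclusion, in the recursive form
`|A ∪ ⋃ᵢ Bᵢ| = |A| + |⋃ᵢ Bᵢ| - |⋃ᵢ A ∩ Bᵢ|`. -/
theorem hasCyclotomicRecurrence_gradedCard_biUnion (hfin : ∀ n, (deg ⁻¹' {n}).Finite)
    (hdeg : ∀ x, deg x = 0 → x = 0) {ι : Type*} (I : Finset ι) (A : ι → Set M)
    (hA : ∀ i ∈ I, ∃ Q : AddSubmonoid M, Q.FG ∧ IsNoetherianTranslateStable Q (A i)) :
    HasCyclotomicRecurrence (gradedCard deg (⋃ i ∈ I, A i)) := by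
  classical
  induction I using Finset.induction_on generalizing A with
  | empty =>
    refine hasCyclotomicRecurrence_gradedCard_of_finite ?_
    simp
  | insert i I _ ih =>
    rw [Finset.forall_mem_insert] at hA
    obtain ⟨⟨Q, hQ, hAi⟩, hAI⟩ := hA
    have hinter : HasCyclotomicRecurrence (gradedCard deg (A i ∩ ⋃ j ∈ I, A j)) := by
      rw [Set.inter_iUnion₂]
      refine ih _ fun j hj => ?_
      obtain ⟨R, hR, hAj⟩ := hAI j hj
      exact ⟨Q ⊓ R, fg_addSubmonoid_inf hQ hR, hAi.inter hAj⟩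
    rw [Finset.set_biUnion_insert, eq_sub_of_add_eq (gradedCard_union_add_inter hfin _ _)]
    exact ((hAi.hasCyclotomicRecurrence_gradedCard hfin hdeg hQ).add (ih _ hAI)).sub hinter

theorem hasCyclotomicRecurrence_gradedCard_of_isSemilinearSet (hfin : ∀ n, (deg ⁻¹' {n}).Finite)
    (hdeg : ∀ x, deg x = 0 → x = 0) {A : Set M} (hA : IsSemilinearSet A) :
    HasCyclotomicRecurrence (gradedCard deg A) := by
  obtain ⟨S, hS, hlinear, rfl⟩ := hA
  lift S to Finset (Set M) using hS
  rw [Set.sUnion_eq_biUnion]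
  refine hasCyclotomicRecurrence_gradedCard_biUnion hfin hdeg S id fun A hA => ?_
  obtain ⟨a, Q, hQ, rfl⟩ := isLinearSet_iff_exists_fg_eq_vadd.mp (hlinear A hA)
  exact ⟨Q, hQ, isNoetherianTranslateStable_vadd hQ a⟩

end HilbertSerre

section SemilinearTransversal

open scoped Pointwise

variable {M : Type*} [AddCommMonoid M] [AddMonoid.FG M]

theorem isSemilinearSet_of_isLowerSet [PartialOrder M] [CanonicallyOrderedAdd M]
    [WellQuasiOrderedLE M] {A : Set M} (hA : IsLowerSet A) : IsSemilinearSet A := by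
  have hcompl : Aᶜ = ⋃ a ∈ {a | Minimal (· ∈ Aᶜ) a}, a +ᵥ (Set.univ : Set M) := by
    ext x
    simp only [Set.mem_iUnion]
    constructor
    · intro hx
      obtain ⟨a, hax, ha⟩ := exists_minimal_le_of_wellFoundedLT (· ∈ Aᶜ) x hx
      obtain ⟨u, rfl⟩ := exists_add_of_le hax
      exact ⟨a, ha, u, trivial, rfl⟩
    · rintro ⟨a, ha, u, -, rfl⟩ hx
      exact ha.prop (hA (le_self_add : a ≤ a + u) hx)
  rw [← compl_compl A, hcompl]
  refine (IsSemilinearSet.biUnion ?_ fun a _ => IsSemilinearSet.univ.vadd a).compl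
  exact WellQuasiOrderedLE.finite_of_isAntichain (setOfPred_minimal_antichain _)

theorem isSemilinearSet_setOf_lt (f g : M →+ ℕ) : IsSemilinearSet {x | f x < g x} := by
  have hle : {x | f x < g x} = AddMonoidHom.fst M ℕ ''
      {z | 1 + (f.comp (.fst M ℕ) + .snd M ℕ) z = 0 + g.comp (.fst M ℕ) z} := by
    ext x
    constructor
    · intro hx
      obtain ⟨d, hd⟩ := Nat.exists_eq_add_of_lt hx
      exact ⟨(x, d), by simp [hd]; ring, rfl⟩
    · rintro ⟨⟨x, d⟩, hx, rfl⟩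
      simp only [Set.mem_ofPred_eq, AddMonoidHom.add_apply, AddMonoidHom.comp_apply,
        AddMonoidHom.coe_fst, AddMonoidHom.coe_snd] at hx ⊢
      omega
  rw [hle]
  exact (isSemilinearSet_setOfPred_eq 1 0 _ _).image _

theorem isSemilinearSet_setOf_toLex_lt {ι : Type*} [LinearOrder ι] [Finite ι] :
    IsSemilinearSet {z : (ι → ℕ) × (ι → ℕ) | toLex z.1 < toLex z.2} := by
  have hlex : {z : (ι → ℕ) × (ι → ℕ) | toLex z.1 < toLex z.2} =
      ⋃ i, (⋂ j ∈ Set.Iio i, {z | z.1 j = z.2 j}) ∩ {z | z.1 i < z.2 i} := by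
    ext z
    simp only [Set.mem_iUnion, Set.mem_inter_iff, Set.mem_iInter]
    rfl
  let coord (i : ι) : (ι → ℕ) →+ ℕ := Pi.evalAddMonoidHom (fun _ => ℕ) i
  rw [hlex]
  refine .iUnion fun i => .inter (.biInter (Set.toFinite _) fun j _ => ?_) ?_
  · simpa [coord] using isSemilinearSet_setOfPred_eq (0 : ℕ) 0
      ((coord j).comp (.fst (ι → ℕ) (ι → ℕ))) ((coord j).comp (.snd (ι → ℕ) (ι → ℕ)))
  · exact isSemilinearSet_setOf_lt ((coord i).comp (.fst (ι → ℕ) (ι → ℕ)))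
      ((coord i).comp (.snd (ι → ℕ) (ι → ℕ)))

theorem isSemilinearSet_setOf_forall_not {r lt : M → M → Prop}
    (hr : IsSemilinearSet {z : M × M | r z.1 z.2})
    (hlt : IsSemilinearSet {z : M × M | lt z.1 z.2}) :
    IsSemilinearSet {x | r x x ∧ ∀ y, r x y → ¬ lt y x} := by
  have hdiag := hr.preimage ((AddMonoidHom.id M).prod (.id M))
  have hsmaller := (hr.inter (hlt.preimage ((AddMonoidHom.snd M M).prod (.fst M M)))).image
    (AddMonoidHom.fst M M)
  convert hdiag.sdiff hsmaller using 1
  ext x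
  simp

theorem existsUnique_minimal_rel {α : Type*} [LinearOrder α] [WellFoundedLT α]
    {r : α → α → Prop} [Std.Symm r] [IsTrans α r] {x : α} (hx : r x x) :
    ∃! y, (r y y ∧ ∀ z, r y z → ¬ z < y) ∧ r x y := by
  obtain ⟨y, hxy, hy⟩ := wellFounded_lt.has_min {y | r x y} ⟨x, hx⟩
  refine ⟨y, ⟨⟨_root_.trans (symm hxy) hxy, fun z hyz => hy z (_root_.trans hxy hyz)⟩, hxy⟩, ?_⟩
  rintro z ⟨⟨-, hz⟩, hxz⟩
  exact le_antisymm (not_lt.mp (hz y (_root_.trans (symm hxz) hxy))) (not_lt.mp (hy z hxz))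

/-- A semilinear partial equivalence relation has a semilinear set of representatives: take the
lexicographically smallest element of each class. -/
theorem exists_isSemilinearSet_transversal {ι : Type*} [Finite ι]
    {r : (ι → ℕ) → (ι → ℕ) → Prop} [Std.Symm r] [IsTrans (ι → ℕ) r]
    (hr : IsSemilinearSet {z : (ι → ℕ) × (ι → ℕ) | r z.1 z.2}) :
    ∃ T : Set (ι → ℕ), IsSemilinearSet T ∧ (∀ x ∈ T, r x x) ∧
      ∀ x, r x x → ∃! y, y ∈ T ∧ r x y := by
  obtain ⟨_, ⟨e⟩⟩ := Finite.exists_equiv_fin ι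
  let _ : LinearOrder ι := LinearOrder.lift' e e.injective
  exact ⟨_, isSemilinearSet_setOf_forall_not hr isSemilinearSet_setOf_toLex_lt, fun x hx => hx.1,
    fun x hx => @existsUnique_minimal_rel (Lex (ι → ℕ)) _ _ r ‹_› ‹_› x hx⟩

theorem card_quot_eq_ncard_transversal {α β : Type*} {r : β → β → Prop} [Std.Symm r] [IsTrans β r]
    {c : α → β} (hrefl : ∀ a, r (c a) (c a)) {T : Set β}
    (hT : ∀ x, r x x → ∃! y, y ∈ T ∧ r x y) :
    Nat.card (Quot fun a b => r (c a) (c b)) = (T ∩ {y | ∃ a, r (c a) y}).ncard := by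
  choose rep hrep hunique using fun a => hT (c a) (hrefl a)
  have hker : (fun a b => r (c a) (c b)) = Setoid.ker rep := by
    ext a b
    constructor
    · intro hab
      exact hunique b _ ⟨(hrep a).1, _root_.trans (symm hab) (hrep a).2⟩
    · intro hab
      exact _root_.trans (hrep a).2 (hab ▸ symm (hrep b).2)
  have hrange : Set.range rep = T ∩ {y | ∃ a, r (c a) y} := by
    ext y
    constructor
    · rintro ⟨a, rfl⟩
      exact ⟨(hrep a).1, a, (hrep a).2⟩
    · rintro ⟨hy, a, hay⟩
      exact ⟨a, (hunique a y ⟨hy, hay⟩).symm⟩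
  rw [hker, ← hrange, ← Nat.card_coe_set_eq]
  exact Nat.card_congr (Setoid.quotientKerEquivRange rep)

end SemilinearTransversal

section FiberCard

variable {α β X Y : Type*}

/-- The size of a multiset given by its multiplicities. -/
def totalCount [Fintype X] : (X → ℕ) →+ ℕ where
  toFun v := ∑ x, v x
  map_zero' := Finset.sum_const_zero
  map_add' _ _ := Finset.sum_add_distrib

theorem finite_totalCount_preimage [Fintype X] (n : ℕ) :
    ((totalCount : (X → ℕ) →+ ℕ) ⁻¹' {n}).Finite := by
  classical
  refine (Set.finite_Iic fun _ => n).subset fun v hv x => ?_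
  exact (Finset.single_le_sum (fun _ _ => Nat.zero_le _) (Finset.mem_univ x)).trans_eq hv

theorem eq_zero_of_totalCount_eq_zero [Fintype X] {v : X → ℕ}
    (hv : totalCount v = 0) : v = 0 :=
  funext fun x => Finset.sum_eq_zero_iff.mp hv x (Finset.mem_univ x)

variable [Fintype α] [Fintype β] [DecidableEq X] [DecidableEq Y]

/-- The sizes of the fibres of `g`, i.e. the multiplicities of the letters of `X` in the word
`g`. -/
def fiberCard (g : α → X) (x : X) : ℕ :=
  Fintype.card {j // g j = x}

theorem fiberCard_comp_equiv (g : α → X) (e : β ≃ α) : fiberCard (g ∘ e) = fiberCard g :=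
  funext fun _ => Fintype.card_congr (e.subtypeEquiv fun _ => Iff.rfl)

theorem fiberCard_pos_iff {g : α → X} {x : X} : 0 < fiberCard g x ↔ x ∈ Set.range g := by
  rw [fiberCard, Fintype.card_pos_iff, nonempty_subtype]
  rfl

theorem fiberCard_sigma_fst [Fintype X] (v : X → ℕ) :
    fiberCard (Sigma.fst : (Σ x, Fin (v x)) → X) = v :=
  funext fun x => (Fintype.card_congr (Equiv.sigmaSubtype x)).trans (Fintype.card_fin _)

theorem exists_perm_comp_eq {g h : α → X} (hgh : fiberCard g = fiberCard h) :
    ∃ τ : Equiv.Perm α, g ∘ τ = h := by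
  have e (x : X) : {j // h j = x} ≃ {j // g j = x} :=
    Fintype.equivOfCardEq (congrFun hgh x).symm
  exact ⟨Equiv.ofFiberEquiv e, funext (Equiv.ofFiberEquiv_map e)⟩

theorem exists_injective_fiberCard_comp_eq [Finite X] {g : α → X} {v : X → ℕ}
    (hv : v ≤ fiberCard g) :
    ∃ m, ∃ π : Fin m → α, Function.Injective π ∧ fiberCard (g ∘ π) = v := by
  have := Fintype.ofFinite X
  have e (x : X) : Nonempty (Fin (v x) ↪ {j // g j = x}) :=
    Function.Embedding.nonempty_of_card_le ((Fintype.card_fin _).trans_le (hv x))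
  let f (t : Σ x, Fin (v x)) : α := (e t.1).some t.2
  have hgf : g ∘ f = Sigma.fst := funext fun t => ((e t.1).some t.2).2
  have hf : Function.Injective f := by
    rintro ⟨x, i⟩ ⟨y, j⟩ h
    obtain rfl : x = y :=
      (congrFun hgf ⟨x, i⟩).symm.trans ((congrArg g h).trans (congrFun hgf ⟨y, j⟩))
    exact congrArg (Sigma.mk x) ((e x).some.injective (Subtype.ext h))
  let index := (Fintype.equivFin (Σ x, Fin (v x))).symm
  refine ⟨_, f ∘ index, hf.comp index.injective, ?_⟩
  rw [← Function.comp_assoc, hgf, fiberCard_comp_equiv, fiberCard_sigma_fst]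

theorem totalCount_fiberCard [Fintype X] (g : α → X) :
    totalCount (fiberCard g) = Fintype.card α :=
  (Fintype.card_sigma ..).symm.trans (Fintype.card_congr (Equiv.sigmaFiberEquiv g))

/-- The pushforward of a vector of multiplicities along a map of alphabets; along the projections
of a product it computes the row and column sums of a contingency table. -/
def pushforwardCount [Fintype X] (f : X → Y) : (X → ℕ) →+ (Y → ℕ) where
  toFun v y := ∑ x with f x = y, v x
  map_zero' := funext fun _ => Finset.sum_const_zero
  map_add' _ _ := funext fun _ => Finset.sum_add_distrib

theorem pushforwardCount_fiberCard [Fintype X] (f : X → Y) (g : α → X) :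
    pushforwardCount f (fiberCard g) = fiberCard (f ∘ g) := by
  funext y
  simp only [pushforwardCount, AddMonoidHom.coe_mk, ZeroHom.coe_mk, fiberCard,
    Fintype.card_subtype, Finset.sum_card_fiberwise_eq_card_filter, Finset.mem_filter_univ,
    Function.comp_apply]

end FiberCard

namespace MPair

variable {s k m n : ℕ}

open Classical in
/-- The word `[n] → [s] ⊔ [k]` encoding a pair `(σ, α)`: it extends `α` by `σ i ↦ i`. -/
noncomputable def label (p : MPair s k n) (j : Fin n) : Fin s ⊕ Fin k :=
  if h : j ∈ Set.range p.σ then .inl h.choose else .inr (p.α ⟨j, h⟩)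

theorem label_eq_inl_iff {p : MPair s k n} {j : Fin n} {i : Fin s} :
    p.label j = .inl i ↔ p.σ i = j := by
  unfold label
  split_ifs with h
  · rw [Sum.inl.injEq, ← p.inj.eq_iff, h.choose_spec, eq_comm]
  · simpa only [reduceCtorEq, false_iff] using fun hi => h ⟨i, hi⟩

theorem label_eq_inr_iff {p : MPair s k n} {j : Fin n} {l : Fin k} :
    p.label j = .inr l ↔ ∃ h : j ∉ Set.range p.σ, p.α ⟨j, h⟩ = l := by
  unfold label
  split_ifs with h
  · simp [h]
  · simp only [Sum.inr.injEq, h, not_false_eq_true, exists_true_left]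

theorem label_injective : Function.Injective (label : MPair s k n → Fin n → Fin s ⊕ Fin k) := by
  intro p q hpq
  have hσ : p.σ = q.σ := funext fun i =>
    (label_eq_inl_iff.mp (hpq ▸ label_eq_inl_iff.mpr rfl)).symm
  obtain ⟨σ, inj, α⟩ := p
  obtain ⟨_, _, α'⟩ := q
  obtain rfl : σ = _ := hσ
  have hα : α = α' := funext fun j => by
    obtain ⟨_, h⟩ := label_eq_inr_iff.mp (hpq ▸ label_eq_inr_iff.mpr ⟨j.2, rfl⟩)
    exact h.symm
  rw [hα]

theorem label_restrict {π : Fin m → Fin n} (hπ : Function.Injective π) (p : MPair s k n)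
    (hsub : Set.range p.σ ⊆ Set.range π) : (p.restrict π hπ hsub).label = p.label ∘ π := by
  have hσ (i : Fin s) : π ((p.restrict π hπ hsub).σ i) = p.σ i :=
    (hsub (Set.mem_range_self i)).choose_spec
  funext j
  rcases h : p.label (π j) with i | l
  · rw [label_eq_inl_iff] at h
    rw [Function.comp_apply, label_eq_inl_iff.mpr h, label_eq_inl_iff]
    exact hπ ((hσ i).trans h)
  · obtain ⟨hj, hl⟩ := label_eq_inr_iff.mp h
    rw [Function.comp_apply, h, label_eq_inr_iff]
    exact ⟨fun ⟨i, hi⟩ => hj ⟨i, by rw [← hσ, hi]⟩, hl⟩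

theorem fiberCard_label_inl (p : MPair s k n) (i : Fin s) : fiberCard p.label (.inl i) = 1 := by
  simp only [fiberCard, label_eq_inl_iff, Fintype.card_unique]

theorem range_subset_range_of_fiberCard_pos {p : MPair s k n} {π : Fin m → Fin n}
    (h : ∀ i, 0 < fiberCard (p.label ∘ π) (.inl i)) : Set.range p.σ ⊆ Set.range π := by
  rintro _ ⟨i, rfl⟩
  obtain ⟨j, hj⟩ := fiberCard_pos_iff.mp (h i)
  exact ⟨j, (label_eq_inl_iff.mp hj).symm⟩

end MPair

section ModelFunctor

variable {s k m n : ℕ} {M : Set (Fin k → ℕ)}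
  (hM : ∀ β ∈ M, ∀ β' : Fin k → ℕ, (∀ l, β' l ≤ β l) → β' ∈ M)
  {sim : ∀ n : ℕ, FPair s k M n → FPair s k M n → Prop}

/-- The action of `τ⁻¹` on `F_n`. -/
noncomputable def FPair.permute (τ : Equiv.Perm (Fin n)) (p : FPair s k M n) : FPair s k M n :=
  p.restrict hM τ τ.injective (by rw [Equiv.range_eq_univ]; exact Set.subset_univ _)

theorem FPair.label_permute (τ : Equiv.Perm (Fin n)) (p : FPair s k M n) :
    (p.permute hM τ).1.label = p.1.label ∘ τ :=
  MPair.label_restrict τ.injective p.1 (by rw [Equiv.range_eq_univ]; exact Set.subset_univ _)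

theorem FPair.fiberCard_label_permute (τ : Equiv.Perm (Fin n)) (p : FPair s k M n) :
    fiberCard (p.permute hM τ).1.label = fiberCard p.1.label := by
  rw [p.label_permute hM, fiberCard_comp_equiv]

theorem FPair.exists_permute_eq {p q : FPair s k M n}
    (h : fiberCard p.1.label = fiberCard q.1.label) :
    ∃ τ : Equiv.Perm (Fin n), p.permute hM τ = q := by
  obtain ⟨τ, hτ⟩ := exists_perm_comp_eq h
  exact ⟨τ, Subtype.ext (MPair.label_injective ((p.label_permute hM τ).trans hτ))⟩

theorem FPair.totalCount_label (p : FPair s k M n) : totalCount (fiberCard p.1.label) = n :=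
  (totalCount_fiberCard _).trans (Fintype.card_fin n)

variable (sim) in
/-- Axiom (1) of a model functor. -/
def IsRestrictionStable : Prop :=
  ∀ (m n : ℕ) (π : Fin m → Fin n) (hπ : Function.Injective π) (p p' : FPair s k M n)
    (hp : Set.range p.1.σ ⊆ Set.range π) (hp' : Set.range p'.1.σ ⊆ Set.range π),
    sim n p p' → sim m (FPair.restrict hM π hπ p hp) (FPair.restrict hM π hπ p' hp')

variable (sim) in
/-- The contingency tables of the pairs of labellings of equivalent elements. -/
def jointCounts : Set ((Fin s ⊕ Fin k) × (Fin s ⊕ Fin k) → ℕ) :=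
  {v | ∃ n p q, sim n p q ∧ fiberCard (fun j => (p.1.label j, q.1.label j)) = v}

variable (sim) in
/-- The relation that `sim` induces on the multiplicity vectors of labellings, that is, on the
`Sym([n])`-orbits in the sets `F_n`. -/
def CountRel (v w : Fin s ⊕ Fin k → ℕ) : Prop :=
  ∃ n p q, sim n p q ∧ fiberCard p.1.label = v ∧ fiberCard q.1.label = w

variable {hM}

theorem jointCounts_eq (hsim : IsRestrictionStable hM sim) :
    jointCounts sim = ↑(lowerClosure (jointCounts sim)) ∩
      ⋂ i : Fin s, {v | pushforwardCount Prod.fst v (.inl i) = 1} ∩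
        {v | pushforwardCount Prod.snd v (.inl i) = 1} := by
  refine Set.Subset.antisymm (Set.subset_inter subset_lowerClosure ?_) ?_
  · rintro _ ⟨n, p, q, -, rfl⟩
    simp only [Set.mem_iInter, Set.mem_inter_iff, Set.mem_ofPred_eq, pushforwardCount_fiberCard]
    exact fun i => ⟨p.1.fiberCard_label_inl i, q.1.fiberCard_label_inl i⟩
  · rintro v ⟨⟨_, ⟨n, p, q, hpq, rfl⟩, hv⟩, hmarginal⟩
    obtain ⟨m, π, hπ, rfl⟩ := exists_injective_fiberCard_comp_eq hv
    simp only [Set.mem_iInter, Set.mem_inter_iff, Set.mem_ofPred_eq,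
      pushforwardCount_fiberCard] at hmarginal
    have hp : Set.range p.1.σ ⊆ Set.range π :=
      MPair.range_subset_range_of_fiberCard_pos fun i => (hmarginal i).1.symm ▸ one_pos
    have hq : Set.range q.1.σ ⊆ Set.range π :=
      MPair.range_subset_range_of_fiberCard_pos fun i => (hmarginal i).2.symm ▸ one_pos
    refine ⟨m, _, _, hsim m n π hπ p q hp hq hpq, ?_⟩
    simp only [FPair.restrict, MPair.label_restrict]
    rfl

theorem isSemilinearSet_jointCounts (hsim : IsRestrictionStable hM sim) :
    IsSemilinearSet (jointCounts sim) := by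
  have hmarginal {X Y : Type} [Fintype X] [DecidableEq Y] (f : X → Y) (y : Y) :
      IsSemilinearSet {v | pushforwardCount f v y = 1} :=
    (IsSemilinearSet.singleton 1).preimage
      ((Pi.evalAddMonoidHom (fun _ => ℕ) y).comp (pushforwardCount f))
  rw [jointCounts_eq hsim]
  exact (isSemilinearSet_of_isLowerSet (lowerClosure _).lower).inter
    (.iInter fun _ => (hmarginal _ _).inter (hmarginal _ _))

theorem isSemilinearSet_countRel (hsim : IsRestrictionStable hM sim) :
    IsSemilinearSet {z : (Fin s ⊕ Fin k → ℕ) × (Fin s ⊕ Fin k → ℕ) | CountRel sim z.1 z.2} := by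
  convert (isSemilinearSet_jointCounts hsim).image
    ((pushforwardCount Prod.fst).prod (pushforwardCount Prod.snd)) using 1
  ext ⟨v, w⟩
  constructor
  · rintro ⟨n, p, q, hpq, rfl, rfl⟩
    exact ⟨_, ⟨n, p, q, hpq, rfl⟩,
      Prod.ext (pushforwardCount_fiberCard _ _) (pushforwardCount_fiberCard _ _)⟩
  · rintro ⟨_, ⟨n, p, q, hpq, rfl⟩, hvw⟩
    obtain ⟨hv, hw⟩ := Prod.ext_iff.mp hvw
    exact ⟨n, p, q, hpq, (pushforwardCount_fiberCard _ _).symm.trans hv,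
      (pushforwardCount_fiberCard _ _).symm.trans hw⟩

theorem CountRel.exists_sim (hsim : IsRestrictionStable hM sim) {p : FPair s k M n}
    {v : Fin s ⊕ Fin k → ℕ} (h : CountRel sim (fiberCard p.1.label) v) :
    ∃ q, sim n p q ∧ fiberCard q.1.label = v := by
  obtain ⟨n', p', q, hpq, hp, rfl⟩ := h
  obtain rfl : n' = n := by rw [← p'.totalCount_label, hp, p.totalCount_label]
  obtain ⟨τ, rfl⟩ := FPair.exists_permute_eq hM hp
  exact ⟨q.permute hM τ, hsim _ _ τ τ.injective p' q _ _ hpq, q.fiberCard_label_permute hM τ⟩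

theorem exists_permute_sim_iff_countRel (hsim : IsRestrictionStable hM sim)
    (p q : FPair s k M n) : (∃ τ, sim n (p.permute hM τ) q) ↔
      CountRel sim (fiberCard p.1.label) (fiberCard q.1.label) := by
  constructor
  · rintro ⟨τ, h⟩
    exact ⟨n, _, q, h, p.fiberCard_label_permute hM τ, rfl⟩
  · intro h
    obtain ⟨q', hpq', hq'⟩ := h.exists_sim hsim
    obtain ⟨τ, rfl⟩ := FPair.exists_permute_eq hM hq'
    exact ⟨τ, hsim n n τ τ.injective p q' _ _ hpq'⟩

theorem symm_countRel (hequiv : ∀ n, Equivalence (sim n)) : Std.Symm (CountRel sim) where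
  symm := by
    rintro _ _ ⟨n, p, q, hpq, rfl, rfl⟩
    exact ⟨n, q, p, (hequiv n).symm hpq, rfl, rfl⟩

theorem isTrans_countRel (hequiv : ∀ n, Equivalence (sim n)) (hsim : IsRestrictionStable hM sim) :
    IsTrans _ (CountRel sim) where
  trans := by
    rintro _ _ _ ⟨n, p, q, hpq, rfl, rfl⟩ hqw
    obtain ⟨t, hqt, rfl⟩ := hqw.exists_sim hsim
    exact ⟨n, p, t, (hequiv n).trans hpq hqt, rfl, rfl⟩

theorem card_orbits_eq_ncard_transversal (hequiv : ∀ n, Equivalence (sim n))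
    (hsim : IsRestrictionStable hM sim) {T : Set (Fin s ⊕ Fin k → ℕ)}
    (hrefl : ∀ v ∈ T, CountRel sim v v)
    (hT : ∀ v, CountRel sim v v → ∃! w, w ∈ T ∧ CountRel sim v w) (n : ℕ) :
    Nat.card (Quot fun p q : FPair s k M n => ∃ τ, sim n (p.permute hM τ) q) =
      (T ∩ totalCount ⁻¹' {n}).ncard := by
  have := symm_countRel hequiv
  have := isTrans_countRel hequiv hsim
  have hdegree : T ∩ totalCount ⁻¹' {n} =
      T ∩ {v | ∃ p : FPair s k M n, CountRel sim (fiberCard p.1.label) v} := by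
    ext v
    refine and_congr_right fun hv => ⟨fun hvn => ?_, ?_⟩
    · obtain ⟨n', p, _, -, rfl, -⟩ := hrefl v hv
      obtain rfl : n' = n := p.totalCount_label.symm.trans hvn
      exact ⟨p, hrefl _ hv⟩
    · rintro ⟨p, hp⟩
      obtain ⟨q, -, rfl⟩ := hp.exists_sim hsim
      exact q.totalCount_label
  simp only [exists_permute_sim_iff_countRel hsim]
  rw [hdegree]
  exact card_quot_eq_ncard_transversal (fun p => ⟨n, p, p, (hequiv n).refl p, rfl, rfl⟩) hT

end ModelFunctor

theorem quasipolynomial_orbit_count_of_model_functor_general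
    (s k : ℕ) (M : Set (Fin k → ℕ))
    (hM : ∀ β ∈ M, ∀ β' : Fin k → ℕ, (∀ l, β' l ≤ β l) → β' ∈ M)
    (sim : ∀ n : ℕ, FPair s k M n → FPair s k M n → Prop)
    (hequiv : ∀ n, Equivalence (sim n))
    (ax1 : ∀ (m n : ℕ) (π : Fin m → Fin n) (hπ : Function.Injective π)
      (p p' : FPair s k M n) (hp : Set.range p.1.σ ⊆ Set.range π)
      (hp' : Set.range p'.1.σ ⊆ Set.range π),
      sim n p p' → sim m (FPair.restrict hM π hπ p hp) (FPair.restrict hM π hπ p' hp')) :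
    QuasiPolynomialCount (fun n =>
      Nat.card (Quot (fun (p q : FPair s k M n) =>
        ∃ τ : Equiv.Perm (Fin n),
          sim n (FPair.restrict hM (⇑τ) τ.injective p
            (by rw [Equiv.range_eq_univ]; exact Set.subset_univ _)) q))) := by
  have := symm_countRel hequiv
  have := isTrans_countRel hequiv ax1
  obtain ⟨T, hT, hrefl, hunique⟩ :=
    exists_isSemilinearSet_transversal (isSemilinearSet_countRel ax1)
  have hrecurrence : HasCyclotomicRecurrence (gradedCard totalCount T) :=
    hasCyclotomicRecurrence_gradedCard_of_isSemilinearSet finite_totalCount_preimage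
      (fun _ => eq_zero_of_totalCount_eq_zero) hT
  obtain ⟨f, hf, n₀, hTf⟩ := hrecurrence.exists_isQuasiPolynomial
  refine ⟨f, hf, n₀, fun n hn => ?_⟩
  rw [← hTf n hn, gradedCard, ← card_orbits_eq_ncard_transversal hequiv ax1 hrefl hunique n]
  rfl

/-- The number of `Sym([n])`-orbits on `F_n/∼_n`, for a model functor
`(s, k, M, (∼_n))`, is a quasipolynomial in `n` for all `n ≫ 0`.  (The orbit of a class
`[p]` under `τ` is represented below via the restriction of `p` along the bijection `τ`,
which realises the action `τ⁻¹·(σ,α) = (τ⁻¹∘σ, α∘τ)`.) -/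
theorem quasipolynomial_orbit_count_of_model_functor
    (s k : ℕ) (M : Set (Fin k → ℕ))
    (hM : ∀ β ∈ M, ∀ β' : Fin k → ℕ, (∀ l, β' l ≤ β l) → β' ∈ M)
    (sim : ∀ n : ℕ, FPair s k M n → FPair s k M n → Prop)
    (hequiv : ∀ n, Equivalence (sim n))
    (ax1 : ∀ (m n : ℕ) (π : Fin m → Fin n) (hπ : Function.Injective π)
      (p p' : FPair s k M n) (hp : Set.range p.1.σ ⊆ Set.range π)
      (hp' : Set.range p'.1.σ ⊆ Set.range π),
      sim n p p' → sim m (FPair.restrict hM π hπ p hp) (FPair.restrict hM π hπ p' hp'))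
    (ax2 : ∀ (m n : ℕ) (π : Fin m → Fin n) (hπ : Function.Injective π)
      (p : FPair s k M n) (hp : Set.range p.1.σ ⊆ Set.range π)
      (q : FPair s k M m), sim m (FPair.restrict hM π hπ p hp) q →
      ∃ (p' : FPair s k M n) (hp' : Set.range p'.1.σ ⊆ Set.range π),
        sim n p' p ∧ FPair.restrict hM π hπ p' hp' = q)
    (ax3 : ∀ (n : ℕ) (p p' : FPair s k M n), sim n p p' →
      ∀ (i j : Fin n) (hi : i ∉ Set.range p.1.σ) (hi' : i ∉ Set.range p'.1.σ)
        (hj : j ∉ Set.range p.1.σ) (hj' : j ∉ Set.range p'.1.σ),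
        (p.1.α ⟨i, hi⟩ = p.1.α ⟨j, hj⟩ ↔ p'.1.α ⟨i, hi'⟩ = p'.1.α ⟨j, hj'⟩)) :
    QuasiPolynomialCount (fun n =>
      Nat.card (Quot (fun (p q : FPair s k M n) =>
        ∃ τ : Equiv.Perm (Fin n),
          sim n (FPair.restrict hM (⇑τ) τ.injective p
            (by rw [Equiv.range_eq_univ]; exact Set.subset_univ _)) q))) :=
  quasipolynomial_orbit_count_of_model_functor_general s k M hM sim hequiv ax1
end
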